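/- arXiv:1005.2553 — 8 statements merged into one kernel-verified Lean document; each statement's English description precedes it below -/
import Mathlib

section
/- Let w be a word over the alphabet {x_0, x_1, x_2, …}. Then w has a conjugate (cyclic rotation) lying in ℬ if and only if ω(w) = 1. -/
/-- The weight of a word: the sum of `(a - 1)` over its letters, as an integer. -/
def wt (w : List ℕ) : ℤ := (w.map (fun a => (a : ℤ) - 1)).sum

/-- The set `ℬ` of words of weight 1 all of whose nonempty prefixes have positive weight. -/
def Bset : Set (List ℕ) :=
  {w | wt w = 1 ∧ ∀ j, 0 < j → j ≤ w.length → 0 < wt (w.take j)}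

theorem wt_eq (w : List ℕ) : wt w = (w.map (fun a : ℕ => (a : ℤ) - 1)).sum := by
  unfold wt
  congr 1
  induction w with
  | nil => rfl
  | cons a t ih => simpa using ih

theorem wt_append (u v : List ℕ) : wt (u ++ v) = wt u + wt v := by
  simp [wt]

/-- A word has a conjugate (cyclic rotation) in `ℬ` iff its weight is 1. -/
theorem conjugate_mem_B_iff (w : List ℕ) :
    (∃ i, w.rotate i ∈ Bset) ↔ wt w = 1 := by
  have hrot : ∀ i, wt (w.rotate i) = wt w := fun i =>
    by rw [wt_eq, wt_eq]; exact ((List.rotate_perm w i).map (fun a : ℕ => (a : ℤ) - 1)).sum_eq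
  constructor
  · rintro ⟨i, h, -⟩
    rw [← hrot i, h]
  · intro hw
    obtain ⟨i, hi, hmin⟩ := Finset.exists_min_image (Finset.range (w.length + 1))
      (fun j => ((w.length : ℤ) + 1) * wt (w.take j) - j) ⟨0, by simp⟩
    have hi' : i ≤ w.length := by simpa [Nat.lt_succ_iff] using hi
    refine ⟨i, by rw [hrot, hw], ?_⟩
    intro j hj hjl
    rw [List.length_rotate] at hjl
    rw [List.rotate_eq_drop_append_take hi', List.take_append, wt_append]
    by_cases hc : i + j ≤ w.length
    · have h1 := hmin (i + j) (by simp; omega)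
      have h0 : j - (w.drop i).length = 0 := by simp; omega
      rw [h0]
      rw [List.take_add, wt_append] at h1
      simp only [List.take_zero]
      have h2 : wt [] = 0 := by simp [wt]
      rw [h2]
      push_cast at h1
      by_contra hn
      have : (0 : ℤ) < j := by exact_mod_cast hj
      nlinarith
    · rw [List.take_of_length_le (by simp; omega), List.length_drop, List.take_take]
      have h1 := hmin (min (j - (w.length - i)) i) (by simp; omega)
      have h3 : wt (w.take i) + wt (w.drop i) = 1 := by
        rw [← wt_append, List.take_append_drop, hw]
      generalize min (j - (w.length - i)) i = k at *
      by_contra hn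
      have h4 : wt (w.take k) + 1 ≤ wt (w.take i) := by linarith
      have h5 : (i : ℤ) ≤ w.length := by exact_mod_cast hi'
      have h6 : (0 : ℤ) ≤ k := by positivity
      nlinarith
end

section
/- Let w ∈ ℬ have length n. Then for every i with 0 < i < n, the cyclic rotation of w by i positions is different from w; consequently the conjugacy class of w has exactly n elements. -/
/-- If `w ∈ ℬ`, then every nontrivial cyclic rotation of `w` differs from `w`; consequently
the conjugacy class of `w` has exactly `length w` elements. -/
theorem rotations_distinct_of_mem_B (w : List ℕ) (hw : w ∈ Bset) :
    (∀ i, 0 < i → i < w.length → w.rotate i ≠ w) ∧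
      Set.ncard {u : List ℕ | ∃ i, w.rotate i = u} = w.length := by
  obtain ⟨h1, h2⟩ := hw
  have key : ∀ i, 0 < i → i < w.length → w.rotate i ≠ w := by
    intro i hi hin h
    have e := List.rotate_eq_drop_append_take hin.le
    rw [h] at e
    have hd : w.take (w.length - i) = w.drop i := by
      have t : (w.drop i ++ w.take i).take (w.length - i) = w.drop i :=
        List.take_left' (by simp)
      rwa [← e] at t
    have a := h2 i hi hin.le
    have b := h2 (w.length - i) (by omega) (by omega)
    rw [hd] at b
    have c : wt w = wt (w.take i) + wt (w.drop i) := by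
      conv_lhs => rw [← List.take_append_drop i w]
      simp only [wt, List.bind_eq_flatMap, List.flatMap_append, List.map_append, List.sum_append]
    omega
  refine ⟨key, ?_⟩
  have hpos : 0 < w.length := by
    rcases w with _ | ⟨a, l⟩
    · simp [wt] at h1
    · simp
  have hne : ∀ i j, i < j → j < w.length → w.rotate i ≠ w.rotate j := by
    intro i j hij hj h
    apply key (j - i) (by omega) (by omega)
    apply List.rotate_injective i
    show (w.rotate (j - i)).rotate i = w.rotate i
    rw [List.rotate_rotate, h]
    congr 1
    omega
  have hs : {u : List ℕ | ∃ i, w.rotate i = u} =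
      (((Finset.range w.length).image (fun i => w.rotate i) : Finset (List ℕ)) : Set (List ℕ)) := by
    ext u
    simp only [Set.mem_ofPred_eq, Finset.coe_image, Set.mem_image, Finset.mem_coe,
      Finset.mem_range]
    constructor
    · rintro ⟨i, rfl⟩
      exact ⟨i % w.length, Nat.mod_lt _ hpos, List.rotate_mod w i⟩
    · rintro ⟨i, _, rfl⟩
      exact ⟨i, rfl⟩
  rw [hs, Set.ncard_coe_finset, Finset.card_image_of_injOn, Finset.card_range]
  intro i hi j hj h
  simp only [Finset.coe_range, Set.mem_Iio] at hi hj
  rcases lt_trichotomy i j with hl | hl | hl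
  · exact absurd h (hne i j hl hj)
  · exact hl
  · exact absurd h.symm (hne j i hl hi)
end

section
/- Let n > 1 and let r = (r_1, …, r_n) ∈ ℕ^n satisfy r_1 + 2r_2 + ⋯ + n·r_n = n and |r| := r_1 + ⋯ + r_n < n. Let ℬ(r) be the (finite) set of words of length n − 1 lying in ℬ which contain exactly n − |r| − 1 occurrences of the letter 0 and exactly r_i occurrences of the letter i for each 1 ≤ i ≤ n. Then the cardinality N of ℬ(r) satisfies N · (n − |r| − 1)! · r_1! r_2! ⋯ r_n! = (n − 2)!; equivalently, N = (1/(n−1)) · multinomial(n−1; n−|r|−1, r_1, …, r_n). -/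
theorem mem_lists_coe (M : Multiset ℕ) (l : List ℕ) :
    l ∈ M.lists ↔ M = (l : Multiset ℕ) := Multiset.mem_lists_iff M l

theorem lists_card (S : Finset ℕ) : ∀ (L : ℕ) (M : Multiset ℕ), M.card = L → (∀ a ∈ M, a ∈ S) →
    (M.lists.toFinset).card * ∏ a ∈ S, (M.count a).factorial = L.factorial := by
  intro L
  induction L with
  | zero =>
    intro M hM _
    obtain rfl := Multiset.card_eq_zero.mp hM
    have : (Multiset.lists (0 : Multiset ℕ)).toFinset = {[]} := by
      ext l
      rw [Multiset.mem_toFinset, mem_lists_coe, Finset.mem_singleton]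
      constructor
      · intro h
        exact (Multiset.coe_eq_zero l).mp h.symm
      · rintro rfl; rfl
    rw [this]; simp
  | succ L ih =>
    intro M hM hS
    have h1 : M.lists.toFinset =
        M.toFinset.biUnion (fun a => ((M.erase a).lists.toFinset).image (List.cons a)) := by
      ext l
      simp only [Multiset.mem_toFinset, mem_lists_coe, Finset.mem_biUnion,
        Finset.mem_image]
      constructor
      · intro h
        cases l with
        | nil => subst h; simp at hM
        | cons a t =>
          refine ⟨a, by rw [h]; simp, t, ?_, rfl⟩
          rw [h, ← Multiset.cons_coe, Multiset.erase_cons_head]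
      · rintro ⟨a, ha, t, ht, rfl⟩
        rw [← Multiset.cons_coe, ← ht, Multiset.cons_erase ha]
    have h2 : M.lists.toFinset.card = ∑ a ∈ M.toFinset, ((M.erase a).lists.toFinset).card := by
      rw [h1, Finset.card_biUnion]
      · refine Finset.sum_congr rfl fun a _ => ?_
        exact Finset.card_image_of_injective _ (List.cons_injective)
      · intro a _ b _ hab
        rw [Function.onFun_apply, Finset.disjoint_left]
        intro l hl hl'
        simp only [Finset.mem_image] at hl hl'
        obtain ⟨t, _, rfl⟩ := hl
        obtain ⟨t', _, h⟩ := hl'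
        exact hab (List.cons.inj h).1.symm
    have h3 : ∀ a ∈ M.toFinset, ((M.erase a).lists.toFinset).card *
        ∏ b ∈ S, (M.count b).factorial = M.count a * L.factorial := by
      intro a ha
      rw [Multiset.mem_toFinset] at ha
      rw [← ih (M.erase a) (by rw [Multiset.card_erase_of_mem ha, hM]; rfl)
        (fun b hb => hS b (Multiset.mem_of_mem_erase hb))]
      have haS := hS a ha
      rw [← Finset.mul_prod_erase S _ haS, ← Finset.mul_prod_erase S _ haS]
      have : ∏ b ∈ S.erase a, ((M.erase a).count b).factorial
          = ∏ b ∈ S.erase a, (M.count b).factorial := by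
        refine Finset.prod_congr rfl fun b hb => ?_
        rw [Multiset.count_erase_of_ne (Finset.ne_of_mem_erase hb)]
      rw [this, Multiset.count_erase_self]
      have hpos := Multiset.count_pos.mpr ha
      rw [← Nat.mul_factorial_pred hpos.ne']
      ring
    rw [h2, Finset.sum_mul, Finset.sum_congr rfl h3, ← Finset.sum_mul,
      Multiset.toFinset_sum_count_eq, hM, Nat.factorial_succ]

theorem wt_perm {u v : List ℕ} (h : u.Perm v) : wt u = wt v := by
  rw [wt_eq, wt_eq]
  exact (h.map _).sum_eq

theorem no_rot (w : List ℕ) (d : ℕ) (hw : w ∈ Bset) (hd : w.rotate d ∈ Bset) (h0 : 0 < d)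
    (h1 : d < w.length) : False := by
  have e : w.rotate d = w.drop d ++ w.take d := List.rotate_eq_drop_append_take h1.le
  have a := hw.2 d h0 h1.le
  have b := hd.2 (w.length - d) (by omega) (by simp)
  rw [e, List.take_left' (by simp)] at b
  have c := hw.1
  rw [← List.take_append_drop d w, wt_append] at c
  omega

theorem ex_rot (w : List ℕ) (hw : wt w = 1) : ∃ k < w.length, w.rotate k ∈ Bset := by
  have hpos : 0 < w.length := by
    rcases w with _ | ⟨a, t⟩
    · simp [wt] at hw
    · simp
  obtain ⟨k, hk, hmin⟩ := Finset.exists_min_image (Finset.range w.length)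
    (fun k => wt (w.take k) * (w.length : ℤ) - k) ⟨0, by simpa using hpos⟩
  rw [Finset.mem_range] at hk
  refine ⟨k, hk, ?_⟩
  have hgt : ∀ i, k < i → i < w.length → wt (w.take k) < wt (w.take i) := by
    intro i h1 h2
    have := hmin i (Finset.mem_range.mpr h2)
    by_contra hc
    push Not at hc
    have := mul_le_mul_of_nonneg_right hc (Int.natCast_nonneg w.length)
    omega
  have hge : ∀ i, i < w.length → wt (w.take k) ≤ wt (w.take i) := by
    intro i h2
    have := hmin i (Finset.mem_range.mpr h2)
    by_contra hc
    push Not at hc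
    have hc' : wt (w.take i) + 1 ≤ wt (w.take k) := hc
    have := mul_le_mul_of_nonneg_right hc' (Int.natCast_nonneg w.length)
    rw [add_mul] at this
    omega
  have e : w.rotate k = w.drop k ++ w.take k := List.rotate_eq_drop_append_take hk.le
  have hsplit : wt (w.take k) + wt (w.drop k) = 1 := by
    rw [← wt_append, List.take_append_drop, hw]
  refine ⟨by rw [wt_perm (List.rotate_perm w k), hw], ?_⟩
  intro j hj0 hj
  rw [List.length_rotate] at hj
  rw [e, List.take_append, wt_append, List.length_drop, List.take_take]
  have h00 := hge 0 hpos
  have h0 : wt (w.take 0) = 0 := by simp [wt]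
  rcases lt_or_ge (k + j) w.length with h | h
  · have h1 := hgt (k + j) (by omega) h
    rw [List.take_add, wt_append] at h1
    have : min (j - (w.length - k)) k = 0 := by omega
    rw [this, h0]
    omega
  · rw [List.take_of_length_le (by simp; omega)]
    have h1 := hge (min (j - (w.length - k)) k) (by omega)
    omega

theorem card_rot (M : Multiset ℕ) (m : ℕ) (hm : M.card = m)
    (hwt : ∀ w : List ℕ, (w : Multiset ℕ) = M → wt w = 1) :
    M.lists.toFinset.card = Nat.card {w : List ℕ // (w : Multiset ℕ) = M ∧ w ∈ Bset} * m := by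
  have hA : M.lists.toFinset.card = Nat.card {w : List ℕ // (w : Multiset ℕ) = M} := by
    symm
    apply Nat.subtype_card
    intro x
    rw [Multiset.mem_toFinset, mem_lists_coe]
    exact eq_comm
  have hlen : ∀ w : List ℕ, (w : Multiset ℕ) = M → w.length = m := by
    intro w h; rw [← hm, ← h]; rfl
  have hrot : ∀ (w : List ℕ) k, (w : Multiset ℕ) = M → ((w.rotate k : List ℕ) : Multiset ℕ) = M := by
    intro w k h; rw [← h]; exact Multiset.coe_eq_coe.mpr (List.rotate_perm w k)
  rw [hA]
  have : Nat.card ({w : List ℕ // (w : Multiset ℕ) = M ∧ w ∈ Bset} × Fin m)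
      = Nat.card {w : List ℕ // (w : Multiset ℕ) = M} := by
    apply Nat.card_eq_of_bijective
      (fun p => ⟨p.1.1.rotate p.2.1, hrot _ _ p.1.2.1⟩)
    constructor
    · have key : ∀ (w w' : List ℕ) (k k' : ℕ), (w : Multiset ℕ) = M → (w' : Multiset ℕ) = M →
          w ∈ Bset → w' ∈ Bset → k ≤ k' → k' < m → w.rotate k = w'.rotate k' → w = w' ∧ k = k' := by
        intro w w' k k' hw hw' hB hB' hk hk' h
        have h2 : w = w'.rotate (k' - k) := by
          apply List.rotate_injective k
          simp only [List.rotate_rotate]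
          rw [h]; congr 1; omega
        rcases Nat.eq_zero_or_pos (k' - k) with h0 | h0
        · rw [h0, List.rotate_zero] at h2
          exact ⟨h2, by omega⟩
        · exact (no_rot w' (k' - k) hB' (h2 ▸ hB) h0 (by rw [hlen _ hw']; omega)).elim
      rintro ⟨⟨w, hw, hB⟩, k⟩ ⟨⟨w', hw', hB'⟩, k'⟩ h
      have h : w.rotate k = w'.rotate k' := congrArg Subtype.val h
      rcases le_total k.1 k'.1 with hk | hk
      · obtain ⟨rfl, h2⟩ := key w w' k k' hw hw' hB hB' hk k'.2 h
        obtain rfl := Fin.ext h2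
        rfl
      · obtain ⟨rfl, h2⟩ := key w' w k' k hw' hw hB' hB hk k.2 h.symm
        obtain rfl := Fin.ext h2
        rfl
    · rintro ⟨v, hv⟩
      obtain ⟨k, hk, hB⟩ := ex_rot v (hwt v hv)
      have hl := hlen v hv
      refine ⟨⟨⟨v.rotate k, hrot _ _ hv, hB⟩, ⟨(m - k) % m, Nat.mod_lt _ (by omega)⟩⟩, ?_⟩
      apply Subtype.ext
      change (v.rotate k).rotate ((m - k) % m) = v
      have h3 : m = (v.rotate k).length := by simp [hl]
      have : (v.rotate k).rotate ((m - k) % m) = (v.rotate k).rotate (m - k) := by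
        conv_lhs => rw [h3]
        rw [List.rotate_mod, ← h3]
      rw [this, List.rotate_rotate, show k + (m - k) = v.length by omega, List.rotate_length]
  rw [← this, Nat.card_prod, Nat.card_fin]

/-- Cardinality of `ℬ(r)`: the number `N` of words of length `n - 1` in `ℬ` with
`n - |r| - 1` letters `0` and `r i` letters `i` (for `1 ≤ i ≤ n`) satisfies
`N · (n - |r| - 1)! · r! = (n - 2)!`. -/
theorem card_Bset_r (n : ℕ) (hn : 1 < n) (r : Fin n → ℕ)
    (hrv : ∑ i, (i.1 + 1) * r i = n) (hr : ∑ i, r i < n) :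
    Nat.card {w : List ℕ // w.length = n - 1 ∧ w ∈ Bset ∧
        w.count 0 = n - (∑ i, r i) - 1 ∧ ∀ i : Fin n, w.count (i.1 + 1) = r i} *
      (n - (∑ i, r i) - 1).factorial * ∏ i, (r i).factorial = (n - 2).factorial := by
  set z := n - (∑ i, r i) - 1 with hz
  let M : Multiset ℕ := Multiset.replicate z 0 + ∑ i : Fin n, Multiset.replicate (r i) (i.1 + 1)
  have hM0 : M.count 0 = z := by
    simp [M, Multiset.count_sum', Multiset.count_replicate]
  have hMi : ∀ i : Fin n, M.count (i.1 + 1) = r i := by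
    intro i
    simp [M, Multiset.count_sum', Multiset.count_replicate, Fin.val_inj]
  have hMc : M.card = n - 1 := by
    simp [M]; omega
  have hS : ∀ a ∈ M, a ∈ Finset.range (n + 1) := by
    intro a ha
    simp only [M, Multiset.mem_add, Multiset.mem_sum, Multiset.mem_replicate] at ha
    rcases ha with ⟨_, rfl⟩ | ⟨i, _, _, rfl⟩
    · simp
    · have := i.2
      simp
  have hle : ∀ w : List ℕ, w.count 0 = z → (∀ i : Fin n, w.count (i.1 + 1) = r i) →
      M ≤ (w : Multiset ℕ) := by
    intro w h0 hi
    rw [Multiset.le_iff_count]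
    intro a
    by_cases ha : a ∈ M
    · have := hS a ha
      rw [Finset.mem_range] at this
      rw [Multiset.coe_count]
      rcases a with _ | a
      · rw [hM0, h0]
      · have h1 := hi ⟨a, by omega⟩
        have h2 := hMi ⟨a, by omega⟩
        simp only at h1 h2
        rw [h1, h2]
    · rw [Multiset.count_eq_zero_of_notMem ha]; exact Nat.zero_le _
  have hcard : Nat.card {w : List ℕ // w.length = n - 1 ∧ w ∈ Bset ∧
        w.count 0 = z ∧ ∀ i : Fin n, w.count (i.1 + 1) = r i}
      = Nat.card {w : List ℕ // (w : Multiset ℕ) = M ∧ w ∈ Bset} := by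
    apply Nat.card_congr
    apply Equiv.subtypeEquivRight
    intro w
    constructor
    · rintro ⟨h1, h2, h3, h4⟩
      refine ⟨(Multiset.eq_of_le_of_card_le (hle w h3 h4) ?_).symm, h2⟩
      rw [hMc, Multiset.coe_card, h1]
    · rintro ⟨h1, h2⟩
      refine ⟨by rw [← hMc, ← h1, Multiset.coe_card], h2, ?_, ?_⟩
      · rw [← hM0, ← h1, Multiset.coe_count]
      · intro i
        rw [← hMi, ← h1, Multiset.coe_count]
  have hwt : ∀ w : List ℕ, (w : Multiset ℕ) = M → wt w = 1 := by
    intro w h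
    have h1 : wt w = (M.map (fun a : ℕ => (a : ℤ) - 1)).sum := by
      rw [← h, wt_eq, Multiset.map_coe, Multiset.sum_coe]
    have h2 : (M.map (fun a : ℕ => (a : ℤ) - 1)).sum = -(z : ℤ) + ∑ i : Fin n, (r i : ℤ) * i.1 := by
      have := map_sum (Multiset.mapAddMonoidHom (fun a : ℕ => (a : ℤ) - 1))
        (fun i : Fin n => Multiset.replicate (r i) (i.1 + 1)) Finset.univ
      simp only [Multiset.coe_mapAddMonoidHom] at this
      simp only [M, Multiset.map_add, Multiset.sum_add, this, Multiset.sum_sum]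
      simp
    have h3 : (∑ i : Fin n, (r i : ℤ) * i.1) + ∑ i, (r i : ℤ) = n := by
      rw [← Finset.sum_add_distrib]
      have : ((∑ i : Fin n, (i.1 + 1) * r i : ℕ) : ℤ) = n := by rw [hrv]
      rw [← this]
      push_cast
      exact Finset.sum_congr rfl fun i _ => by ring
    have h4 : ((∑ i, r i : ℕ) : ℤ) = ∑ i, (r i : ℤ) := by push_cast; rfl
    rw [h1, h2]
    omega
  have hA := lists_card (Finset.range (n + 1)) (n - 1) M hMc hS
  rw [card_rot M (n - 1) hMc hwt, Finset.prod_range_succ', hM0,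
    Finset.prod_range (fun k => (M.count (k + 1)).factorial)] at hA
  simp only [hMi] at hA
  rw [hcard]
  apply Nat.eq_of_mul_eq_mul_left (show 0 < n - 1 by omega)
  have : (n - 1) * (n - 2).factorial = (n - 1).factorial :=
    Nat.mul_factorial_pred (show n - 1 ≠ 0 by omega)
  rw [this, ← hA]
  ring
end

section
/- (Kreweras) Let n ≥ 1 and let r = (r_1, …, r_n) ∈ ℕ^n satisfy r_1 + 2r_2 + ⋯ + n·r_n = n, and set |r| = r_1 + ⋯ + r_n. Then the number N of noncrossing set partitions of [n] of type r satisfies N · (n − |r| + 1)! · r_1! r_2! ⋯ r_n! = n!. -/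
/-- A set partition of `[n] = {1, …, n}`, encoded as a `Finpartition` of `Finset.Icc 1 n`. -/
abbrev SetPartitionOn (n : ℕ) := Finpartition (Finset.Icc 1 n)

/-- `π` has type `r = (r_1, …, r_n)` if for each `i` the number of blocks of size `i` is `r_i`. -/
def HasType {n : ℕ} (π : SetPartitionOn n) (r : Fin n → ℕ) : Prop :=
  ∀ i : Fin n, (π.parts.filter (fun B => B.card = i.1 + 1)).card = r i

/-- `π` is noncrossing: there are no `a < b < c < d` with `a, c` in one block and
`b, d` in a different block. -/
def Noncrossing {n : ℕ} (π : SetPartitionOn n) : Prop :=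
  ¬ ∃ a b c d : ℕ, a < b ∧ b < c ∧ c < d ∧
      ∃ B ∈ π.parts, ∃ B' ∈ π.parts, B ≠ B' ∧ a ∈ B ∧ c ∈ B ∧ b ∈ B' ∧ d ∈ B'

/-- `(i, j)` is an arc of `π`: `i < j` lie in a common block with no element of that
block strictly between them. -/
def IsArc {n : ℕ} (π : SetPartitionOn n) (i j : ℕ) : Prop :=
  i < j ∧ ∃ B ∈ π.parts, i ∈ B ∧ j ∈ B ∧ ∀ k ∈ B, ¬ (i < k ∧ k < j)

/-- `π` is nonnesting: there are no arcs `(a, d)` and `(b, c)` with `a < b < c < d`. -/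
def Nonnesting {n : ℕ} (π : SetPartitionOn n) : Prop :=
  ¬ ∃ a b c d : ℕ, a < b ∧ b < c ∧ c < d ∧ IsArc π a d ∧ IsArc π b c

/-- `i ∈ {1, …, n-1}` is a cut of `π` if no block contains both an element `≤ i` and an
element `> i`. -/
def IsCut {n : ℕ} (π : SetPartitionOn n) (i : ℕ) : Prop :=
  1 ≤ i ∧ i ≤ n - 1 ∧ ∀ B ∈ π.parts, (∀ x ∈ B, x ≤ i) ∨ (∀ x ∈ B, i < x)

/-- `π` is connected if it has no cuts. -/
def Connected {n : ℕ} (π : SetPartitionOn n) : Prop := ∀ i, ¬ IsCut π i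

/-- The number of cuts of `π`; `π` has exactly `m` connected components iff this is `m - 1`. -/
noncomputable def cutCount {n : ℕ} (π : SetPartitionOn n) : ℕ := Set.ncard {i : ℕ | IsCut π i}


namespace Krew
open Finset

def Good (P : Finset (Finset ℕ)) : Prop :=
  ∅ ∉ P ∧ (∀ B ∈ P, ∀ B' ∈ P, ∀ x, x ∈ B → x ∈ B' → B = B') ∧
  (∀ B ∈ P, ∀ B' ∈ P, ∀ a b c d, a < b → b < c → c < d → a ∈ B → c ∈ B → b ∈ B' → d ∈ B' → B = B') ∧
  (∀ B ∈ P, ∀ a f c, a < f → f < c → a ∈ B → c ∈ B → ∃ B' ∈ P, f ∈ B')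

open Classical in
noncomputable def G (m : ℕ) (M : Multiset ℕ) : Finset (Finset (Finset ℕ)) :=
  (Icc 1 m).powerset.powerset.filter (fun P => Good P ∧ P.val.map Finset.card = M)

theorem mem_G {m M P} : P ∈ G m M ↔
    (∀ B ∈ P, ∀ x ∈ B, 1 ≤ x ∧ x ≤ m) ∧ Good P ∧ P.val.map Finset.card = M := by
  simp only [G, mem_filter, mem_powerset, subset_iff, mem_Icc]

theorem card_union {P : Finset (Finset ℕ)} (h : Good P) :
    (P.biUnion id).card = (P.val.map Finset.card).sum := by
  rw [Finset.card_biUnion]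
  · rfl
  · intro B hB B' hB' hne
    rw [Function.onFun, Finset.disjoint_left]
    intro x hx hx'
    exact hne (h.2.1 B hB B' hB' x hx hx')

theorem sum_le {m M P} (h : P ∈ G m M) : M.sum ≤ m := by
  obtain ⟨h1, h2, h3⟩ := mem_G.1 h
  rw [← h3, ← card_union h2]
  calc _ ≤ (Icc 1 m).card := by
        apply card_le_card
        intro x hx
        obtain ⟨B, hB, hx⟩ := mem_biUnion.1 hx
        exact mem_Icc.2 (h1 B hB x hx)
    _ = m := by simp

def free (m : ℕ) (P : Finset (Finset ℕ)) : Finset ℕ := Icc 1 m \ P.biUnion id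

theorem mem_free {m P x} : x ∈ free m P ↔ (1 ≤ x ∧ x ≤ m) ∧ ∀ B ∈ P, x ∉ B := by
  simp [free]

theorem card_free {m M P} (h : P ∈ G m M) : (free m P).card = m - M.sum := by
  obtain ⟨h1, h2, h3⟩ := mem_G.1 h
  rw [free, card_sdiff_of_subset, card_union h2, h3]
  · simp
  · intro x hx
    obtain ⟨B, hB, hx⟩ := mem_biUnion.1 hx
    exact mem_Icc.2 (h1 B hB x hx)

theorem exists_top (F : Finset ℕ) (k : ℕ) (hk : k ≤ F.card) :
    ∃ T ⊆ F, T.card = k ∧ ∀ x ∈ F, ∀ y ∈ T, y < x → x ∈ T := by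
  induction k with
  | zero => exact ⟨∅, by simp⟩
  | succ k ih =>
    obtain ⟨T, hT, hc, hu⟩ := ih (by omega)
    have hne : (F \ T).Nonempty := by
      rw [← card_pos, card_sdiff_of_subset hT]; omega
    have hm := max'_mem _ hne
    have hle := le_max' (F \ T)
    set z := (F \ T).max' hne
    rw [mem_sdiff] at hm
    refine ⟨insert z T, ?_, ?_, ?_⟩
    · exact insert_subset hm.1 hT
    · rw [card_insert_of_notMem hm.2, hc]
    · intro x hx y hy hxy
      rw [mem_insert] at hy ⊢
      by_contra hcon
      push Not at hcon
      rcases hy with rfl | hy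
      · have := hle x (mem_sdiff.2 ⟨hx, hcon.2⟩); omega
      · exact hcon.2 (hu x hx y hy hxy)

theorem top_unique (F T T' : Finset ℕ) (hT : T ⊆ F) (hT' : T' ⊆ F) (hc : T.card = T'.card)
    (hu : ∀ x ∈ F, ∀ y ∈ T, y < x → x ∈ T) (hu' : ∀ x ∈ F, ∀ y ∈ T', y < x → x ∈ T') :
    T = T' := by
  by_cases h : T ⊆ T'
  · exact eq_of_subset_of_card_le h hc.ge
  · obtain ⟨a, ha, ha'⟩ := not_subset.1 h
    symm
    apply eq_of_subset_of_card_le _ hc.le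
    intro y hy
    by_contra hyT
    rcases lt_trichotomy a y with h | h | h
    · exact hyT (hu y (hT' hy) a ha h)
    · subst h; exact hyT ha
    · exact ha' (hu' a (hT ha) y hy h)

open Classical in
noncomputable def A (m c : ℕ) (M : Multiset ℕ) : Finset (Finset (Finset ℕ)) :=
  (G (m+1) M).filter (fun P => ∃ B ∈ P, m + 1 ∈ B ∧ B.card = c)

theorem mem_A {m c M P} : P ∈ A m c M ↔ P ∈ G (m+1) M ∧ ∃ B ∈ P, m + 1 ∈ B ∧ B.card = c := by
  simp [A]

theorem Good.subset_free {m M P B} (h : P ∈ G (m+1) M) (hB : B ∈ P) (hm : m + 1 ∈ B) :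
    B.erase (m+1) ⊆ free m (P.erase B) ∧
    ∀ x ∈ free m (P.erase B), ∀ y ∈ B.erase (m+1), y < x → x ∈ B.erase (m+1) := by
  obtain ⟨h1, h2, h3⟩ := mem_G.1 h
  constructor
  · intro x hx
    rw [mem_erase] at hx
    rw [mem_free]
    refine ⟨?_, ?_⟩
    · have := h1 B hB x hx.2; omega
    · intro B' hB' hx'
      rw [mem_erase] at hB'
      exact hB'.1 (h2.2.1 B' hB'.2 B hB x hx' hx.2)
  · intro x hx y hy hyx
    rw [mem_erase] at hy ⊢
    rw [mem_free] at hx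
    refine ⟨by omega, ?_⟩
    obtain ⟨B', hB', hxB'⟩ := h2.2.2.2 B hB y x (m+1) hyx (by omega) hy.2 hm
    by_cases e : B' = B
    · rwa [← e]
    · exact absurd hxB' (hx.2 B' (mem_erase.2 ⟨e, hB'⟩))

theorem filt_erase {m M P B} (h : P ∈ G (m+1) M) (hB : B ∈ P) (hm : m + 1 ∈ B) :
    P.filter (fun B => m + 1 ∉ B) = P.erase B := by
  obtain ⟨h1, h2, h3⟩ := mem_G.1 h
  ext B'
  rw [mem_filter, mem_erase]
  constructor
  · rintro ⟨h, h'⟩; exact ⟨fun e => h' (e ▸ hm), h⟩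
  · rintro ⟨h, h'⟩; exact ⟨h', fun e => h (h2.2.1 B' h' B hB _ e hm)⟩

theorem erase_mem {m M P B} (h : P ∈ G (m+1) M) (hB : B ∈ P) (hm : m + 1 ∈ B) :
    P.erase B ∈ G m (M.erase B.card) := by
  obtain ⟨h1, h2, h3⟩ := mem_G.1 h
  obtain ⟨g1, g2, g3, g4⟩ := h2
  rw [mem_G]
  refine ⟨?_, ⟨?_, ?_, ?_, ?_⟩, ?_⟩
  · intro B' hB' x hx
    rw [mem_erase] at hB'
    have := h1 B' hB'.2 x hx
    have : x ≠ m + 1 := by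
      rintro rfl; exact hB'.1 (g2 B' hB'.2 B hB _ hx hm)
    omega
  · intro h; exact g1 (mem_of_mem_erase h)
  · intro B hB B' hB'; exact g2 B (mem_of_mem_erase hB) B' (mem_of_mem_erase hB')
  · intro B hB B' hB'; exact g3 B (mem_of_mem_erase hB) B' (mem_of_mem_erase hB')
  · intro B1 hB1 a f c haf hfc ha hc
    rw [mem_erase] at hB1
    obtain ⟨B', hB', hf⟩ := g4 B1 hB1.2 a f c haf hfc ha hc
    refine ⟨B', mem_erase.2 ⟨?_, hB'⟩, hf⟩
    rintro rfl
    have h5 := h1 B1 hB1.2 c hc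
    have : c ≠ m + 1 := by
      rintro rfl; exact hB1.1 (g2 B1 hB1.2 B' hB _ hc hm)
    exact hB1.1 (g3 B1 hB1.2 B' hB a f c (m+1) haf hfc (by omega) ha hc hf hm)
  · rw [← h3, erase_val, Multiset.map_erase_of_mem _ _ hB]

theorem insert_mem {m M P c T} (hc : c ∈ M) (h : P ∈ G m (M.erase c)) (hT : T ⊆ free m P)
    (hTc : T.card + 1 = c) (hu : ∀ x ∈ free m P, ∀ y ∈ T, y < x → x ∈ T) :
    insert (m+1) T ∉ P ∧ insert (insert (m+1) T) P ∈ G (m+1) M ∧ (insert (m+1) T).card = c := by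
  obtain ⟨h1, ⟨g1, g2, g3, g4⟩, h3⟩ := mem_G.1 h
  have hmT : m + 1 ∉ T := fun e => by have := mem_free.1 (hT e); omega
  have hBP : insert (m+1) T ∉ P := fun e => by
    have := h1 _ e (m+1) (mem_insert_self _ _); omega
  have hcard : (insert (m+1) T).card = c := by rw [card_insert_of_notMem hmT, hTc]
  -- new-block elements are not in old blocks
  have key : ∀ x ∈ insert (m+1) T, ∀ B ∈ P, x ∉ B := by
    intro x hx B hB hxB
    rcases mem_insert.1 hx with rfl | hx
    · have := h1 B hB _ hxB; omega
    · exact (mem_free.1 (hT hx)).2 B hB hxB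
  have key2 : ∀ x ∈ insert (m+1) T, ∀ B ∈ P, ∀ a ∈ B, ∀ d ∈ B, a < x → x < d → False := by
    intro x hx B hB a ha d hd hax hxd
    obtain ⟨B', hB', hx'⟩ := g4 B hB a x d hax hxd ha hd
    exact key x hx B' hB' hx'
  refine ⟨hBP, ?_, hcard⟩
  rw [mem_G]
  refine ⟨?_, ⟨?_, ?_, ?_, ?_⟩, ?_⟩
  · intro B hB x hx
    rcases mem_insert.1 hB with rfl | hB
    · rcases mem_insert.1 hx with rfl | hx
      · omega
      · have := (mem_free.1 (hT hx)).1; omega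
    · have := h1 B hB x hx; omega
  · rw [mem_insert]
    rintro (h | h)
    · exact (insert_ne_empty _ _) h.symm
    · exact g1 h
  · intro B hB B' hB' x hx hx'
    rcases mem_insert.1 hB with rfl | hB <;> rcases mem_insert.1 hB' with rfl | hB'
    · rfl
    · exact absurd hx' (key x hx B' hB')
    · exact absurd hx (key x hx' B hB)
    · exact g2 B hB B' hB' x hx hx'
  · intro B hB B' hB' a b c d hab hbc hcd ha hc hb hd
    rcases mem_insert.1 hB with rfl | hB <;> rcases mem_insert.1 hB' with rfl | hB'
    · rfl
    · exact (key2 c hc B' hB' b hb d hd hbc hcd).elim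
    · exact (key2 b hb B hB a ha c hc hab hbc).elim
    · exact g3 B hB B' hB' a b c d hab hbc hcd ha hc hb hd
  · intro B hB a f c haf hfc ha hc
    rcases mem_insert.1 hB with rfl | hB
    · by_cases hf : f ∈ free m P
      · refine ⟨_, mem_insert_self _ _, mem_insert_of_mem ?_⟩
        have hcm : c ≤ m + 1 := by
          rcases mem_insert.1 hc with rfl | hc
          · omega
          · have := (mem_free.1 (hT hc)).1; omega
        rcases mem_insert.1 ha with rfl | ha
        · omega
        · exact hu f hf a ha haf
      · have hcm : c ≤ m + 1 := by
          rcases mem_insert.1 hc with rfl | hc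
          · omega
          · have := (mem_free.1 (hT hc)).1; omega
        rw [mem_free] at hf
        push Not at hf
        obtain ⟨B, hB, hfB⟩ := hf (by omega)
        exact ⟨B, mem_insert_of_mem hB, hfB⟩
    · obtain ⟨B', hB', hf⟩ := g4 B hB a f c haf hfc ha hc
      exact ⟨B', mem_insert_of_mem hB', hf⟩
  · rw [insert_val_of_notMem hBP, Multiset.map_cons, h3, hcard, Multiset.cons_erase hc]

theorem card_A {m c M} (hc : c ∈ M) (hc0 : 0 < c) (hS : M.sum ≤ m + 1) :
    (A m c M).card = (G m (M.erase c)).card := by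
  have hsum : c + (M.erase c).sum = M.sum := Multiset.sum_erase hc
  refine Finset.card_bij (fun P _ => P.filter (fun B => m + 1 ∉ B)) ?_ ?_ ?_
  · intro P hP
    obtain ⟨hP1, B, hB, hm, hBc⟩ := mem_A.1 hP
    have e := filt_erase hP1 hB hm
    have e' := erase_mem hP1 hB hm
    rw [hBc, ← e] at e'
    exact e'
  · intro P hP Q hQ e
    obtain ⟨hP, B, hB, hm, hBc⟩ := mem_A.1 hP
    obtain ⟨hQ, B', hB', hm', hBc'⟩ := mem_A.1 hQ
    rw [filt_erase hP hB hm, filt_erase hQ hB' hm'] at e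
    have h1 := Good.subset_free hP hB hm
    have h2 := Good.subset_free hQ hB' hm'
    rw [← e] at h2
    have := top_unique _ _ _ h1.1 h2.1
      (by rw [card_erase_of_mem hm, card_erase_of_mem hm', hBc, hBc']) h1.2 h2.2
    have hBB : B = B' := by
      rw [← insert_erase hm, this, insert_erase hm']
    rw [← insert_erase hB, e, hBB, insert_erase hB']
  · intro P hP
    have hf := card_free hP
    obtain ⟨T, hT, hTc, hu⟩ := exists_top (free m P) (c - 1) (by omega)
    obtain ⟨i1, i2, i3⟩ := insert_mem hc hP hT (by omega) hu
    refine ⟨insert (insert (m+1) T) P, mem_A.2 ⟨i2, _, mem_insert_self _ _, mem_insert_self _ _, i3⟩, ?_⟩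
    rw [filt_erase i2 (mem_insert_self _ _) (mem_insert_self _ _), erase_insert i1]

theorem card_G_succ {m M} (h0 : ∀ c ∈ M, 0 < c) (hS : M.sum ≤ m + 1) :
    (G (m+1) M).card = (G m M).card + ∑ c ∈ M.toFinset, (G m (M.erase c)).card := by
  classical
  have hU : G (m+1) M = G m M ∪ M.toFinset.biUnion (fun c => A m c M) := by
    ext P
    rw [mem_union, mem_biUnion]
    constructor
    · intro h
      by_cases hm : ∃ B ∈ P, m + 1 ∈ B
      · right
        obtain ⟨B, hB, hm⟩ := hm
        refine ⟨B.card, ?_, mem_A.2 ⟨h, B, hB, hm, rfl⟩⟩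
        rw [Multiset.mem_toFinset, ← (mem_G.1 h).2.2]
        exact Multiset.mem_map_of_mem _ hB
      · left
        rw [mem_G] at h ⊢
        refine ⟨fun B hB x hx => ?_, h.2⟩
        have := h.1 B hB x hx
        have : x ≠ m + 1 := by rintro rfl; exact hm ⟨B, hB, hx⟩
        omega
    · rintro (h | ⟨c, _, h⟩)
      · rw [mem_G] at h ⊢
        refine ⟨fun B hB x hx => ?_, h.2⟩
        have := h.1 B hB x hx
        omega
      · exact (mem_A.1 h).1
  rw [hU, card_union_of_disjoint, card_biUnion]
  · congr 1
    apply sum_congr rfl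
    intro c hc
    rw [Multiset.mem_toFinset] at hc
    exact card_A hc (h0 c hc) hS
  · intro c _ c' _ hne
    rw [Function.onFun, disjoint_left]
    intro P hP hP'
    obtain ⟨hP, B, hB, hm, hBc⟩ := mem_A.1 hP
    obtain ⟨hQ, B', hB', hm', hBc'⟩ := mem_A.1 hP'
    rw [(mem_G.1 hP).2.1.2.1 B hB B' hB' _ hm hm'] at hBc
    omega
  · rw [disjoint_left]
    intro P hP hP'
    obtain ⟨c, _, hP'⟩ := mem_biUnion.1 hP'
    obtain ⟨_, B, hB, hm, hBc⟩ := mem_A.1 hP'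
    have := (mem_G.1 hP).1 B hB _ hm
    omega

theorem card_le_sum (M : Multiset ℕ) (h0 : ∀ c ∈ M, 0 < c) : M.card ≤ M.sum := by
  have := Multiset.card_nsmul_le_sum (s := M) (a := 1) (fun c hc => h0 c hc)
  simpa using this

theorem main (T : Finset ℕ) (m : ℕ) : ∀ M : Multiset ℕ, (∀ c ∈ M, 0 < c) → M.toFinset ⊆ T →
    M.sum ≤ m + 1 →
    (G m M).card * ((m + 1 - M.card).factorial * ∏ c ∈ T, (M.count c).factorial)
      = (m + 1 - M.sum) * m.factorial := by
  induction m with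
  | zero =>
    intro M h0 hT hS
    have hle := card_le_sum M h0
    by_cases hS1 : M.sum = 1
    · have : G 0 M = ∅ := by
        rw [eq_empty_iff_forall_notMem]
        intro P hP
        have := sum_le hP
        omega
      simp [this, hS1]
    · have : M = 0 := by
        rw [← Multiset.card_eq_zero]; omega
      subst this
      have : G 0 0 = {∅} := by
        ext P
        rw [mem_G, mem_singleton]
        constructor
        · rintro ⟨_, _, h⟩
          simpa using h
        · rintro rfl
          simp [Good]
      simp [this]
  | succ m ih =>
    intro M h0 hT hS
    have hle := card_le_sum M h0
    by_cases hS1 : M.sum = m + 2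
    · have : G (m+1) M = ∅ := by
        rw [eq_empty_iff_forall_notMem]
        intro P hP
        have := sum_le hP
        omega
      simp [this, hS1]
    have hS : M.sum ≤ m + 1 := by omega
    rw [card_G_succ h0 hS, add_mul, sum_mul]
    have e1 := ih M h0 hT hS
    have e2 : ∀ c ∈ M.toFinset, (G m (M.erase c)).card *
        ((m + 1 + 1 - M.card).factorial * ∏ c ∈ T, (M.count c).factorial)
        = M.count c * (m + 1 - M.sum + c) * m.factorial := by
      intro c hc
      have hcT := hT hc
      rw [Multiset.mem_toFinset] at hc
      have hsum : c + (M.erase c).sum = M.sum := Multiset.sum_erase hc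
      have hcard := Multiset.card_erase_add_one hc
      have e := ih (M.erase c) (fun d hd => h0 d (Multiset.mem_of_mem_erase hd))
        (fun d hd => hT (by
          rw [Multiset.mem_toFinset] at hd ⊢; exact Multiset.mem_of_mem_erase hd)) (by omega)
      have hp : ∏ d ∈ T, (M.count d).factorial =
          M.count c * ∏ d ∈ T, ((M.erase c).count d).factorial := by
        rw [← mul_prod_erase _ _ hcT, ← mul_prod_erase _ _ hcT, ← mul_assoc]
        congr 1
        · rw [Multiset.count_erase_self]
          exact (Nat.mul_factorial_pred (Multiset.count_pos.2 hc).ne').symm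
        · apply prod_congr rfl
          intro d hd
          rw [Multiset.count_erase_of_ne (ne_of_mem_erase hd)]
      rw [show m + 1 - (M.erase c).card = m + 1 + 1 - M.card by omega,
        show m + 1 - (M.erase c).sum = m + 1 - M.sum + c by omega] at e
      rw [hp, mul_assoc (M.count c), ← e]
      ring
    rw [sum_congr rfl e2]
    have e3 : ∑ c ∈ M.toFinset, M.count c * (m + 1 - M.sum + c) * m.factorial =
        (M.card * (m + 1 - M.sum) + M.sum) * m.factorial := by
      rw [← sum_mul]
      congr 1
      simp only [mul_add]
      rw [sum_add_distrib, ← sum_mul, Multiset.toFinset_sum_count_eq]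
      congr 1
      conv_rhs => rw [Finset.sum_multiset_count M]
      simp
    rw [e3]
    obtain ⟨k, hk⟩ := Nat.exists_eq_add_of_le hS
    obtain ⟨j, hj⟩ := Nat.exists_eq_add_of_le (show M.card ≤ m + 1 by omega)
    rw [show m + 1 - M.sum = k by omega] at *
    rw [show m + 1 - M.card = j by omega] at e1
    rw [show m + 1 + 1 - M.card = j + 1 by omega, show m + 1 + 1 - M.sum = k + 1 by omega,
      Nat.factorial_succ j, Nat.factorial_succ m]
    have : (G m M).card * ((j + 1) * j.factorial * ∏ c ∈ T, (M.count c).factorial)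
       = (j+1) * (k * m.factorial) := by rw [← e1]; ring
    rw [this]
    have h5 : (j + 1) * k + M.card * k + M.sum = (k+1) * (m+1) := by
      have : (j + 1) * k + M.card * k = (m + 2) * k := by
        rw [← add_mul]; congr 1; omega
      rw [this]
      have : (k+1)*(m+1) = (m+1) * k + (m + 1) := by ring
      rw [this]; linarith
    linear_combination m.factorial * h5

theorem card_eq (n : ℕ) (r : Fin n → ℕ) (M : Multiset ℕ) (hM : ∀ i : Fin n, M.count (i.1+1) = r i)
    (hM0 : ∀ c ∈ M, 1 ≤ c ∧ c ≤ n) (hs : M.sum = n) :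
    Nat.card {π : SetPartitionOn n // Noncrossing π ∧ HasType π r} = (G n M).card := by
  rw [← Nat.card_eq_finsetCard]
  have hsub : ∀ π : SetPartitionOn n, ∀ B ∈ π.parts, ∀ x ∈ B, 1 ≤ x ∧ x ≤ n := by
    intro π B hB x hx
    exact mem_Icc.1 (π.le hB hx)
  refine Nat.card_congr (Equiv.ofBijective (fun π => ⟨π.1.parts, ?_⟩) ⟨?_, ?_⟩)
  · obtain ⟨π, h1, h2⟩ := π
    rw [mem_G]
    refine ⟨hsub π, ⟨π.bot_notMem, ?_, ?_, ?_⟩, ?_⟩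
    · intro B hB B' hB' x hx hx'
      exact π.eq_of_mem_parts hB hB' hx hx'
    · intro B hB B' hB' a b c d hab hbc hcd ha hc hb hd
      by_contra hne
      exact h1 ⟨a, b, c, d, hab, hbc, hcd, B, hB, B', hB', hne, ha, hc, hb, hd⟩
    · intro B hB a f c haf hfc ha hc
      have h3 := hsub π B hB a ha
      have h4 := hsub π B hB c hc
      exact π.exists_mem (mem_Icc.2 ⟨by omega, by omega⟩)
    · ext c
      rw [Multiset.count_map]
      by_cases hc : 1 ≤ c ∧ c ≤ n
      · have := h2 ⟨c - 1, by omega⟩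
        have h3 := hM ⟨c - 1, by omega⟩
        simp only [show c - 1 + 1 = c by omega] at this h3
        rw [h3, ← this, Finset.card, filter_val]
        simp only [eq_comm]
      · rw [Multiset.count_eq_zero_of_notMem (fun h => hc (hM0 c h))]
        rw [Multiset.card_eq_zero, Multiset.filter_eq_nil]
        intro B hB hcB
        apply hc
        have h5 := card_pos.2 (π.nonempty_of_mem_parts hB)
        have h6 := card_le_card (π.le hB)
        simp at h6
        omega
  · intro π π' h
    apply Subtype.ext
    apply Finpartition.ext
    simpa using h
  · rintro ⟨P, hP⟩
    obtain ⟨h1, h2, h3⟩ := mem_G.1 hP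
    have hu : P.biUnion id = Icc 1 n := by
      apply eq_of_subset_of_card_le
      · intro x hx
        obtain ⟨B, hB, hx⟩ := mem_biUnion.1 hx
        exact mem_Icc.2 (h1 B hB x hx)
      · rw [card_union h2, h3, hs]; simp
    refine ⟨⟨⟨P, ?_, ?_, h2.1⟩, ?_, ?_⟩, rfl⟩
    · rw [supIndep_iff_pairwiseDisjoint]
      intro B hB B' hB' hne
      rw [Function.onFun, disjoint_left]
      intro x hx hx'
      exact hne (h2.2.1 B hB B' hB' x hx hx')
    · rw [sup_eq_biUnion, hu]
    · rintro ⟨a, b, c, d, hab, hbc, hcd, B, hB, B', hB', hne, ha, hc, hb, hd⟩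
      exact hne (h2.2.2.1 B hB B' hB' a b c d hab hbc hcd ha hc hb hd)
    · intro i
      rw [← hM, ← h3, Multiset.count_map, Finset.card, filter_val]
      simp only [eq_comm]

end Krew

/-- (Kreweras) The number `N` of noncrossing partitions of `[n]` of type `r` satisfies
`N · (n - |r| + 1)! · r! = n!`. -/
theorem card_noncrossing_of_type (n : ℕ) (hn : 1 ≤ n) (r : Fin n → ℕ)
    (hrv : ∑ i, (i.1 + 1) * r i = n) :
    Nat.card {π : SetPartitionOn n // Noncrossing π ∧ HasType π r} *
      (n - (∑ i, r i) + 1).factorial * ∏ i, (r i).factorial = n.factorial := by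
  classical
  let M : Multiset ℕ := ∑ i : Fin n, Multiset.replicate (r i) (i.1 + 1)
  have hM : ∀ i : Fin n, M.count (i.1+1) = r i := by
    intro i
    simp only [M, Multiset.count_sum', Multiset.count_replicate]
    rw [Finset.sum_eq_single i]
    · simp
    · intro j _ hj
      rw [if_neg]
      intro e
      exact hj (Fin.ext (by omega))
    · simp
  have hM0 : ∀ c ∈ M, 1 ≤ c ∧ c ≤ n := by
    intro c hc
    simp only [M, Multiset.mem_sum] at hc
    obtain ⟨i, _, hc⟩ := hc
    have := Multiset.eq_of_mem_replicate hc
    omega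
  have hs : M.sum = n := by
    simp only [M, Multiset.sum_sum, Multiset.sum_replicate, smul_eq_mul]
    refine Eq.trans ?_ hrv
    exact Finset.sum_congr rfl (fun i _ => mul_comm _ _)
  have hcard : M.card = ∑ i, r i := by
    simp [M, Multiset.card_sum]
  have hle := Krew.card_le_sum M (fun c hc => (hM0 c hc).1)
  have key := Krew.main (Finset.univ.image (fun i : Fin n => i.1 + 1)) n M
    (fun c hc => (hM0 c hc).1) (by
      intro c hc
      have := hM0 c (Multiset.mem_toFinset.1 hc)
      exact Finset.mem_image.2 ⟨⟨c - 1, by omega⟩, Finset.mem_univ _, by simp; omega⟩) (by omega)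
  rw [Finset.prod_image (by intro i _ j _ h; exact Fin.ext (by simpa using h))] at key
  simp only [hM] at key
  rw [Krew.card_eq n r M hM hM0 hs, ← hcard, mul_assoc,
    show n - M.card + 1 = n + 1 - M.card by omega, key, hs]
  simp
end

section
/- Let n ≥ 1 and let r = (r_1, …, r_n) ∈ ℕ^n satisfy r_1 + 2r_2 + ⋯ + n·r_n = n, and set |r| = r_1 + ⋯ + r_n. Then the number N of nonnesting set partitions of [n] of type r satisfies N · (n − |r| + 1)! · r_1! r_2! ⋯ r_n! = n!. -/
namespace NN

variable {n : ℕ}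

lemma rel_symm {π : SetPartitionOn n} {x y : ℕ} (h : x ∈ π.part y) : y ∈ π.part x := by
  rw [Finpartition.mem_part_iff_exists] at *
  obtain ⟨p, hp, h1, h2⟩ := h
  exact ⟨p, hp, h2, h1⟩

lemma rel_eq {π : SetPartitionOn n} {x y : ℕ} (h : x ∈ π.part y) : π.part x = π.part y := by
  have hy : y ∈ Finset.Icc 1 n := π.part_nonempty.1 ⟨x, h⟩
  exact π.part_eq_of_mem (π.part_mem.2 hy) h

lemma rel_mem {π : SetPartitionOn n} {x y : ℕ} (h : x ∈ π.part y) : x ∈ Finset.Icc 1 n :=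
  π.part_subset _ h

lemma isArc_iff {π : SetPartitionOn n} {i j : ℕ} :
    IsArc π i j ↔ i < j ∧ i ∈ π.part j ∧ ∀ k ∈ π.part j, ¬ (i < k ∧ k < j) := by
  constructor
  · rintro ⟨h, B, hB, hi, hj, hk⟩
    rw [π.part_eq_of_mem hB hj]
    exact ⟨h, hi, hk⟩
  · rintro ⟨h, hi, hk⟩
    have hj : j ∈ Finset.Icc 1 n := π.part_nonempty.1 ⟨i, hi⟩
    exact ⟨h, π.part j, π.part_mem.2 hj, hi, π.mem_part hj, hk⟩

/-- size of the block opened at `k`, or `0`. -/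
def W (π : SetPartitionOn n) (k : ℕ) : ℕ :=
  if ∀ x ∈ π.part k, k ≤ x then (π.part k).card else 0

lemma W_zero {π : SetPartitionOn n} {k : ℕ} (hk : k ∈ Finset.Icc 1 n) (h : W π k = 0) :
    ∃ x ∈ π.part k, x < k := by
  unfold W at h
  split_ifs at h with h1
  · rw [Finset.card_eq_zero, Finpartition.part_eq_empty] at h
    exact absurd hk h
  · push Not at h1
    exact h1

lemma W_eq {π : SetPartitionOn n} {k : ℕ} (h : ∀ x ∈ π.part k, k ≤ x) :
    W π k = (π.part k).card := by
  rw [W, if_pos h]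

lemma W_eq_zero {π : SetPartitionOn n} {k x : ℕ} (h : x ∈ π.part k) (hx : x < k) :
    W π k = 0 := by
  rw [W, if_neg]
  intro h'
  exact absurd (h' x h) (by omega)

lemma exists_min {π : SetPartitionOn n} {x : ℕ} (hx : x ∈ Finset.Icc 1 n) :
    ∃ m ∈ π.part x, (∀ y ∈ π.part x, m ≤ y) := by
  have hne : (π.part x).Nonempty := π.part_nonempty.2 hx
  exact ⟨_, Finset.min'_mem _ hne, fun y hy => Finset.min'_le _ _ hy⟩

lemma exists_pred {π : SetPartitionOn n} {x j : ℕ} (h : x ∈ π.part j) (hx : x < j) :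
    ∃ p, IsArc π p j ∧ x ≤ p := by
  have hne : ((π.part j).filter (· < j)).Nonempty := ⟨x, by simp [h, hx]⟩
  have h1 := Finset.max'_mem _ hne
  have h2 := fun y hy => Finset.le_max' ((π.part j).filter (· < j)) y hy
  set p := Finset.max' _ hne
  simp only [Finset.mem_filter] at h1 h2
  refine ⟨p, isArc_iff.2 ⟨h1.2, h1.1, fun k hk hk' => ?_⟩, h2 x ⟨h, hx⟩⟩
  have := h2 k ⟨hk, hk'.2⟩
  omega

lemma exists_succ {π : SetPartitionOn n} {x j : ℕ} (h : x ∈ π.part j) (hx : j < x) :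
    ∃ q, IsArc π j q := by
  have hne : ((π.part j).filter (j < ·)).Nonempty := ⟨x, by simp [h, hx]⟩
  have h1 := Finset.min'_mem _ hne
  have h2 := fun y hy => Finset.min'_le ((π.part j).filter (j < ·)) y hy
  set p := Finset.min' _ hne
  simp only [Finset.mem_filter] at h1 h2
  refine ⟨p, isArc_iff.2 ⟨h1.2, rel_symm h1.1, fun k hk hk' => ?_⟩⟩
  rw [rel_eq h1.1] at hk
  have := h2 k ⟨hk, hk'.1⟩
  omega

lemma key {π π' : SetPartitionOn n} (hW : ∀ k ∈ Finset.Icc 1 n, W π k = W π' k) {j : ℕ}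
    (hag : ∀ x < j, ∀ y < j, x ∈ π.part y ↔ x ∈ π'.part y) {p : ℕ} (hp : IsArc π p j)
    (hn : p ∉ π'.part j) : ∃ q, j < q ∧ IsArc π' p q := by
  rw [isArc_iff] at hp
  obtain ⟨hpj, hpr, hk⟩ := hp
  have hpn := rel_mem hpr
  have hE : π.part p = π.part j := rel_eq hpr
  have hjp : j ∈ π.part p := rel_symm hpr
  have hjn := rel_mem hjp
  -- sizes agree
  have hcard : (π.part p).card = (π'.part p).card := by
    obtain ⟨m, hm, hmin⟩ := exists_min (π := π) hpn
    have hmp : m ≤ p := hmin p (π.mem_part hpn)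
    have hm' : m ∈ π'.part p := (hag m (by omega) p hpj).1 hm
    have h1 : W π m = (π.part m).card := W_eq (by rw [rel_eq hm]; exact hmin)
    have h2 : W π' m = (π'.part m).card := by
      apply W_eq
      rw [rel_eq hm']
      intro x hx
      by_contra hlt
      push Not at hlt
      have := hmin x ((hag x (by omega) p hpj).2 hx)
      omega
    rw [← rel_eq hm, ← rel_eq hm', ← h1, ← h2]
    exact hW m (rel_mem hm)
  have hex : ∃ x ∈ π'.part p, j ≤ x := by
    by_contra hcon
    push Not at hcon
    have hss : π'.part p ⊂ π.part p := by
      rw [Finset.ssubset_iff_of_subset]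
      · exact ⟨j, hjp, fun h => absurd (hcon j h) (by omega)⟩
      · intro x hx
        exact (hag x (hcon x hx) p hpj).2 hx
    have := Finset.card_lt_card hss
    omega
  obtain ⟨x, hx, hjx⟩ := hex
  obtain ⟨q, hq⟩ := exists_succ hx (by omega)
  refine ⟨q, ?_, hq⟩
  rw [isArc_iff] at hq
  obtain ⟨hpq, hqr, hq3⟩ := hq
  by_contra hqj
  push Not at hqj
  rcases Nat.lt_or_ge q j with h | h
  · have h5 := (hag p hpj q h).2 hqr
    have h6 : q ∈ π.part j := by rw [← hE]; exact rel_symm h5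
    exact hk q h6 ⟨hpq, h⟩
  · obtain rfl : q = j := by omega
    exact hn hqr

lemma step {π π' : SetPartitionOn n} (hN : Nonnesting π) (hN' : Nonnesting π')
    (hW : ∀ k ∈ Finset.Icc 1 n, W π k = W π' k) {j : ℕ}
    (hag : ∀ x < j, ∀ y < j, x ∈ π.part y ↔ x ∈ π'.part y) {x : ℕ} (hx : x < j)
    (hxj : x ∈ π.part j) : x ∈ π'.part j := by
  obtain ⟨p, hp, hxp⟩ := exists_pred hxj hx
  have hp' := isArc_iff.1 hp
  have hjn : j ∈ Finset.Icc 1 n := rel_mem (rel_symm hxj)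
  have hxp' : x ∈ π'.part p := (hag x hx p hp'.1).1 (by rw [rel_eq hp'.2.1]; exact hxj)
  by_cases hpj : p ∈ π'.part j
  · rw [rel_eq hpj] at hxp'
    exact hxp'
  exfalso
  have h0 : W π' j = 0 := by rw [← hW j hjn]; exact W_eq_zero hxj hx
  obtain ⟨y, hy, hyj⟩ := W_zero hjn h0
  obtain ⟨p', hq, -⟩ := exists_pred hy hyj
  have hq' := isArc_iff.1 hq
  have hp'j : p' ∉ π.part j := by
    intro h
    apply hpj
    have : p' ∈ π'.part p := (hag p' hq'.1 p hp'.1).1 (by rw [rel_eq hp'.2.1]; exact h)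
    rw [← rel_eq hq'.2.1]
    exact rel_symm this
  obtain ⟨q, hjq, hA⟩ := key hW hag hp hpj
  obtain ⟨q', hjq', hA'⟩ := key (fun k hk => (hW k hk).symm)
    (fun x hx y hy => (hag x hx y hy).symm) hq hp'j
  rcases lt_trichotomy p p' with h | h | h
  · exact hN' ⟨p, p', j, q, h, hq'.1, hjq, hA, hq⟩
  · subst h
    exact hpj hq'.2.1
  · exact hN ⟨p', p, j, q', h, hp'.1, hjq', hA', hp⟩

lemma W_inj {π π' : SetPartitionOn n} (hN : Nonnesting π) (hN' : Nonnesting π')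
    (hW : ∀ k ∈ Finset.Icc 1 n, W π k = W π' k) : π = π' := by
  have main : ∀ j, ∀ x < j, ∀ y < j, x ∈ π.part y ↔ x ∈ π'.part y := by
    intro j
    induction j with
    | zero => intro x hx; omega
    | succ j ih =>
      have h1 : ∀ x < j, x ∈ π.part j ↔ x ∈ π'.part j := fun x hx =>
        ⟨step hN hN' hW ih hx, step hN' hN (fun k hk => (hW k hk).symm)
          (fun x hx y hy => (ih x hx y hy).symm) hx⟩
      intro x hx y hy
      rcases Nat.lt_succ_iff_lt_or_eq.1 hx with hx | rfl <;>
      rcases Nat.lt_succ_iff_lt_or_eq.1 hy with hy | rfl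
      · exact ih x hx y hy
      · exact h1 x hx
      · exact ⟨fun h => rel_symm ((h1 y hy).1 (rel_symm h)),
          fun h => rel_symm ((h1 y hy).2 (rel_symm h))⟩
      · simp
  have hpart : ∀ y, π.part y = π'.part y := by
    intro y
    ext x
    exact main (x + y + 1) x (by omega) y (by omega)
  have hsub : ∀ {σ τ : SetPartitionOn n}, (∀ y, σ.part y = τ.part y) → σ.parts ⊆ τ.parts := by
    intro σ τ h B hB
    obtain ⟨x, hx⟩ := σ.nonempty_of_mem_parts hB
    rw [← σ.part_eq_of_mem hB hx, h, τ.part_mem]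
    exact σ.le hB hx
  exact Finpartition.ext (Finset.Subset.antisymm (hsub hpart) (hsub fun y => (hpart y).symm))

lemma W_sum (π : SetPartitionOn n) {j : ℕ} (hj : j ≤ n) : j ≤ ∑ k ∈ Finset.Icc 1 j, W π k := by
  have h1 : Finset.Icc 1 j ⊆ (Finset.Icc 1 j).biUnion
      (fun k => if ∀ x ∈ π.part k, k ≤ x then π.part k else ∅) := by
    intro x hx
    have hx' : x ∈ Finset.Icc 1 n := by simp at hx ⊢; omega
    obtain ⟨m, hm, hmin⟩ := exists_min (π := π) hx'
    have := hmin x (π.mem_part hx')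
    have hmn := rel_mem hm
    rw [Finset.mem_biUnion]
    refine ⟨m, by simp at hx hmn ⊢; omega, ?_⟩
    rw [if_pos (by rw [rel_eq hm]; exact hmin)]
    exact rel_symm hm
  have h2 := (Finset.card_le_card h1).trans Finset.card_biUnion_le
  simp only [Nat.card_Icc, Nat.add_sub_cancel] at h2
  refine h2.trans (le_of_eq (Finset.sum_congr rfl fun k _ => ?_))
  unfold W
  split_ifs <;> simp

lemma W_count (π : SetPartitionOn n) (s : ℕ) (hs : 0 < s) :
    ((Finset.univ : Finset (Fin (n+1))).filter (fun k => W π (k.1 + 1) = s)).card =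
      (π.parts.filter (fun B => B.card = s)).card := by
  have aux : ∀ k, W π k = s → k ∈ Finset.Icc 1 n ∧ (∀ x ∈ π.part k, k ≤ x) ∧
      (π.part k).card = s := by
    intro k hk
    unfold W at hk
    split_ifs at hk with h
    · refine ⟨?_, h, hk⟩
      rw [← π.part_nonempty, ← Finset.card_pos]; omega
    · omega
  apply Finset.card_bij (fun k _ => π.part (k.1 + 1))
  · intro k hk
    simp only [Finset.mem_filter, Finset.mem_univ, true_and] at hk ⊢
    obtain ⟨h1, h2, h3⟩ := aux _ hk
    exact ⟨π.part_mem.2 h1, h3⟩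
  · intro k hk l hl h
    simp only [Finset.mem_filter, Finset.mem_univ, true_and] at hk hl
    obtain ⟨h1, h2, h3⟩ := aux _ hk
    obtain ⟨g1, g2, g3⟩ := aux _ hl
    have e1 := h2 (l.1 + 1) (by rw [h]; exact π.mem_part g1)
    have e2 := g2 (k.1 + 1) (by rw [← h]; exact π.mem_part h1)
    ext; omega
  · intro B hB
    simp only [Finset.mem_filter] at hB
    obtain ⟨x, hx⟩ := π.nonempty_of_mem_parts hB.1
    obtain ⟨m, hm, hmin⟩ := exists_min (π := π) (π.le hB.1 hx)
    have hmn := Finset.mem_Icc.1 (rel_mem hm)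
    have hE : π.part m = B := by rw [rel_eq hm, π.part_eq_of_mem hB.1 hx]
    refine ⟨⟨m - 1, by omega⟩, ?_, ?_⟩
    · simp only [Finset.mem_filter, Finset.mem_univ, true_and]
      rw [Nat.sub_add_cancel hmn.1, W_eq, hE, hB.2]
      rw [rel_eq hm]; exact hmin
    · simp only
      rw [Nat.sub_add_cancel hmn.1, hE]

lemma W_le (π : SetPartitionOn n) (k : ℕ) : W π k ≤ n := by
  unfold W
  split_ifs
  · simpa using Finset.card_le_card (π.part_subset k)
  · omega

lemma W_out (π : SetPartitionOn n) {k : ℕ} (hk : n < k) : W π k = 0 := by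
  have : π.part k = ∅ := by rw [Finpartition.part_eq_empty]; simp; omega
  unfold W
  simp [this]

/-- `p` is an admissible predecessor of `c`. -/
def cand (u g : ℕ → ℕ) (c p : ℕ) : Prop :=
  1 ≤ p ∧ p < c ∧ (∀ y, p < y → y < c → g y ≠ g p) ∧
    ((Finset.Ico 1 c).filter (fun x => g x = g p)).card < u (g p)

lemma cand_congr {u g g' : ℕ → ℕ} {c : ℕ} (h : ∀ y < c, g y = g' y) (p : ℕ)
    (hc : cand u g c p) : cand u g' c p := by
  obtain ⟨h1, h2, h3, h4⟩ := hc
  refine ⟨h1, h2, fun y hy hyc => ?_, ?_⟩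
  · rw [← h y hyc, ← h p h2]
    exact h3 y hy hyc
  · rw [← h p h2]
    refine lt_of_eq_of_lt (congrArg _ (Finset.filter_congr fun x hx => ?_)) h4
    rw [h x (Finset.mem_Ico.1 hx).2]

open Classical in
/-- labels of blocks -/
noncomputable def lab (u : ℕ → ℕ) (c : ℕ) : ℕ :=
  if u c ≠ 0 then c else
    (fun y => if _h : y < c then lab u y else 0)
      (sInf {p | cand u (fun y => if _h : y < c then lab u y else 0) c p})
termination_by c

lemma lab_pos {u : ℕ → ℕ} {c : ℕ} (h : u c ≠ 0) : lab u c = c := by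
  rw [lab, if_pos h]

lemma lab_zero {u : ℕ → ℕ} {c : ℕ} (h : u c = 0) (hex : ∃ p, cand u (lab u) c p) :
    ∃ p, cand u (lab u) c p ∧ lab u c = lab u p ∧ ∀ q < p, ¬ cand u (lab u) c q := by
  have hset : {p | cand u (fun y => if _h : y < c then lab u y else 0) c p} =
      {p | cand u (lab u) c p} := by
    ext p
    exact ⟨cand_congr (fun y hy => by simp [hy]) p, cand_congr (fun y hy => by simp [hy]) p⟩
  have hmem : sInf {p | cand u (lab u) c p} ∈ {p | cand u (lab u) c p} := Nat.sInf_mem hex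
  refine ⟨sInf {p | cand u (lab u) c p}, hmem, ?_, fun q hq => Nat.notMem_of_lt_sInf hq⟩
  rw [lab, if_neg (by simp [h]), hset]
  simp only
  rw [dif_pos hmem.2.1]

lemma exists_cand {u : ℕ → ℕ} {c : ℕ} (hc : 1 ≤ c) (hu : u c = 0)
    (hs : c ≤ ∑ k ∈ Finset.Icc 1 c, u k)
    (hb : ∀ x, 1 ≤ x → x < c → 1 ≤ lab u x ∧ lab u x ≤ x) :
    ∃ p, cand u (lab u) c p := by
  have h1 : ∑ k ∈ Finset.Icc 1 c, u k = ∑ k ∈ Finset.Ico 1 c, u k := by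
    have : Finset.Icc 1 c = Finset.Ico 1 (c+1) := by ext; simp
    rw [this, Finset.sum_Ico_succ_top hc, hu, add_zero]
  have h2 : (Finset.Ico 1 c).card = ∑ m ∈ Finset.Ico 1 c,
      ((Finset.Ico 1 c).filter (fun x => lab u x = m)).card := by
    apply Finset.card_eq_sum_card_fiberwise
    intro x hx
    simp only [Finset.coe_Ico, Set.mem_Ico] at hx ⊢
    have := hb x hx.1 hx.2
    omega
  rw [Nat.card_Ico] at h2
  obtain ⟨m, hm, hlt⟩ : ∃ m ∈ Finset.Ico 1 c,
      ((Finset.Ico 1 c).filter (fun x => lab u x = m)).card < u m := by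
    apply Finset.exists_lt_of_sum_lt
    omega
  have hm' := Finset.mem_Ico.1 hm
  have hlm : lab u m = m := lab_pos (by omega)
  have hne : ((Finset.Ico 1 c).filter (fun x => lab u x = m)).Nonempty :=
    ⟨m, by simp [hlm]; omega⟩
  have g1 := Finset.max'_mem _ hne
  have g2 := fun y hy => Finset.le_max' ((Finset.Ico 1 c).filter (fun x => lab u x = m)) y hy
  set p := Finset.max' _ hne
  simp only [Finset.mem_filter, Finset.mem_Ico] at g1 g2
  refine ⟨p, g1.1.1, g1.1.2, fun y hy hyc he => ?_, ?_⟩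
  · have := g2 y ⟨⟨by omega, hyc⟩, he.trans g1.2⟩
    omega
  · rw [g1.2]; exact hlt

section
variable {u : ℕ → ℕ} (hs : ∀ j ≤ n, j ≤ ∑ k ∈ Finset.Icc 1 j, u k)
include hs

lemma lab_basic : ∀ c, 1 ≤ c → c ≤ n → 1 ≤ lab u c ∧ lab u c ≤ c ∧ lab u (lab u c) = lab u c ∧
    (u c = 0 → ∃ p, cand u (lab u) c p ∧ lab u c = lab u p ∧ ∀ q < p, ¬ cand u (lab u) c q) := by
  intro c
  induction c using Nat.strong_induction_on with
  | _ c ih =>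
    intro h1 hn
    by_cases hu : u c = 0
    · have hex := lab_zero hu (exists_cand h1 hu (hs c hn) (fun x hx hxc =>
        ⟨(ih x hxc hx (by omega)).1, (ih x hxc hx (by omega)).2.1⟩))
      obtain ⟨p, hp, he, hq⟩ := hex
      have hi := ih p hp.2.1 hp.1 (by have := hp.2.1; omega)
      have := hp.2.1
      rw [he]
      exact ⟨hi.1, by omega, hi.2.2.1, fun _ => ⟨p, hp, rfl, hq⟩⟩
    · have := lab_pos hu
      rw [this]
      exact ⟨h1, le_rfl, this, fun h => absurd h hu⟩

lemma lab_lt {c : ℕ} (h1 : 1 ≤ c) (hn : c ≤ n) (hu : u c = 0) : lab u c < c := by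
  obtain ⟨p, hp, he, -⟩ := (lab_basic hs c h1 hn).2.2.2 hu
  have := hp.2.1
  have := (lab_basic hs p hp.1 (by omega)).2.1
  omega

lemma lab_count : ∀ j ≤ n, ∀ m,
    ((Finset.Icc 1 j).filter (fun x => lab u x = m)).card ≤ u m := by
  intro j
  induction j with
  | zero => intro _ m; simp
  | succ j ih =>
    intro hj m
    have hI : Finset.Icc 1 (j+1) = insert (j+1) (Finset.Icc 1 j) := by
      ext; simp; omega
    rw [hI, Finset.filter_insert]
    split_ifs with hm
    · refine (Finset.card_insert_le _ _).trans ?_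
      by_cases hu : u (j+1) = 0
      · obtain ⟨p, hp, he, -⟩ := (lab_basic hs (j+1) (by omega) hj).2.2.2 hu
        have h4 := hp.2.2.2
        have : Finset.Ico 1 (j+1) = Finset.Icc 1 j := by ext; simp
        rw [← he, hm, this] at h4
        omega
      · have h5 := lab_pos hu
        rw [h5] at hm
        subst hm
        have : (Finset.Icc 1 j).filter (fun x => lab u x = j+1) = ∅ := by
          rw [Finset.filter_eq_empty_iff]
          intro x hx
          rw [Finset.mem_Icc] at hx
          have := (lab_basic hs x hx.1 (by omega)).2.1
          omega
        rw [this]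
        simp
        omega
    · exact ih (by omega) m

lemma lab_count_eq (ht : ∑ k ∈ Finset.Icc 1 n, u k = n) {m : ℕ} (hm : m ∈ Finset.Icc 1 n) :
    ((Finset.Icc 1 n).filter (fun x => lab u x = m)).card = u m := by
  have h2 : (Finset.Icc 1 n).card = ∑ m ∈ Finset.Icc 1 n,
      ((Finset.Icc 1 n).filter (fun x => lab u x = m)).card := by
    apply Finset.card_eq_sum_card_fiberwise
    intro x hx
    simp only [Finset.coe_Icc, Set.mem_Icc] at hx ⊢
    have := lab_basic hs x hx.1 hx.2
    omega
  rw [Nat.card_Icc, Nat.add_sub_cancel] at h2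
  have h3 := (Finset.sum_eq_sum_iff_of_le (s := Finset.Icc 1 n)
    (fun m _ => lab_count hs n le_rfl m)).1 (by omega)
  exact h3 m hm

lemma exists_part (ht : ∑ k ∈ Finset.Icc 1 n, u k = n) :
    ∃ π : SetPartitionOn n, Nonnesting π ∧ ∀ k ∈ Finset.Icc 1 n, W π k = u k := by
  classical
  let π : SetPartitionOn n := Finpartition.ofSetSetoid (Setoid.ker (lab u)) (Finset.Icc 1 n)
  have hrel : ∀ x y, x ∈ π.part y ↔ y ∈ Finset.Icc 1 n ∧ x ∈ Finset.Icc 1 n ∧ lab u y = lab u x :=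
    fun x y => Finpartition.mem_part_ofSetSetoid_iff_rel _
  refine ⟨π, ?_, ?_⟩
  · rintro ⟨a, b, c, d, hab, hbc, hcd, h1, h2⟩
    rw [isArc_iff, hrel] at h1 h2
    obtain ⟨-, ⟨hd, ha, hda⟩, had⟩ := h1
    obtain ⟨-, ⟨hc, hb, hcb⟩, hbc'⟩ := h2
    simp only [hrel] at had hbc'
    have hd' := Finset.mem_Icc.1 hd
    have ha' := Finset.mem_Icc.1 ha
    have hc' := Finset.mem_Icc.1 hc
    have hb' := Finset.mem_Icc.1 hb
    have hu : u c = 0 := by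
      by_contra hu
      have := lab_pos hu
      have := (lab_basic hs b hb'.1 hb'.2).2.1
      omega
    obtain ⟨p, hp, he, hq⟩ := (lab_basic hs c hc'.1 hc'.2).2.2.2 hu
    have hpb : p = b := by
      rcases lt_trichotomy p b with h | h | h
      · exact absurd (hcb.symm.trans he) (hp.2.2.1 b h hbc)
      · exact h
      · have h6 := hp.1
        have h7 := hp.2.1
        exact absurd ⟨h, h7⟩ (hbc' p ⟨hc, by simp; omega, he⟩)
    subst hpb
    apply hq a hab
    refine ⟨ha'.1, by omega, fun y hy hyc h => ?_, ?_⟩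
    · exact had y ⟨hd, by simp; omega, hda.trans h.symm⟩ ⟨hy, by omega⟩
    · refine lt_of_lt_of_le (Finset.card_lt_card ?_) (lab_count hs n le_rfl (lab u a))
      rw [Finset.ssubset_iff_of_subset]
      · refine ⟨d, by simp [hda]; omega, by simp; omega⟩
      · intro x
        simp only [Finset.mem_filter, Finset.mem_Ico, Finset.mem_Icc]
        intro h; exact ⟨by omega, h.2⟩
  · intro k hk
    have hk' := Finset.mem_Icc.1 hk
    by_cases hu : u k = 0
    · have h1 := lab_lt hs hk'.1 hk'.2 hu
      have h2 := lab_basic hs k hk'.1 hk'.2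
      rw [hu]
      exact W_eq_zero (x := lab u k) ((hrel _ _).2 ⟨hk, by simp; omega, h2.2.2.1.symm⟩) h1
    · have h1 := lab_pos hu
      rw [W_eq, ← lab_count_eq hs ht hk]
      · congr 1
        ext x
        rw [hrel, h1, Finset.mem_filter]
        exact ⟨fun h => ⟨h.2.1, h.2.2.symm⟩, fun h => ⟨hk, h.1, h.2.symm⟩⟩
      · intro x hx
        rw [hrel, h1] at hx
        have hx' := Finset.mem_Icc.1 hx.2.1
        have := (lab_basic hs x hx'.1 hx'.2).2.1
        omega
end

/-- words with prescribed content -/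
def Cont {N : ℕ} (c : Fin N → ℕ) (w : Fin N → Fin N) : Prop :=
  ∀ s, Fintype.card {k // w k = s} = c s

lemma exists_perm {N : ℕ} {c : Fin N → ℕ} {w w0 : Fin N → Fin N} (h : Cont c w)
    (h0 : Cont c w0) : ∃ τ : Equiv.Perm (Fin N), w0 ∘ τ = w := by
  have e : ∀ s, {k // w k = s} ≃ {k // w0 k = s} := fun s =>
    Fintype.equivOfCardEq ((h s).trans (h0 s).symm)
  refine ⟨(Equiv.sigmaFiberEquiv w).symm.trans ((Equiv.sigmaCongrRight e).trans
    (Equiv.sigmaFiberEquiv w0)), ?_⟩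
  ext k
  have := (e (w k) ⟨k, rfl⟩).2
  exact congrArg Fin.val this

lemma cont_comp {N : ℕ} {c : Fin N → ℕ} {w : Fin N → Fin N} (h : Cont c w)
    (τ : Equiv.Perm (Fin N)) : Cont c (w ∘ τ) := by
  intro s
  rw [← h s]
  exact Fintype.card_congr (τ.subtypeEquiv fun a => Iff.rfl)

lemma exists_cont {N : ℕ} {c : Fin N → ℕ} (hc : ∑ s, c s = N) : ∃ w, Cont c w := by
  have e : Fin N ≃ (Σ s, Fin (c s)) := Fintype.equivOfCardEq (by simp [hc])
  refine ⟨fun k => (e k).1, fun s => ?_⟩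
  have e2 : {k // (e k).1 = s} ≃ {p : (Σ s, Fin (c s)) // p.1 = s} :=
    e.subtypeEquiv fun a => Iff.rfl
  rw [Fintype.card_congr (e2.trans (Equiv.sigmaSubtype s)), Fintype.card_fin]

open Classical in
lemma card_cont {N : ℕ} {c : Fin N → ℕ} (hc : ∑ s, c s = N) :
    (Finset.univ.filter (Cont c)).card * ∏ s, (c s).factorial = N.factorial := by
  obtain ⟨w0, h0⟩ := exists_cont hc
  have h1 : (Finset.univ : Finset (Equiv.Perm (Fin N))).card =
      ∑ w ∈ Finset.univ.filter (Cont c),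
        ((Finset.univ : Finset (Equiv.Perm (Fin N))).filter (fun σ : Equiv.Perm (Fin N) => w0 ∘ ⇑σ = w)).card := by
    apply Finset.card_eq_sum_card_fiberwise
    intro σ _
    simpa using cont_comp h0 σ
  have h2 : ∀ w ∈ Finset.univ.filter (Cont c),
      ((Finset.univ : Finset (Equiv.Perm (Fin N))).filter (fun σ : Equiv.Perm (Fin N) => w0 ∘ ⇑σ = w)).card =
        ∏ s, (c s).factorial := by
    intro w hw
    simp only [Finset.mem_filter, Finset.mem_univ, true_and] at hw
    obtain ⟨τ, rfl⟩ := exists_perm hw h0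
    have h3 := DomMulAct.stabilizer_card w0
    simp only [h0 _] at h3
    rw [← h3, Fintype.card_subtype]
    symm
    apply Finset.card_bij (fun g _ => g * τ)
    · intro g hg
      simp only [Finset.mem_filter, Finset.mem_univ, true_and] at hg ⊢
      rw [Equiv.Perm.coe_mul, ← Function.comp_assoc, hg]
    · intro a _ b _ h
      exact mul_right_cancel h
    · intro σ hσ
      simp only [Finset.mem_filter, Finset.mem_univ, true_and] at hσ
      refine ⟨σ * τ⁻¹, ?_, by simp⟩
      simp only [Finset.mem_filter, Finset.mem_univ, true_and]
      rw [Equiv.Perm.coe_mul, ← Function.comp_assoc, hσ]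
      ext k
      simp
  rw [Finset.sum_congr rfl h2, Finset.sum_const, smul_eq_mul, Finset.card_univ,
    Fintype.card_perm, Fintype.card_fin] at h1
  exact h1.symm

/-- the Lukasiewicz condition -/
def Good (w : Fin (n+1) → Fin (n+1)) : Prop :=
  ∀ j ≤ n, j ≤ ∑ i ∈ Finset.range j, (w (Fin.ofNat (n+1) i)).1

/-- rotation -/
def rot (k : Fin (n+1)) (w : Fin (n+1) → Fin (n+1)) : Fin (n+1) → Fin (n+1) :=
  w ∘ (Equiv.addRight k)

lemma good_rot (w : Fin (n+1) → Fin (n+1)) (S : ℕ → ℤ)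
    (hS : ∀ m, S m = ∑ i ∈ Finset.range m, ((w (Fin.ofNat (n+1) i)).1 : ℤ) - m)
    (k : Fin (n+1)) : Good (rot k w) ↔ ∀ j ≤ n, S k ≤ S (k + j) := by
  unfold Good
  apply forall_congr'
  intro j
  apply imp_congr_right
  intro _
  rw [hS, hS, Finset.sum_range_add]
  have : ∑ i ∈ Finset.range j, (rot k w (Fin.ofNat (n+1) i)).1 =
      ∑ i ∈ Finset.range j, (w (Fin.ofNat (n+1) (k.1 + i))).1 := by
    apply Finset.sum_congr rfl
    intro i _
    have : (Fin.ofNat (n+1) i) + k = Fin.ofNat (n+1) (k.1 + i) := by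
      ext
      simp [Fin.val_add, Nat.add_comm]
    simp only [rot, Function.comp_apply, Equiv.coe_addRight, this]
  rw [this]
  zify
  constructor <;> intro h <;> linarith

lemma cycle (w : Fin (n+1) → Fin (n+1)) (hw : ∑ i, (w i).1 = n) : ∃! k, Good (rot k w) := by
  obtain ⟨S, hS⟩ : ∃ S : ℕ → ℤ, ∀ m, S m =
    ∑ i ∈ Finset.range m, ((w (Fin.ofNat (n+1) i)).1 : ℤ) - m := ⟨_, fun m => rfl⟩
  simp only [good_rot w S hS]
  have hper : ∀ m, S (m + (n+1)) = S m - 1 := by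
    intro m
    rw [hS, hS, Nat.add_comm m, Finset.sum_range_add]
    have h1 : ∑ i ∈ Finset.range (n+1), ((w (Fin.ofNat (n+1) i)).1 : ℤ) = n := by
      rw [Finset.sum_range]
      have : ∀ i : Fin (n+1), Fin.ofNat (n+1) i.1 = i := fun i => by ext; simp
      simp only [this]
      exact_mod_cast hw
    have h2 : ∀ i, Fin.ofNat (n+1) (n + 1 + i) = Fin.ofNat (n+1) i := fun i => by ext; simp
    simp only [h2, h1]
    push_cast
    ring
  -- reformulate
  have hiff : ∀ k : Fin (n+1), (∀ j ≤ n, S k ≤ S (k + j)) ↔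
      ((∀ m : Fin (n+1), S k ≤ S m) ∧ ∀ m : Fin (n+1), m < k → S k < S m) := by
    intro k
    constructor
    · intro h
      have h2 : ∀ m : Fin (n+1), m < k → S k < S m := by
        intro m hm
        have hm' : m.1 < k.1 := hm
        have := h (m + (n+1) - k) (by omega)
        have e : k.1 + (m.1 + (n+1) - k.1) = m.1 + (n+1) := by omega
        rw [e, hper] at this
        linarith
      refine ⟨fun m => ?_, h2⟩
      rcases lt_or_ge m k with hm | hm
      · exact (h2 m hm).le
      · have hm' : k.1 ≤ m.1 := hm
        have := h (m - k) (by omega)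
        rwa [Nat.add_sub_cancel' hm'] at this
    · rintro ⟨h1, h2⟩ j hj
      rcases Nat.lt_or_ge (k + j) (n+1) with h | h
      · exact h1 ⟨k + j, h⟩
      · have := h2 ⟨k + j - (n+1), by omega⟩ (by rw [Fin.lt_def]; simp only; omega)
        have e : k.1 + j = (k.1 + j - (n+1)) + (n+1) := by omega
        rw [e, hper]
        simp only at this
        linarith
  simp only [hiff]
  -- first argmin
  obtain ⟨k0, hk0⟩ := Finite.exists_min (fun k : Fin (n+1) => S k)
  have hex : ∃ m : ℕ, ∃ h : m < n + 1, ∀ l : Fin (n+1), S m ≤ S l := ⟨k0, k0.2, hk0⟩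
  classical
  obtain ⟨hlt, hmin⟩ := Nat.find_spec hex
  refine ⟨⟨Nat.find hex, hlt⟩, ⟨hmin, fun m hm => ?_⟩, ?_⟩
  · have := Nat.find_min hex (m := m.1) hm
    push Not at this
    obtain ⟨l, hl⟩ := this m.2
    exact lt_of_le_of_lt (hmin l) hl
  · rintro k ⟨h1, h2⟩
    rcases lt_trichotomy k ⟨Nat.find hex, hlt⟩ with h | h | h
    · exact absurd ⟨k.2, h1⟩ (Nat.find_min hex (m := k.1) h)
    · exact h
    · have := h2 _ h
      have := hmin k
      simp only at *
      linarith

lemma cont_sum {c : Fin (n+1) → ℕ} {w : Fin (n+1) → Fin (n+1)} (h : Cont c w) :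
    ∑ i, (w i).1 = ∑ s, s.1 * c s := by
  rw [← Finset.sum_fiberwise (Finset.univ) w (fun i => (w i).1)]
  refine Finset.sum_congr rfl fun s _ => ?_
  rw [← h s, Fintype.card_subtype, Finset.sum_congr rfl (g := fun _ => s.1), Finset.sum_const,
    smul_eq_mul, mul_comm]
  intro x hx
  simp at hx
  rw [hx]

open Classical in
lemma card_good {c : Fin (n+1) → ℕ} (hc : ∑ s, c s = n + 1) (hc' : ∑ s, s.1 * c s = n) :
    (Finset.univ.filter (fun w : Fin (n+1) → Fin (n+1) => Cont c w ∧ Good w)).card *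
      ∏ s, (c s).factorial = n.factorial := by
  have h1 := card_cont hc
  have h2 : (Finset.univ.filter (Cont c)).card = (n+1) *
    (Finset.univ.filter (fun w : Fin (n+1) → Fin (n+1) => Cont c w ∧ Good w)).card := by
    calc (Finset.univ.filter (Cont c)).card
        = ∑ w ∈ Finset.univ.filter (Cont c),
          ((Finset.univ : Finset (Fin (n+1))).filter (fun k => Good (rot k w))).card := by
          rw [Finset.card_eq_sum_ones]
          refine Finset.sum_congr rfl fun w hw => ?_
          simp only [Finset.mem_filter, Finset.mem_univ, true_and] at hw
          obtain ⟨k, hk, hk'⟩ := cycle w ((cont_sum hw).trans hc')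
          symm
          rw [Finset.card_eq_one]
          refine ⟨k, ?_⟩
          ext l
          simp only [Finset.mem_filter, Finset.mem_univ, true_and, Finset.mem_singleton]
          exact ⟨hk' l, fun h => h ▸ hk⟩
      _ = ∑ k : Fin (n+1), ((Finset.univ.filter (Cont c)).filter
            (fun w => Good (rot k w))).card := by
          exact Finset.sum_card_bipartiteAbove_eq_sum_card_bipartiteBelow
            (fun w k => Good (rot k w))
      _ = ∑ k : Fin (n+1),
          (Finset.univ.filter (fun w : Fin (n+1) → Fin (n+1) => Cont c w ∧ Good w)).card := by
          refine Finset.sum_congr rfl fun k _ => ?_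
          apply Finset.card_bij (fun w _ => rot k w)
          · intro w hw
            simp only [Finset.mem_filter, Finset.mem_univ, true_and] at hw ⊢
            exact ⟨cont_comp hw.1 _, hw.2⟩
          · intro a _ b _ h
            exact (Equiv.addRight k).surjective.injective_comp_right h
          · intro w hw
            simp only [Finset.mem_filter, Finset.mem_univ, true_and] at hw
            have e : rot k (w ∘ (Equiv.addRight k).symm) = w := by
              ext i; simp [rot]
            refine ⟨w ∘ (Equiv.addRight k).symm, ?_, e⟩
            simp only [Finset.mem_filter, Finset.mem_univ, true_and]
            rw [e]
            exact ⟨cont_comp hw.1 _, hw.2⟩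
      _ = _ := by simp
  rw [h2, Nat.factorial_succ, mul_assoc] at h1
  exact Nat.eq_of_mul_eq_mul_left (Nat.succ_pos n) h1

lemma sum_shift (f : ℕ → ℕ) (j : ℕ) :
    ∑ k ∈ Finset.Icc 1 j, f k = ∑ i ∈ Finset.range j, f (i + 1) := by
  induction j with
  | zero => simp
  | succ j ih => rw [Finset.sum_Icc_succ_top (by omega), Finset.sum_range_succ, ih]

lemma cont_of_succ {c : Fin (n+1) → ℕ} (hc : ∑ s, c s = n + 1) {w : Fin (n+1) → Fin (n+1)}
    (h : ∀ i : Fin n, Fintype.card {k // w k = i.succ} = c i.succ) : Cont c w := by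
  have h1 : (Finset.univ : Finset (Fin (n+1))).card = ∑ s : Fin (n+1),
      ((Finset.univ : Finset (Fin (n+1))).filter (fun k => w k = s)).card :=
    Finset.card_eq_sum_card_fiberwise (fun _ _ => by simp)
  simp only [← Fintype.card_subtype] at h1
  rw [Fin.sum_univ_succ] at h1 hc
  simp only [h] at h1
  rw [Finset.card_univ, Fintype.card_fin] at h1
  intro s
  refine Fin.cases ?_ h s
  omega

/-- word of a partition -/
def word (π : SetPartitionOn n) (k : Fin (n+1)) : Fin (n+1) :=
  ⟨W π (k.1 + 1), Nat.lt_succ_of_le (W_le π _)⟩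

lemma word_count (π : SetPartitionOn n) (i : Fin n) :
    Fintype.card {k // word π k = i.succ} =
      (π.parts.filter (fun B => B.card = i.1 + 1)).card := by
  rw [← W_count π _ (Nat.succ_pos _), Fintype.card_subtype]
  congr 1
  ext k
  simp [word, Fin.ext_iff]

lemma word_good (π : SetPartitionOn n) : Good (word π) := by
  intro j hj
  refine (W_sum π hj).trans (le_of_eq ?_)
  rw [sum_shift]
  refine Finset.sum_congr rfl fun i hi => ?_
  have : i < n + 1 := by have := Finset.mem_range.1 hi; omega
  simp [word, Nat.mod_eq_of_lt this]

lemma word_surj {w : Fin (n+1) → Fin (n+1)} (hg : Good w) (hw : ∑ i, (w i).1 = n) :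
    ∃ π : SetPartitionOn n, Nonnesting π ∧ word π = w := by
  let u : ℕ → ℕ := fun k => (w (Fin.ofNat (n+1) (k-1))).1
  have hu : ∀ j, ∑ k ∈ Finset.Icc 1 j, u k =
      ∑ i ∈ Finset.range j, (w (Fin.ofNat (n+1) i)).1 := by
    intro j
    rw [sum_shift]
    rfl
  have hid : ∀ i : Fin (n+1), Fin.ofNat (n+1) i.1 = i := fun i => by ext; simp
  have htot : ∑ i ∈ Finset.range (n+1), (w (Fin.ofNat (n+1) i)).1 = n := by
    rw [Finset.sum_range]
    simp only [hid]
    exact hw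
  rw [Finset.sum_range_succ] at htot
  have hn := hg n le_rfl
  obtain ⟨π, hN, hW⟩ := exists_part (n := n) (u := u) (fun j hj => by rw [hu]; exact hg j hj)
    (by rw [hu]; omega)
  refine ⟨π, hN, ?_⟩
  funext k
  ext
  change W π (k.1 + 1) = _
  rcases Nat.lt_or_ge k.1 n with h | h
  · rw [hW _ (by simp; omega)]
    change (w (Fin.ofNat (n+1) k.1)).1 = _
    rw [hid]
  · rw [W_out π (by omega)]
    have hk : Fin.ofNat (n+1) n = k := by
      have : n = k.1 := by omega
      conv_lhs => rw [show Fin.ofNat (n+1) n = Fin.ofNat (n+1) k.1 from congrArg _ this]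
      exact hid k
    rw [hk] at htot
    omega

end NN

/-- The number `N` of nonnesting partitions of `[n]` of type `r` satisfies
`N · (n - |r| + 1)! · r! = n!`. -/
theorem card_nonnesting_of_type (n : ℕ) (hn : 1 ≤ n) (r : Fin n → ℕ)
    (hrv : ∑ i, (i.1 + 1) * r i = n) :
    Nat.card {π : SetPartitionOn n // Nonnesting π ∧ HasType π r} *
      (n - (∑ i, r i) + 1).factorial * ∏ i, (r i).factorial = n.factorial := by
  classical
  have hle : ∑ i, r i ≤ n := by
    conv_rhs => rw [← hrv]
    exact Finset.sum_le_sum fun i _ => Nat.le_mul_of_pos_left _ (Nat.succ_pos _)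
  let c : Fin (n+1) → ℕ := Fin.cons (n - (∑ i, r i) + 1) r
  have hc : ∑ s, c s = n + 1 := by
    rw [Fin.sum_univ_succ]
    simp only [c, Fin.cons_zero, Fin.cons_succ]
    omega
  have hc' : ∑ s, s.1 * c s = n := by
    rw [Fin.sum_univ_succ]
    simp only [c, Fin.cons_zero, Fin.cons_succ, Fin.val_zero, Fin.val_succ, zero_mul, zero_add]
    exact hrv
  have hcs : ∀ i : Fin n, c i.succ = r i := fun i => by simp [c]
  have hmain := NN.card_good hc hc'
  rw [Fin.prod_univ_succ] at hmain
  simp only [hcs] at hmain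
  rw [show c 0 = n - (∑ i, r i) + 1 from rfl, ← mul_assoc] at hmain
  rw [← hmain]
  congr 2
  rw [← Fintype.card_subtype, ← Nat.card_eq_fintype_card]
  apply Nat.card_eq_of_bijective
    (fun π : {π : SetPartitionOn n // Nonnesting π ∧ HasType π r} =>
      (⟨NN.word π.1, NN.cont_of_succ hc (fun i => by
        rw [NN.word_count, hcs]; exact π.2.2 i), NN.word_good π.1⟩ :
        {w : Fin (n+1) → Fin (n+1) // NN.Cont c w ∧ NN.Good w}))
  constructor
  · rintro ⟨π, h1, h2⟩ ⟨π', h1', h2'⟩ h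
    simp only [Subtype.mk.injEq] at h
    refine Subtype.ext (NN.W_inj h1 h1' fun k hk => ?_)
    have hk' := Finset.mem_Icc.1 hk
    have := congrArg Fin.val (congrFun h ⟨k - 1, by omega⟩)
    simpa [NN.word, Nat.sub_add_cancel hk'.1] using this
  · rintro ⟨w, hw, hg⟩
    obtain ⟨π, hN, rfl⟩ := NN.word_surj hg ((NN.cont_sum hw).trans hc')
    refine ⟨⟨π, hN, fun i => ?_⟩, rfl⟩
    rw [← NN.word_count, hw, hcs]
end

section
/- Let n ≥ 1 and let r = (r_1, …, r_n) ∈ ℕ^n satisfy r_1 + 2r_2 + ⋯ + n·r_n = n, and set |r| = r_1 + ⋯ + r_n. Then the number N of Dyck paths of length 2n with ascent type r satisfies N · (n − |r| + 1)! · r_1! r_2! ⋯ r_n! = n!. -/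
/-- A Dyck path of length `2n`: a list of `2n` steps (`true` = U, `false` = D) with `n` U's
and `n` D's such that every prefix has at least as many U's as D's. -/
def IsDyckPath (n : ℕ) (l : List Bool) : Prop :=
  l.length = 2 * n ∧ l.count true = n ∧ l.count false = n ∧
    ∀ k, (l.take k).count false ≤ (l.take k).count true

/-- The path `l` has ascent type `r = (r_1, …, r_n)`: for each `i`, the number of maximal
consecutive runs of U-steps of length `i` is `r_i`. -/
def HasAscentType (n : ℕ) (l : List Bool) (r : Fin n → ℕ) : Prop :=
  ∀ i : Fin n, ((l.splitOn false).map List.length).count (i.1 + 1) = r i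

open Finset in
theorem perms_card (S : Finset ℕ) (m : ℕ) : ∀ M : Multiset ℕ, M.card = m → M.toFinset ⊆ S →
    M.lists.toFinset.card * ∏ b ∈ S, (M.count b).factorial = m.factorial := by
  induction m with
  | zero =>
    intro M hM _
    rw [Multiset.card_eq_zero] at hM
    subst hM
    have : (0 : Multiset ℕ).lists.toFinset = {[]} := by
      ext l; simp [Multiset.mem_lists_iff, eq_comm]
    rw [this]; simp
  | succ m ih =>
    intro M hM hS
    have key : M.lists.toFinset =
        M.toFinset.biUnion (fun a => ((M.erase a).lists.toFinset).image (List.cons a)) := by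
      ext l
      simp only [Multiset.mem_toFinset, Multiset.mem_lists_iff, mem_biUnion, mem_image,
        Multiset.quot_mk_to_coe]
      constructor
      · intro h
        cases l with
        | nil => subst h; simp at hM
        | cons a t =>
          refine ⟨a, by simp [h], t, by simp [h], rfl⟩
      · rintro ⟨a, ha, t, ht, rfl⟩
        rw [← Multiset.cons_coe, ← ht, Multiset.cons_erase ha]
    rw [key, card_biUnion, sum_mul]
    · have : ∀ a ∈ M.toFinset, (((M.erase a).lists.toFinset).image (List.cons a)).card *
          ∏ b ∈ S, (M.count b).factorial = M.count a * m.factorial := by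
        intro a ha
        have ha' : a ∈ M := by simpa using ha
        rw [card_image_of_injective _ (List.cons_injective)]
        have h1 := ih (M.erase a) (by rw [Multiset.card_erase_of_mem ha', hM]; rfl)
          (fun x hx => hS (by
            simp only [Multiset.mem_toFinset] at hx ⊢
            exact Multiset.mem_of_mem_erase hx))
        rw [← h1]
        have haS := hS ha
        rw [← mul_prod_erase S _ haS, ← mul_prod_erase S (fun b => ((M.erase a).count b).factorial) haS]
        have h2 : ∏ b ∈ S.erase a, (M.count b).factorial
            = ∏ b ∈ S.erase a, ((M.erase a).count b).factorial := by
          refine prod_congr rfl fun b hb => ?_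
          rw [Multiset.count_erase_of_ne (ne_of_mem_erase hb)]
        rw [h2, Multiset.count_erase_self]
        have hp : M.count a ≠ 0 := by
          rw [Multiset.count_ne_zero]; exact ha'
        rw [← Nat.mul_factorial_pred hp]
        ring
      rw [sum_congr rfl this, ← sum_mul, Multiset.toFinset_sum_count_eq, hM, Nat.factorial_succ]
    · intro a _ b _ hab
      rw [Function.onFun, disjoint_left]
      intro l h1 h2
      simp only [mem_image] at h1 h2
      obtain ⟨t, _, rfl⟩ := h1
      obtain ⟨t', _, h⟩ := h2
      exact hab (by injection h with h _; exact h.symm)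

/-- good sequences -/
def GoodSeq (n : ℕ) (a : List ℕ) : Prop := ∀ k, k < n + 1 → k ≤ (a.take k).sum

theorem good_rot_unique (n j : ℕ) (g : List ℕ) (hl : g.length = n + 1) (hs : g.sum = n)
    (hg : GoodSeq n g) (hj : j < n + 1) (hr : GoodSeq n (g.rotate j)) : j = 0 := by
  by_contra h0
  have h1 := hg j hj
  have h2 := hr (n + 1 - j) (by omega)
  rw [List.rotate_eq_drop_append_take (by omega), List.take_left' (by simp [hl])] at h2
  have := List.sum_take_add_sum_drop g j
  omega

theorem exists_good_rot (n : ℕ) (l : List ℕ) (hl : l.length = n + 1) (hs : l.sum = n) :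
    ∃ m, m ≤ n + 1 ∧ GoodSeq n (l.rotate m) := by
  classical
  let f : ℕ → ℤ := fun k => ((l.take k).sum : ℤ) - k
  have hex : ∃ m, m ≤ n + 1 ∧ ∀ k, k ≤ n + 1 → f m ≤ f k := by
    obtain ⟨m, hm, h⟩ := Finset.exists_min_image (Finset.range (n + 2)) f ⟨0, by simp⟩
    refine ⟨m, by simp at hm; omega, fun k hk => h k (by simp; omega)⟩
  have hm := Nat.find_spec hex
  have hmin := fun j => @Nat.find_min _ _ hex j
  set m := Nat.find hex
  obtain ⟨hmn, hm⟩ := hm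
  have hlt : ∀ j, j < m → f m < f j := by
    intro j hj
    by_contra hc
    exact hmin j hj ⟨by omega, fun k hk => le_trans (not_lt.mp hc) (hm k hk)⟩
  have hfn : f (n + 1) = -1 := by
    simp only [f]
    rw [List.take_of_length_le (by omega), hs]; push_cast; ring
  refine ⟨m, hmn, ?_⟩
  intro k hk
  rw [List.rotate_eq_drop_append_take (by omega), List.take_append]
  have hsplit := List.sum_take_add_sum_drop l m
  simp only [List.length_drop, List.sum_append, List.take_take, hl]
  by_cases hkm : k ≤ n + 1 - m
  · have h1 := hm (m + k) (by omega)
    simp only [f] at h1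
    rw [List.take_add, List.sum_append] at h1
    simp only [Nat.cast_add] at h1
    omega
  · have h1 := hlt (k - (n + 1 - m)) (by omega)
    simp only [f] at h1 hfn
    rw [List.take_of_length_le (by simp; omega), min_eq_left (by omega)]
    omega

theorem cycle_card (n : ℕ) (M : Multiset ℕ) (hc : M.card = n + 1) (hs : M.sum = n)
    (A : Finset (List ℕ)) (hA : ∀ l, l ∈ A ↔ (l : Multiset ℕ) = M ∧ GoodSeq n l) :
    A.card * (n + 1) = M.lists.toFinset.card := by
  have hlen : ∀ l : List ℕ, (l : Multiset ℕ) = M → l.length = n + 1 := by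
    rintro l rfl; simpa using hc
  have hsum : ∀ l : List ℕ, (l : Multiset ℕ) = M → l.sum = n := by
    rintro l rfl; simpa using hs
  have hrot : ∀ (l : List ℕ) k, ((l.rotate k : List ℕ) : Multiset ℕ) = (l : Multiset ℕ) := by
    intro l k; exact Multiset.coe_eq_coe.2 (List.rotate_perm l k)
  have hcard : A.card * (n + 1) = (A ×ˢ Finset.range (n + 1)).card := by simp
  rw [hcard]
  have aux : ∀ g ∈ A, ∀ g' ∈ A, ∀ k k', k ≤ k' → k' < n + 1 → g.rotate k = g'.rotate k' →
      g = g' ∧ k = k' := by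
    intro g hg g' hg' k k' hk hk' h
    rw [hA] at hg hg'
    have h1 : g = g'.rotate (k' - k) := by
      apply List.rotate_injective k
      simp only [List.rotate_rotate]
      rw [Nat.sub_add_cancel hk, h]
    have h2 := good_rot_unique n (k' - k) g' (hlen _ hg'.1) (hsum _ hg'.1) hg'.2 (by omega)
      (h1 ▸ hg.2)
    rw [h2, List.rotate_zero] at h1
    exact ⟨h1, by omega⟩
  apply Finset.card_bij (fun p _ => p.1.rotate p.2)
  · rintro ⟨g, k⟩ hp
    simp only [Finset.mem_product] at hp
    simp only [Multiset.mem_toFinset, Multiset.mem_lists_iff, Multiset.quot_mk_to_coe]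
    rw [hrot, ((hA g).1 hp.1).1]
  · rintro ⟨g, k⟩ hp ⟨g', k'⟩ hp' h
    simp only [Finset.mem_product, Finset.mem_range] at hp hp' h
    rcases le_total k k' with hk | hk
    · obtain ⟨rfl, rfl⟩ := aux g hp.1 g' hp'.1 k k' hk hp'.2 h; rfl
    · obtain ⟨rfl, rfl⟩ := aux g' hp'.1 g hp.1 k' k hk hp.2 h.symm; rfl
  · intro l hl
    simp only [Multiset.mem_toFinset, Multiset.mem_lists_iff, Multiset.quot_mk_to_coe] at hl
    have hl := hl.symm
    obtain ⟨m, hm, hgood⟩ := exists_good_rot n l (hlen l hl) (hsum l hl)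
    refine ⟨(l.rotate m, (n + 1 - m) % (n + 1)), ?_, ?_⟩
    · simp only [Finset.mem_product, Finset.mem_range, hA, hrot]
      exact ⟨⟨hl, hgood⟩, Nat.mod_lt _ (by omega)⟩
    · have h3 : (l.rotate m).length = n + 1 := by simp [hlen l hl]
      simp only
      rw [← h3, List.rotate_mod, h3, List.rotate_rotate, Nat.add_sub_cancel' hm, ← hlen l hl,
        List.rotate_length]

/-- ascent lengths -/
def enc (l : List Bool) : List ℕ := (l.splitOn false).map List.length

theorem enc_nil : enc [] = [0] := by simp [enc]

theorem enc_false (l : List Bool) : enc (false :: l) = 0 :: enc l := by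
  simp [enc, List.splitOn_cons_eq_if_modifyHead]

theorem enc_true (l : List Bool) : ∃ x t, enc l = x :: t ∧ enc (true :: l) = (x + 1) :: t := by
  have h := List.splitOn_ne_nil false l
  simp only [enc, List.splitOn_cons_eq_if_modifyHead]
  rcases hh : l.splitOn false with _ | ⟨x, t⟩
  · exact absurd hh h
  · exact ⟨x.length, t.map List.length, by simp, by simp⟩

theorem enc_length (l : List Bool) : (enc l).length = l.count false + 1 := by
  induction l with
  | nil => simp [enc_nil]
  | cons b l ih =>
    cases b
    · simp [enc_false, ih]
    · obtain ⟨x, t, h1, h2⟩ := enc_true l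
      rw [h1] at ih
      rw [h2]; simpa using ih

theorem enc_sum (l : List Bool) : (enc l).sum = l.count true := by
  induction l with
  | nil => simp [enc_nil]
  | cons b l ih =>
    cases b
    · simp [enc_false, ih]
    · obtain ⟨x, t, h1, h2⟩ := enc_true l
      rw [h1] at ih
      rw [h2]; simp at ih ⊢; omega

theorem enc_inj : ∀ l l' : List Bool, enc l = enc l' → l = l' := by
  intro l
  induction l with
  | nil =>
    intro l' h
    have h1 := congrArg List.length h
    have h2 := congrArg List.sum h
    rw [enc_length, enc_length] at h1
    rw [enc_sum, enc_sum] at h2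
    rcases l' with _ | ⟨b, l'⟩
    · rfl
    · cases b <;> simp at h1 h2
  | cons b l ih =>
    intro l' h
    rcases l' with _ | ⟨b', l'⟩
    · have h1 := congrArg List.length h
      have h2 := congrArg List.sum h
      rw [enc_length, enc_length] at h1
      rw [enc_sum, enc_sum] at h2
      cases b <;> simp at h1 h2
    · obtain ⟨x, t, h1, h2⟩ := enc_true l
      obtain ⟨x', t', h1', h2'⟩ := enc_true l'
      cases b <;> cases b'
      · rw [enc_false, enc_false] at h
        rw [ih l' (by injection h)]
      · rw [enc_false, h2'] at h; simp at h
      · rw [enc_false, h2] at h; simp at h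
      · rw [h2, h2'] at h
        rw [ih l' (by rw [h1, h1']; simpa using h)]

theorem enc_surj : ∀ (t : List ℕ) (x : ℕ), ∃ l, enc l = x :: t := by
  have step : ∀ t x, (∃ l, enc l = 0 :: t) → ∃ l, enc l = x :: t := by
    intro t x h
    induction x with
    | zero => exact h
    | succ x ih =>
      obtain ⟨l, hl⟩ := ih
      obtain ⟨y, s, h1, h2⟩ := enc_true l
      rw [hl] at h1
      injection h1 with h3 h4
      exact ⟨true :: l, by rw [h2, h3, h4]⟩
  intro t
  induction t with
  | nil => intro x; exact step _ _ ⟨[], enc_nil⟩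
  | cons y t ih =>
    intro x
    obtain ⟨l, hl⟩ := ih y
    exact step _ _ ⟨false :: l, by rw [enc_false, hl]⟩

theorem enc_prefix (l : List Bool) : ∀ h : ℕ,
    (∀ k, (l.take k).count false ≤ h + (l.take k).count true) ↔
    (∀ k, k < (enc l).length → k ≤ h + ((enc l).take k).sum) := by
  induction l with
  | nil => intro h; simp [enc_nil]
  | cons b l ih =>
    intro h
    have hz : (∀ k, (((b :: l).take k).count false ≤ h + ((b :: l).take k).count true)) ↔
        (∀ k, (((b :: l).take (k + 1)).count false ≤ h + ((b :: l).take (k + 1)).count true)) := by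
      constructor
      · intro H k; exact H (k + 1)
      · intro H k
        cases k with
        | zero => simp
        | succ k => exact H k
    rw [hz]
    cases b
    · rw [enc_false]
      cases h with
      | zero =>
        constructor
        · intro H; have := H 0; simp at this
        · intro H
          have := H 1 (by simp [enc_length])
          simp at this
      | succ h =>
        have e : (∀ k, (((false :: l).take (k + 1)).count false ≤
            h + 1 + ((false :: l).take (k + 1)).count true)) ↔
            (∀ k, (l.take k).count false ≤ h + (l.take k).count true) := by
          refine forall_congr' fun k => ?_
          simp; omega
        rw [e, ih h]
        constructor
        · intro H k hk
          cases k with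
          | zero => simp
          | succ k =>
            have := H k (by simpa using hk)
            simp; omega
        · intro H k hk
          have := H (k + 1) (by simpa using hk)
          simp at this; omega
    · obtain ⟨x, t, h1, h2⟩ := enc_true l
      have e : (∀ k, (((true :: l).take (k + 1)).count false ≤
            h + ((true :: l).take (k + 1)).count true)) ↔
            (∀ k, (l.take k).count false ≤ (h + 1) + (l.take k).count true) := by
        refine forall_congr' fun k => ?_
        simp; omega
      rw [e, ih (h + 1), h1, h2]
      refine forall_congr' fun k => ?_
      cases k with
      | zero => simp
      | succ k => simp; omega

theorem dyck_iff (n : ℕ) (l : List Bool) :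
    IsDyckPath n l ↔ (enc l).length = n + 1 ∧ (enc l).sum = n ∧ GoodSeq n (enc l) := by
  unfold IsDyckPath GoodSeq
  have h := enc_prefix l 0
  simp only [zero_add] at h
  have hl : l.length = l.count false + l.count true := by
    have := List.count_not_add_count l true
    simpa using this.symm
  rw [h, enc_length, enc_sum]
  constructor
  · rintro ⟨_, h2, h3, h4⟩
    rw [h3] at h4
    exact ⟨by omega, h2, h4⟩
  · rintro ⟨h2, h3, h4⟩
    refine ⟨by omega, h3, by omega, ?_⟩
    rw [h2]; exact h4

/-- the multiset of block lengths -/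
def blockM (n : ℕ) (r : Fin n → ℕ) : Multiset ℕ :=
  Multiset.replicate (n + 1 - ∑ i, r i) 0 + ∑ i : Fin n, Multiset.replicate (r i) (i.1 + 1)

theorem sum_r_le (n : ℕ) (r : Fin n → ℕ) (hrv : ∑ i, (i.1 + 1) * r i = n) : ∑ i, r i ≤ n := by
  calc ∑ i, r i ≤ ∑ i, (i.1 + 1) * r i := Finset.sum_le_sum fun i _ => by nlinarith [Nat.zero_le (i.1 * r i)]
    _ = n := hrv

theorem blockM_card (n : ℕ) (r : Fin n → ℕ) (hrv : ∑ i, (i.1 + 1) * r i = n) :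
    (blockM n r).card = n + 1 := by
  have := sum_r_le n r hrv
  simp [blockM]; omega

theorem blockM_sum (n : ℕ) (r : Fin n → ℕ) (hrv : ∑ i, (i.1 + 1) * r i = n) :
    (blockM n r).sum = n := by
  simp only [blockM, Multiset.sum_add, Multiset.sum_replicate, smul_zero, zero_add, Multiset.sum_sum]
  conv_rhs => rw [← hrv]
  exact Finset.sum_congr rfl fun i _ => by simp [mul_comm]

theorem blockM_count_zero (n : ℕ) (r : Fin n → ℕ) :
    (blockM n r).count 0 = n + 1 - ∑ i, r i := by
  simp [blockM, Multiset.count_sum', Multiset.count_replicate]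

theorem blockM_count_succ (n : ℕ) (r : Fin n → ℕ) (i : Fin n) :
    (blockM n r).count (i.1 + 1) = r i := by
  simp [blockM, Multiset.count_sum', Multiset.count_replicate, Fin.val_inj]

theorem toFinset_sub (n : ℕ) (M : Multiset ℕ) (hs : M.sum = n) :
    M.toFinset ⊆ Finset.range (n + 1) := by
  intro x hx
  have := Multiset.le_sum_of_mem (Multiset.mem_toFinset.1 hx)
  simp; omega

theorem eq_blockM_iff (n : ℕ) (r : Fin n → ℕ) (hrv : ∑ i, (i.1 + 1) * r i = n) (a : List ℕ) :
    (a : Multiset ℕ) = blockM n r ↔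
      (a.length = n + 1 ∧ a.sum = n ∧ ∀ i : Fin n, a.count (i.1 + 1) = r i) := by
  constructor
  · intro h
    refine ⟨?_, ?_, ?_⟩
    · rw [← blockM_card n r hrv, ← h]; simp
    · conv_rhs => rw [← blockM_sum n r hrv, ← h]
      simp
    · intro i
      rw [← blockM_count_succ n r i, ← h]; simp
  · rintro ⟨h1, h2, h3⟩
    have hS := toFinset_sub n (a : Multiset ℕ) (by simpa using h2)
    have hS' := toFinset_sub n _ (blockM_sum n r hrv)
    have hc : ∀ M : Multiset ℕ, M.toFinset ⊆ Finset.range (n + 1) →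
        M.card = (∑ i : Fin n, M.count (i.1 + 1)) + M.count 0 := by
      intro M hM
      rw [Fin.sum_univ_eq_sum_range (fun i => M.count (i + 1)) n, ← Finset.sum_range_succ' (fun i => M.count i),
        Multiset.sum_count_eq_card]
      intro x hx
      exact hM (Multiset.mem_toFinset.2 hx)
    have c1 := hc _ hS
    have c2 := hc _ hS'
    rw [blockM_card n r hrv] at c2
    simp only [blockM_count_succ] at c2
    simp only [Multiset.coe_card, Multiset.coe_count, h3, h1] at c1
    ext x
    rcases x with _ | x
    · simp only [Multiset.coe_count]; omega
    · by_cases hx : x < n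
      · rw [blockM_count_succ n r ⟨x, hx⟩, ← h3 ⟨x, hx⟩]; simp
      · rw [Multiset.count_eq_zero_of_notMem, Multiset.count_eq_zero_of_notMem]
        · intro hm
          have := hS' (Multiset.mem_toFinset.2 hm)
          simp at this; omega
        · intro hm
          have := hS (Multiset.mem_toFinset.2 hm)
          simp at this; omega

/-- The number `N` of Dyck paths of length `2n` with ascent type `r` satisfies
`N · (n - |r| + 1)! · r! = n!`. -/
theorem card_dyck_of_ascent_type (n : ℕ) (hn : 1 ≤ n) (r : Fin n → ℕ)
    (hrv : ∑ i, (i.1 + 1) * r i = n) :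
    Nat.card {l : List Bool // IsDyckPath n l ∧ HasAscentType n l r} *
      (n - (∑ i, r i) + 1).factorial * ∏ i, (r i).factorial = n.factorial := by
  classical
  set M := blockM n r with hM
  have hcard := blockM_card n r hrv
  have hsum := blockM_sum n r hrv
  have hle := sum_r_le n r hrv
  let A : Finset (List ℕ) := M.lists.toFinset.filter (GoodSeq n)
  have hA : ∀ l, l ∈ A ↔ (l : Multiset ℕ) = M ∧ GoodSeq n l := by
    intro l
    simp only [A, Finset.mem_filter, Multiset.mem_toFinset, Multiset.mem_lists_iff,
      Multiset.quot_mk_to_coe]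
    rw [eq_comm]
  have hiff : ∀ l : List Bool, (IsDyckPath n l ∧ HasAscentType n l r) ↔ enc l ∈ A := by
    intro l
    rw [hA, hM, eq_blockM_iff n r hrv, dyck_iff]
    unfold HasAscentType
    change _ ∧ (∀ i : Fin n, (enc l).count (i.1 + 1) = r i) ↔ _
    tauto
  have hN : Nat.card {l : List Bool // IsDyckPath n l ∧ HasAscentType n l r} = A.card := by
    rw [← Nat.card_eq_finsetCard A]
    refine Nat.card_congr (Equiv.ofBijective (fun l => ⟨enc l.1, (hiff l.1).1 l.2⟩) ⟨?_, ?_⟩)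
    · intro l l' h
      exact Subtype.ext (enc_inj _ _ (congrArg Subtype.val h))
    · rintro ⟨a, ha⟩
      have hlen := ((eq_blockM_iff n r hrv a).1 ((hA a).1 ha).1).1
      rcases a with _ | ⟨x, t⟩
      · simp at hlen
      · obtain ⟨l, hl⟩ := enc_surj t x
        exact ⟨⟨l, (hiff l).2 (hl ▸ ha)⟩, Subtype.ext hl⟩
  have h1 := cycle_card n M hcard hsum A hA
  have h2 := perms_card (Finset.range (n + 1)) (n + 1) M hcard (toFinset_sub n M hsum)
  rw [Finset.prod_range_succ', blockM_count_zero,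
    ← Fin.prod_univ_eq_prod_range (fun i => (M.count (i + 1)).factorial) n, ← h1,
    Nat.factorial_succ] at h2
  simp only [hM, blockM_count_succ] at h2
  rw [hN, show n - (∑ i, r i) + 1 = n + 1 - ∑ i, r i by omega]
  apply Nat.eq_of_mul_eq_mul_left (Nat.succ_pos n)
  rw [Nat.succ_eq_add_one, ← h2]
  ring
end

section
/- Let n > 1 and let r = (r_1, …, r_n) ∈ ℕ^n satisfy r_1 + 2r_2 + ⋯ + n·r_n = n and |r| := r_1 + ⋯ + r_n < n. Then the number N of connected noncrossing set partitions of [n] of type r satisfies N · (n − |r| − 1)! · r_1! r_2! ⋯ r_n! = (n − 2)!. -/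
open Finset

theorem words_exists_perm {m N : ℕ} (f g : Fin m → Fin N)
    (h : ∀ k, #{i | f i = k} = #{i | g i = k}) : ∃ σ : Equiv.Perm (Fin m), g ∘ σ = f := by
  have e : ∀ k, Nonempty ({i // f i = k} ≃ {i // g i = k}) := fun k =>
    ⟨Fintype.equivOfCardEq (by simpa [Fintype.card_subtype] using h k)⟩
  replace e := fun k => (e k).some
  refine ⟨((Equiv.sigmaFiberEquiv f).symm.trans (Equiv.sigmaCongrRight e)).trans
    (Equiv.sigmaFiberEquiv g), ?_⟩
  funext i
  simp only [Function.comp, Equiv.trans_apply]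
  exact (e (f i) ⟨i, rfl⟩).2

theorem words_card {m N : ℕ} (a : Fin N → ℕ) (ha : ∑ k, a k = m) :
    #{f : Fin m → Fin N | ∀ k, #{i | f i = k} = a k} * ∏ k, (a k).factorial = m.factorial := by
  classical
  obtain ⟨f0, hf0⟩ : ∃ f0 : Fin m → Fin N, ∀ k, #{i | f0 i = k} = a k := by
    let e : Fin m ≃ Σ k, Fin (a k) := Fintype.equivOfCardEq (by simp [ha])
    refine ⟨fun i => (e i).1, fun k => ?_⟩
    rw [← Fintype.card_subtype]
    rw [Fintype.card_congr (e.subtypeEquiv (q := fun x => x.1 = k) (fun _ => Iff.rfl))]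
    rw [Fintype.card_congr (Equiv.sigmaSubtype k)]
    simp
  have h1 : Fintype.card (Equiv.Perm (Fin m)) = m.factorial := by
    rw [Fintype.card_perm, Fintype.card_fin]
  rw [← h1, ← Finset.card_univ]
  rw [Finset.card_eq_sum_card_fiberwise (f := fun σ : Equiv.Perm (Fin m) => f0 ∘ σ)
    (t := {f : Fin m → Fin N | ∀ k, #{i | f i = k} = a k})]
  · rw [Finset.sum_congr rfl (g := fun _ => ∏ k, (a k).factorial)]
    · simp
    intro f hf
    simp only [mem_filter, mem_univ, true_and] at hf
    obtain ⟨τ, hτ⟩ := words_exists_perm f f0 (fun k => by rw [hf, hf0])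
    have := DomMulAct.stabilizer_card f0
    simp only [Fintype.card_subtype, hf0] at this
    rw [← this]
    refine Finset.card_bij' (fun σ _ => τ.symm.trans σ) (fun σ _ => τ.trans σ) ?_ ?_ ?_ ?_
    · intro σ hσ
      simp only [mem_filter, mem_univ, true_and] at hσ ⊢
      rw [← hτ] at hσ
      funext i
      have := congrFun hσ (τ.symm i)
      simpa using this
    · intro σ hσ
      simp only [mem_filter, mem_univ, true_and] at hσ ⊢
      rw [← hτ]
      funext i
      have := congrFun hσ (τ i)
      simpa using this
    · intro σ _; ext; simp
    · intro σ _; ext; simp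
  · intro σ _
    simp only [coe_filter, mem_univ, true_and, Set.mem_ofPred_eq]
    intro k
    rw [← hf0 k]
    exact Finset.card_bij (fun i _ => σ i) (by simp) (by simp) (fun b hb => ⟨σ.symm b, by simpa using hb, by simp⟩)

/-- cycle lemma -/
theorem cycle_lemma (m : ℕ) (hm : 0 < m) (S : ℕ → ℤ) (hS : ∀ i, S (i + m) = S i + 1) :
    ∃! s, s < m ∧ ∀ l, 1 ≤ l → l ≤ m → S s < S (s + l) := by
  have key : ∀ s l, 1 ≤ l → l < m → (S s < S (s + l) ↔
      m * S s - s < m * S (s+l) - ((s + l : ℕ) : ℤ)) := by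
    intro s l h1 h2
    push_cast
    constructor
    · intro h
      have : (m:ℤ) * (S s + 1) ≤ m * S (s+l) := by gcongr; omega
      nlinarith
    · intro h
      by_contra h'
      have : (m:ℤ) * S (s+l) ≤ m * S s := by gcongr; omega
      omega
  obtain ⟨s, hs, hmin⟩ := Finset.exists_min_image (range m) (fun s => (m:ℤ) * S s - s) ⟨0, by simpa⟩
  simp only [mem_range] at hs hmin
  have per : ∀ t, (m:ℤ) * S (t + m) - ((t + m : ℕ) : ℤ) = m * S t - t := by
    intro t; rw [hS]; push_cast; ring
  have inj : ∀ s t, s < t → t < m → (m:ℤ) * S s - s ≠ m * S t - t := by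
    intro s t h1 h2 h
    have : (m:ℤ) ∣ ((t - s : ℕ) : ℤ) := ⟨S t - S s, by push_cast [h1.le]; linarith⟩
    have := Nat.le_of_dvd (by omega) (Int.natCast_dvd_natCast.mp this)
    omega
  refine ⟨s, ⟨hs, fun l h1 h2 => ?_⟩, ?_⟩
  · rcases h2.eq_or_lt with rfl | h2
    · rw [hS]; omega
    rw [key s l h1 h2]
    by_cases h : s + l < m
    · exact lt_of_le_of_ne (hmin _ h) (inj _ _ (by omega) h)
    · obtain ⟨t, ht⟩ : ∃ t, s + l = t + m := ⟨s + l - m, by omega⟩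
      rw [ht, per]
      exact lt_of_le_of_ne (hmin _ (by omega)) (inj t s (by omega) hs).symm
  · rintro t ⟨ht, h⟩
    by_contra hne
    have h' := hmin t ht
    rcases lt_or_gt_of_ne hne with hlt | hlt
    · have := (key t (s - t) (by omega) (by omega)).1 (h _ (by omega) (by omega))
      rw [show t + (s - t) = s by omega] at this
      omega
    · have := (key t (s + m - t) (by omega) (by omega)).1 (h _ (by omega) (by omega))
      rw [show t + (s + m - t) = s + m by omega, per] at this
      omega

/-- partial sums of the periodic extension of a word -/
def wsum {p N : ℕ} (f : Fin (p+1) → Fin N) (l : ℕ) : ℤ :=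
  ∑ j ∈ range l, (((f (Fin.ofNat (p+1) j)).val : ℤ) - 1)

def WGood {p N : ℕ} (f : Fin (p+1) → Fin N) : Prop :=
  ∀ l, 1 ≤ l → l ≤ p + 1 → 0 < wsum f l

theorem ofNat_add' (p a b : ℕ) :
    Fin.ofNat (p+1) (a + b) = Fin.ofNat (p+1) a + Fin.ofNat (p+1) b := by
  ext; simp [Fin.val_add]

theorem wsum_rot {p N : ℕ} (f : Fin (p+1) → Fin N) (s l : ℕ) :
    wsum (fun i => f (Fin.ofNat (p+1) s + i)) l = wsum f (s + l) - wsum f s := by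
  unfold wsum
  rw [Finset.sum_range_add]
  simp only [ofNat_add']; ring

theorem wsum_full {p N : ℕ} (f : Fin (p+1) → Fin N) (a : Fin N → ℕ)
    (h : ∀ k, #{i | f i = k} = a k) :
    wsum f (p+1) = ∑ k, (a k : ℤ) * k.val - (p + 1) := by
  unfold wsum
  rw [Finset.sum_range]
  simp only [Finset.sum_sub_distrib]
  congr 1
  · rw [← Finset.sum_fiberwise (g := f) (s := univ)]
    refine Finset.sum_congr rfl fun k _ => ?_
    rw [Finset.sum_congr rfl (g := fun _ => (k.val : ℤ))]
    · simp [h]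
    · intro i hi
      simp only [mem_filter, mem_univ, true_and] at hi
      simp [hi]
  · simp

theorem good_words_card {p N : ℕ} (a : Fin N → ℕ) (ha : ∑ k, a k = p + 1)
    (ha' : ∑ k, a k * k.val = p + 2) :
    Nat.card {f : Fin (p+1) → Fin N // (∀ k, #{i | f i = k} = a k) ∧ WGood f} *
      ∏ k, (a k).factorial = p.factorial := by
  classical
  have hX := words_card a ha
  set X : Finset (Fin (p+1) → Fin N) := {f : Fin (p+1) → Fin N | ∀ k, #{i | f i = k} = a k} with hXd
  have memX : ∀ f, f ∈ X ↔ ∀ k, #{i | f i = k} = a k := by intro f; simp [hXd]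
  have hG : Nat.card {f : Fin (p+1) → Fin N // (∀ k, #{i | f i = k} = a k) ∧ WGood f}
      = #(X.filter WGood) := by
    rw [Nat.card_eq_fintype_card, Fintype.card_subtype]
    congr 1; ext f; simp [memX]
  rw [hG]
  have h1 : ∀ f ∈ X, #((range (p+1)).filter
      (fun s => WGood (fun i => f (Fin.ofNat (p+1) s + i)))) = 1 := by
    intro f hf
    have hfull := wsum_full f a ((memX f).1 hf)
    have hone : wsum f (p+1) = 1 := by
      rw [hfull]
      have : (∑ k, (a k : ℤ) * k.val) = p + 2 := by exact_mod_cast ha'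
      rw [this]; ring
    obtain ⟨s, ⟨hs, hs1⟩, hs2⟩ := cycle_lemma (p+1) (by omega) (wsum f) (fun i => by
      have : wsum f (p+1+i) = wsum f (p+1) + wsum f i := by
        unfold wsum
        rw [Finset.sum_range_add]
        congr 1
        refine Finset.sum_congr rfl fun j _ => ?_
        rw [ofNat_add']
        have : Fin.ofNat (p+1) (p+1) = 0 := by ext; simp
        rw [this, zero_add]
      rw [add_comm, this, hone]; ring)
    rw [Finset.card_eq_one]
    refine ⟨s, ?_⟩
    ext t
    simp only [mem_filter, mem_range, mem_singleton, WGood, wsum_rot, sub_pos]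
    constructor
    · intro h; exact hs2 t h
    · rintro rfl; exact ⟨hs, hs1⟩
  have h2 : ∀ s ∈ range (p+1), #(X.filter
      (fun f => WGood (fun i => f (Fin.ofNat (p+1) s + i)))) = #(X.filter WGood) := by
    intro s _
    have hinv : ∀ (f : Fin (p+1) → Fin N) (t : Fin (p+1)), f ∈ X → (fun i => f (t + i)) ∈ X := by
      intro f t hf
      rw [memX] at hf ⊢
      intro k
      rw [← hf k]
      exact Finset.card_bij (fun i _ => t + i) (by simp) (by simp)
        (fun b hb => ⟨-t + b, by simpa using hb, by simp⟩)
    refine Finset.card_bij' (fun f _ i => f (Fin.ofNat (p+1) s + i))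
      (fun f _ i => f (-Fin.ofNat (p+1) s + i)) ?_ ?_ ?_ ?_
    · intro f hf
      rw [mem_filter] at hf ⊢
      exact ⟨hinv f _ hf.1, hf.2⟩
    · intro f hf
      rw [mem_filter] at hf ⊢
      refine ⟨hinv f _ hf.1, ?_⟩
      simpa using hf.2
    · intro f _; simp
    · intro f _; simp
  have h3 : #X = (p+1) * #(X.filter WGood) := by
    have e1 := Finset.sum_card_bipartiteAbove_eq_sum_card_bipartiteBelow
      (s := X) (t := range (p+1)) (fun f s => WGood (fun i => f (Fin.ofNat (p+1) s + i)))
    unfold Finset.bipartiteAbove Finset.bipartiteBelow at e1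
    rw [Finset.sum_congr rfl h1, Finset.sum_congr rfl h2] at e1
    simpa using e1
  rw [h3, Nat.factorial_succ, mul_assoc] at hX
  exact Nat.eq_of_mul_eq_mul_left (by omega) hX

/-- abstract data of a noncrossing partition: the block-minimum function -/
def NCM (n : ℕ) (μ : ℕ → ℕ) : Prop :=
  (∀ x, 1 ≤ x → x ≤ n → 1 ≤ μ x ∧ μ x ≤ x ∧ μ (μ x) = μ x) ∧
  ∀ a b c d, 1 ≤ a → a < b → b < c → c < d → d ≤ n → μ a = μ c → μ b = μ d → μ a = μ b

/-- heights -/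
def hgt (c : ℕ → ℕ) (k : ℕ) : ℤ := ∑ l ∈ Finset.Ico 1 k, ((c l : ℤ) - 1)

/-- fiber sizes -/
def cw (n : ℕ) (μ : ℕ → ℕ) (x : ℕ) : ℕ := #{y ∈ Finset.Icc 1 n | μ y = x}

theorem hgt_succ (c : ℕ → ℕ) (k : ℕ) (hk : 1 ≤ k) : hgt c (k+1) = hgt c k + (c k - 1) := by
  unfold hgt
  rw [Finset.sum_Ico_succ_top hk]

theorem hgt_one (c : ℕ → ℕ) : hgt c 1 = 0 := by simp [hgt]

theorem hgt_cw {n : ℕ} {μ : ℕ → ℕ} (h : ∀ x, 1 ≤ x → x ≤ n → 1 ≤ μ x ∧ μ x ≤ x) (k : ℕ)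
    (hk : 1 ≤ k) (hkn : k ≤ n + 1) :
    hgt (cw n μ) k = (#{x ∈ Finset.Icc k n | μ x < k} : ℤ) := by
  have e1 : ∑ l ∈ Finset.Ico 1 k, cw n μ l = #{y ∈ Finset.Icc 1 n | μ y < k} := by
    rw [Finset.card_eq_sum_card_fiberwise (f := μ) (t := Finset.Ico 1 k)]
    · refine Finset.sum_congr rfl fun l hl => ?_
      unfold cw
      congr 1
      ext y
      simp only [mem_filter, Finset.mem_Icc, Finset.mem_Ico] at hl ⊢
      constructor
      · rintro ⟨h1, h2⟩; exact ⟨⟨h1, by omega⟩, h2⟩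
      · rintro ⟨⟨h1, _⟩, h2⟩; exact ⟨h1, h2⟩
    · intro y hy
      simp only [coe_filter, Set.mem_ofPred_eq, Finset.mem_Icc, Finset.coe_Ico, Set.mem_Ico] at hy ⊢
      exact ⟨(h y hy.1.1 hy.1.2).1, hy.2⟩
  have e2 : #{y ∈ Finset.Icc 1 n | μ y < k} = (k - 1) + #{x ∈ Finset.Icc k n | μ x < k} := by
    have : ({y ∈ Finset.Icc 1 n | μ y < k} : Finset ℕ) =
        Finset.Ico 1 k ∪ {x ∈ Finset.Icc k n | μ x < k} := by
      ext y
      simp only [mem_filter, Finset.mem_Icc, Finset.mem_Ico, mem_union]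
      constructor
      · rintro ⟨h1, h2⟩; omega
      · rintro (h1 | h1)
        · have := h y (by omega) (by omega); omega
        · omega
    rw [this, Finset.card_union_of_disjoint]
    · simp
    · rw [Finset.disjoint_left]
      intro y hy hy'
      simp only [mem_filter, Finset.mem_Icc, Finset.mem_Ico] at hy hy'
      omega
  unfold hgt
  rw [Finset.sum_sub_distrib, ← Nat.cast_sum, e1, e2]
  simp

def IsOp (P : ℕ → ℤ) (i j : ℕ) : Prop :=
  1 ≤ j ∧ j ≤ i ∧ P j ≤ P (i+1) ∧ ∀ k, j < k → k ≤ i → P (i+1) < P k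

theorem IsOp.unique {P : ℕ → ℤ} {i j j' : ℕ} (h : IsOp P i j) (h' : IsOp P i j') : j = j' := by
  by_contra hne
  rcases lt_or_gt_of_ne hne with hlt | hlt
  · have := h.2.2.2 j' hlt h'.2.1
    have := h'.2.2.1; omega
  · have := h'.2.2.2 j hlt h.2.1
    have := h.2.2.1; omega

theorem IsOp.exists {P : ℕ → ℤ} {i : ℕ} (hi : 1 ≤ i) (h : P 1 ≤ P (i+1)) : ∃ j, IsOp P i j := by
  obtain ⟨j, hj, hmax⟩ := Finset.exists_max_image {j ∈ Finset.Icc 1 i | P j ≤ P (i+1)} id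
    ⟨1, by simp [hi, h]⟩
  simp only [mem_filter, Finset.mem_Icc, id] at hj hmax
  refine ⟨j, hj.1.1, hj.1.2, hj.2, fun k h1 h2 => ?_⟩
  by_contra h3
  have := hmax k ⟨⟨by omega, h2⟩, by omega⟩
  omega

theorem NCM.isOp {n : ℕ} {μ : ℕ → ℕ} (h : NCM n μ) (i : ℕ) (hi : 1 ≤ i) (hin : i ≤ n) :
    IsOp (hgt (cw n μ)) i (μ i) := by
  obtain ⟨h1, h2⟩ := h
  have h1' : ∀ x, 1 ≤ x → x ≤ n → 1 ≤ μ x ∧ μ x ≤ x := fun x a b => ⟨(h1 x a b).1, (h1 x a b).2.1⟩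
  have hm := h1 i hi hin
  refine ⟨hm.1, hm.2.1, ?_, ?_⟩
  · rw [hgt_cw h1' _ hm.1 (by omega), hgt_cw h1' (i+1) (by omega) (by omega)]
    norm_cast
    apply Finset.card_le_card
    intro x hx
    simp only [mem_filter, Finset.mem_Icc] at hx ⊢
    have hx1 := h1 x (by omega) (by omega)
    refine ⟨⟨?_, hx.1.2⟩, by omega⟩
    by_contra hlt
    have ne1 : x ≠ i := by rintro rfl; omega
    have ne2 : x ≠ μ i := by intro e; have := hm.2.2; rw [← e] at this; omega
    have := h2 (μ x) (μ i) x i hx1.1 hx.2 (by omega) (by omega) hin hx1.2.2 hm.2.2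
    rw [hx1.2.2, hm.2.2] at this
    omega
  · intro k hk1 hk2
    rw [hgt_cw h1' k (by omega) (by omega), hgt_cw h1' (i+1) (by omega) (by omega)]
    norm_cast
    apply Finset.card_lt_card
    rw [Finset.ssubset_iff_of_subset]
    · refine ⟨i, ?_, ?_⟩ <;> simp [mem_filter, Finset.mem_Icc] <;> omega
    intro x hx
    simp only [mem_filter, Finset.mem_Icc] at hx ⊢
    have hx1 := h1 x (by omega) (by omega)
    refine ⟨⟨by omega, hx.1.2⟩, ?_⟩
    by_contra hlt
    have ne1 : μ x ≠ i := by intro e; have := hx1.2.2; rw [e] at this; omega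
    have := h2 (μ i) (μ x) i x hm.1 (by omega) (by omega) (by omega) (by omega) hm.2.2 hx1.2.2
    rw [hx1.2.2, hm.2.2] at this
    omega

theorem exists_NCM {n : ℕ} (c : ℕ → ℕ) (hpos : ∀ k, 1 ≤ k → k ≤ n + 1 → 0 ≤ hgt c k)
    (hend : hgt c (n+1) = 0) : ∃ μ, NCM n μ ∧ ∀ x, 1 ≤ x → x ≤ n → cw n μ x = c x := by
  have hex : ∀ i, ∃ j, 1 ≤ i → i ≤ n → IsOp (hgt c) i j := by
    intro i
    by_cases h : 1 ≤ i ∧ i ≤ n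
    · obtain ⟨j, hj⟩ := IsOp.exists (P := hgt c) h.1 (by
        rw [hgt_one]; exact hpos _ (by omega) (by omega))
      exact ⟨j, fun _ _ => hj⟩
    · exact ⟨0, fun a b => absurd ⟨a, b⟩ h⟩
  choose μ hμ using hex
  refine ⟨μ, ⟨?_, ?_⟩, ?_⟩
  · intro x h1 h2
    have hx := hμ x h1 h2
    refine ⟨hx.1, hx.2.1, ?_⟩
    refine (hμ (μ x) hx.1 (hx.2.1.trans h2)).unique ⟨hx.1, le_rfl, ?_, fun k _ _ => by omega⟩
    rcases hx.2.1.eq_or_lt with e | e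
    · have := hx.2.2.1
      rw [e] at this ⊢; exact this
    · have := hx.2.2.2 (μ x + 1) (by omega) (by omega)
      exact hx.2.2.1.trans this.le
  · intro x y z w h1 hxy hyz hzw hw e1 e2
    have hx := hμ x h1 (by omega)
    have hy := hμ y (by omega) (by omega)
    have hz := hμ z (by omega) (by omega)
    have hd := hμ w (by omega) (by omega)
    rw [← e1] at hz
    rw [← e2] at hd
    by_contra hne
    have a1 := hx.2.1
    have a2 := hy.2.1
    rcases lt_or_gt_of_ne hne with hlt | hlt
    · have b1 := hz.2.2.2 (μ y) hlt (by omega)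
      have b2 := hd.2.2.2 (z+1) (by omega) (by omega)
      have b3 := hd.2.2.1
      omega
    · have b1 := hy.2.2.2 (μ x) hlt (by omega)
      have b2 := hz.2.2.2 (y+1) (by omega) (by omega)
      have b3 := hz.2.2.1
      omega
  · have hle : ∀ x ∈ Finset.Icc 1 n, cw n μ x ≤ c x := by
      intro x hx
      simp only [Finset.mem_Icc] at hx
      have : c x = #(Finset.Ico (hgt c x) (hgt c x + c x)) := by simp
      rw [this]
      unfold cw
      apply Finset.card_le_card_of_injOn (fun i => hgt c (i+1))
      · intro i hi
        simp only [coe_filter, Set.mem_ofPred_eq, Finset.mem_Icc, Finset.coe_Ico, Set.mem_Ico] at hi ⊢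
        have h := hμ i hi.1.1 hi.1.2
        rw [hi.2] at h
        refine ⟨h.2.2.1, ?_⟩
        have hs := hgt_succ c x hx.1
        rcases h.2.1.eq_or_lt with e | e
        · rw [← e]; omega
        · have := h.2.2.2 (x+1) (by omega) (by omega)
          omega
      · have key : ∀ i j, 1 ≤ i → i < j → j ≤ n → μ i = x → μ j = x → hgt c (j+1) < hgt c (i+1) := by
          intro i j h1 h2 h3 h4 h5
          have a := hμ i h1 (by omega)
          have b := hμ j (by omega) h3
          rw [h4] at a
          rw [h5] at b
          have := a.2.1
          exact b.2.2.2 (i+1) (by omega) (by omega)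
        intro i hi j hj hij
        simp only [coe_filter, Set.mem_ofPred_eq, Finset.mem_Icc] at hi hj hij
        by_contra hne
        rcases lt_or_gt_of_ne hne with hlt | hlt
        · have := key i j hi.1.1 hlt hj.1.2 hi.2 hj.2; omega
        · have := key j i hj.1.1 hlt hi.1.2 hj.2 hi.2; omega
    have hsum1 : ∑ x ∈ Finset.Icc 1 n, cw n μ x = n := by
      unfold cw
      rw [← Finset.card_eq_sum_card_fiberwise]
      · simp
      · intro y hy
        simp only [Finset.coe_Icc, Set.mem_Icc] at hy ⊢
        have := hμ y hy.1 hy.2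
        exact ⟨this.1, this.2.1.trans hy.2⟩
    have hsum2 : ∑ x ∈ Finset.Icc 1 n, c x = n := by
      unfold hgt at hend
      rw [Finset.sum_sub_distrib, ← Nat.cast_sum] at hend
      simp at hend
      have : Finset.Ico 1 (n+1) = Finset.Icc 1 n := by ext; simp
      rw [this] at hend
      have := hend
      rw [sub_eq_zero] at this
      exact_mod_cast this
    have := (Finset.sum_eq_sum_iff_of_le hle).1 (hsum1.trans hsum2.symm)
    intro x h1 h2
    exact this x (by simp [h1, h2])

noncomputable def pmin {n : ℕ} (π : SetPartitionOn n) (x : ℕ) : ℕ := sInf (π.part x : Set ℕ)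

section
variable {n : ℕ} (π : SetPartitionOn n)

theorem pmin_mem {x : ℕ} (hx : x ∈ Finset.Icc 1 n) : pmin π x ∈ π.part x := by
  have : (π.part x : Set ℕ).Nonempty := ⟨x, by simpa using hx⟩
  exact_mod_cast Nat.sInf_mem this

theorem pmin_le {x y : ℕ} (hy : y ∈ π.part x) : pmin π x ≤ y :=
  Nat.sInf_le (by exact_mod_cast hy)

theorem pmin_Icc {x : ℕ} (hx : x ∈ Finset.Icc 1 n) : pmin π x ∈ Finset.Icc 1 n :=
  π.part_subset x (pmin_mem π hx)

theorem part_pmin {x : ℕ} (hx : x ∈ Finset.Icc 1 n) : π.part (pmin π x) = π.part x :=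
  π.part_eq_of_mem (by simpa using hx) (pmin_mem π hx)

theorem pmin_pmin {x : ℕ} (hx : x ∈ Finset.Icc 1 n) : pmin π (pmin π x) = pmin π x := by
  rw [pmin, part_pmin π hx]; rfl

theorem pmin_eq_iff {x y : ℕ} (hx : x ∈ Finset.Icc 1 n) (hy : y ∈ Finset.Icc 1 n) :
    pmin π x = pmin π y ↔ π.part x = π.part y := by
  constructor
  · intro h; rw [← part_pmin π hx, h, part_pmin π hy]
  · intro h; rw [pmin, h]; rfl

theorem pmin_basic : ∀ x, 1 ≤ x → x ≤ n → 1 ≤ pmin π x ∧ pmin π x ≤ x ∧ pmin π (pmin π x) = pmin π x := by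
  intro x h1 h2
  have hx : x ∈ Finset.Icc 1 n := by simp [h1, h2]
  exact ⟨(Finset.mem_Icc.1 (pmin_Icc π hx)).1, pmin_le π (by simpa using hx), pmin_pmin π hx⟩

theorem NCM_pmin (h : Noncrossing π) : NCM n (pmin π) := by
  refine ⟨pmin_basic π, fun a b c d h1 h2 h3 h4 h5 e1 e2 => ?_⟩
  have ha : a ∈ Finset.Icc 1 n := by simp; omega
  have hb : b ∈ Finset.Icc 1 n := by simp; omega
  have hc : c ∈ Finset.Icc 1 n := by simp; omega
  have hd : d ∈ Finset.Icc 1 n := by simp; omega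
  rw [pmin_eq_iff π ha hc] at e1
  rw [pmin_eq_iff π hb hd] at e2
  rw [pmin_eq_iff π ha hb]
  by_contra hne
  refine h ⟨a, b, c, d, h2, h3, h4, π.part a, by simpa using ha, π.part b, by simpa using hb, hne,
    by simpa using ha, ?_, by simpa using hb, ?_⟩
  · rw [e1]; simpa using hc
  · rw [e2]; simpa using hd

theorem cw_pmin {x : ℕ} (hx : x ∈ Finset.Icc 1 n) (h : pmin π x = x) :
    cw n (pmin π) x = #(π.part x) := by
  unfold cw
  congr 1
  ext y
  simp only [mem_filter]
  constructor
  · rintro ⟨hy, e⟩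
    rw [← h, pmin_eq_iff π hy hx] at e
    rw [← e]; simpa using hy
  · intro hy
    have hy' := π.part_subset x hy
    refine ⟨hy', ?_⟩
    rw [← h, pmin_eq_iff π hy' hx]
    exact π.part_eq_of_mem (by simpa using hx) hy

theorem type_pmin (k : ℕ) :
    #(π.parts.filter (fun B => B.card = k + 1)) = #{x ∈ Finset.Icc 1 n | cw n (pmin π) x = k + 1} := by
  symm
  have hfix : ∀ x ∈ Finset.Icc 1 n, cw n (pmin π) x = k + 1 → pmin π x = x := by
    intro x _ h2
    have : 0 < cw n (pmin π) x := by omega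
    obtain ⟨y, hy⟩ := Finset.card_pos.1 this
    rw [mem_filter] at hy
    rw [← hy.2, pmin_pmin π hy.1]
  refine Finset.card_bij (fun x _ => π.part x) ?_ ?_ ?_
  · intro x hx
    rw [mem_filter] at hx ⊢
    refine ⟨by simpa using hx.1, ?_⟩
    rw [← cw_pmin π hx.1 (hfix x hx.1 hx.2), hx.2]
  · intro x hx y hy e
    rw [mem_filter] at hx hy
    rw [← hfix x hx.1 hx.2, ← hfix y hy.1 hy.2, pmin_eq_iff π hx.1 hy.1]
    exact e
  · intro B hB
    rw [mem_filter] at hB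
    obtain ⟨x, hx⟩ := π.nonempty_of_mem_parts hB.1
    have hx' := π.subset hB.1 hx
    have e : π.part x = B := π.part_eq_of_mem hB.1 hx
    refine ⟨pmin π x, ?_, by rw [part_pmin π hx', e]⟩
    rw [mem_filter]
    refine ⟨pmin_Icc π hx', ?_⟩
    rw [cw_pmin π (pmin_Icc π hx') (pmin_pmin π hx'), part_pmin π hx', e, hB.2]

theorem connected_pmin :
    Connected π ↔ ∀ k, 2 ≤ k → k ≤ n → 0 < hgt (cw n (pmin π)) k := by
  have hb : ∀ x, 1 ≤ x → x ≤ n → 1 ≤ pmin π x ∧ pmin π x ≤ x :=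
    fun x a b => ⟨(pmin_basic π x a b).1, (pmin_basic π x a b).2.1⟩
  have key : ∀ k, 2 ≤ k → k ≤ n → (0 < hgt (cw n (pmin π)) k ↔ ¬ IsCut π (k-1)) := by
    intro k h1 h2
    rw [hgt_cw hb k (by omega) (by omega)]
    norm_cast
    rw [Finset.card_pos]
    constructor
    · rintro ⟨x, hx⟩ ⟨_, _, hcut⟩
      simp only [mem_filter, Finset.mem_Icc] at hx
      have hx' : x ∈ Finset.Icc 1 n := by simp; omega
      rcases hcut (π.part x) (by simpa using hx') with h | h
      · have := h x (by simpa using hx'); omega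
      · have := h _ (pmin_mem π hx'); omega
    · intro h
      by_contra hne
      apply h
      refine ⟨by omega, by omega, fun B hB => ?_⟩
      by_contra hcon
      push Not at hcon
      obtain ⟨⟨x, hx, hxk⟩, ⟨y, hy, hyk⟩⟩ := hcon
      apply hne
      have hx' := π.subset hB hx
      refine ⟨x, ?_⟩
      have : pmin π x ≤ y := pmin_le π (by rw [π.part_eq_of_mem hB hx]; exact hy)
      simp only [mem_filter, Finset.mem_Icc] at hx' ⊢
      omega
  constructor
  · intro h k h1 h2
    exact (key k h1 h2).2 (h _)
  · intro h i hi
    have h1 := hi.1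
    have h2 := hi.2.1
    exact (key (i+1) (by omega) (by omega)).1 (h _ (by omega) (by omega)) hi

theorem partition_ext {π π' : SetPartitionOn n}
    (h : ∀ x ∈ Finset.Icc 1 n, pmin π x = pmin π' x) : π = π' := by
  have hp : ∀ x ∈ Finset.Icc 1 n, π.part x = π'.part x := by
    intro x hx
    ext y
    by_cases hy : y ∈ Finset.Icc 1 n
    · rw [π.mem_part_iff_part_eq_part hy hx, π'.mem_part_iff_part_eq_part hy hx,
        ← pmin_eq_iff π hy hx, ← pmin_eq_iff π' hy hx, h x hx, h y hy]
    · exact ⟨fun h => absurd (π.part_subset x h) hy, fun h => absurd (π'.part_subset x h) hy⟩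
  ext B
  constructor
  · intro hB
    obtain ⟨x, hx⟩ := π.nonempty_of_mem_parts hB
    have hx' := π.subset hB hx
    rw [← π.part_eq_of_mem hB hx, hp x hx']
    simpa using hx'
  · intro hB
    obtain ⟨x, hx⟩ := π'.nonempty_of_mem_parts hB
    have hx' := π'.subset hB hx
    rw [← π'.part_eq_of_mem hB hx, ← hp x hx']
    simpa using hx'

theorem exists_partition {μ : ℕ → ℕ} (h : NCM n μ) :
    ∃ π : SetPartitionOn n, Noncrossing π ∧ ∀ x ∈ Finset.Icc 1 n, pmin π x = μ x := by
  classical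
  let π : SetPartitionOn n := Finpartition.ofSetSetoid (Setoid.ker μ) (Finset.Icc 1 n)
  have hm : ∀ x y, y ∈ π.part x ↔ x ∈ Finset.Icc 1 n ∧ y ∈ Finset.Icc 1 n ∧ μ x = μ y := by
    intro x y
    exact Finpartition.mem_part_ofSetSetoid_iff_rel (s := Setoid.ker μ) (Finset.Icc 1 n)
  have hμ := h.1
  refine ⟨π, ?_, ?_⟩
  · rintro ⟨a, b, c, d, h1, h2, h3, B, hB, B', hB', hne, ha, hc, hb, hd⟩
    apply hne
    have ha' := Finset.mem_Icc.1 (π.subset hB ha)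
    have hd' := Finset.mem_Icc.1 (π.subset hB' hd)
    rw [← π.part_eq_of_mem hB ha] at hc ⊢
    rw [← π.part_eq_of_mem hB' hb] at hd ⊢
    have := h.2 a b c d ha'.1 h1 h2 h3 hd'.2 ((hm _ _).1 hc).2.2 ((hm _ _).1 hd).2.2
    refine π.part_eq_of_mem (by simpa using π.subset hB' hb) ?_
    rw [hm]
    exact ⟨π.subset hB' hb, π.subset hB ha, this.symm⟩
  · intro x hx
    have h1 := Finset.mem_Icc.1 hx
    have h2 := hμ x h1.1 h1.2
    apply le_antisymm
    · apply pmin_le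
      rw [hm]
      exact ⟨hx, by simp; omega, h2.2.2.symm⟩
    · have h3 := (hm _ _).1 (pmin_mem π hx)
      have h4 := Finset.mem_Icc.1 h3.2.1
      have := hμ _ h4.1 h4.2
      rw [h3.2.2]
      exact this.2.1
end

theorem wsum_eq_hgt {p N : ℕ} (f : Fin (p+1) → Fin N) (c : ℕ → ℕ)
    (h : ∀ i : Fin (p+1), (f i).val = c (i.val + 1)) (l : ℕ) (hl : l ≤ p + 1) :
    wsum f l = hgt c (l + 1) := by
  unfold wsum hgt
  rw [Finset.sum_Ico_eq_sum_range]
  refine Finset.sum_congr rfl fun j hj => ?_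
  rw [mem_range] at hj
  rw [h, Fin.val_ofNat, Nat.mod_eq_of_lt (by omega), add_comm 1 j]

theorem count_eq {p : ℕ} (f : Fin (p+1) → Fin (p+2+1)) (c : ℕ → ℕ)
    (h : ∀ i : Fin (p+1), (f i).val = c (i.val + 1)) (h0 : c (p+2) = 0) (k : Fin (p+2)) :
    #{i | f i = k.succ} = #{x ∈ Finset.Icc 1 (p+2) | c x = k.val + 1} := by
  refine Finset.card_bij (fun i _ => i.val + 1) ?_ ?_ ?_
  · intro i hi
    simp only [mem_filter, mem_univ, true_and, Finset.mem_Icc] at hi ⊢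
    refine ⟨by omega, ?_⟩
    rw [← h, hi, Fin.val_succ]
  · intro i _ j _ e
    ext; omega
  · intro x hx
    simp only [mem_filter, Finset.mem_Icc] at hx
    have : x ≠ p + 2 := by rintro rfl; omega
    refine ⟨⟨x - 1, by omega⟩, ?_, by simp; omega⟩
    simp only [mem_filter, mem_univ, true_and]
    ext
    rw [h, Fin.val_succ, ← hx.2]
    simp only
    congr 1; omega

theorem fiber_iff {p : ℕ} (f : Fin (p+1) → Fin (p+2+1)) (r : Fin (p+2) → ℕ) (hr : ∑ i, r i < p + 2) :
    (∀ k, #{i | f i = k} = (Fin.cons (p + 1 - ∑ i, r i) r : Fin (p+2+1) → ℕ) k) ↔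
    ∀ k : Fin (p+2), #{i | f i = k.succ} = r k := by
  constructor
  · intro h k
    rw [h, Fin.cons_succ]
  · intro h k
    refine Fin.cases ?_ (fun k => ?_) k
    · have : ∑ k, #{i | f i = k} = p + 1 := by
        rw [← Finset.card_eq_sum_card_fiberwise (by intro x; simp)]
        simp
      rw [Fin.sum_univ_succ] at this
      simp only [h] at this
      rw [Fin.cons_zero]; omega
    · rw [h, Fin.cons_succ]

theorem hgt_congr {c c' : ℕ → ℕ} {n : ℕ} (h : ∀ x, 1 ≤ x → x ≤ n → c x = c' x) (k : ℕ) (hk : k ≤ n + 1) :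
    hgt c k = hgt c' k := by
  unfold hgt
  refine Finset.sum_congr rfl fun l hl => ?_
  rw [Finset.mem_Ico] at hl
  rw [h l hl.1 (by omega)]

theorem cw_le (n : ℕ) (μ : ℕ → ℕ) (x : ℕ) : cw n μ x < n + 1 := by
  have := Finset.card_filter_le (Finset.Icc 1 n) (fun y => μ y = x)
  simp only [Nat.card_Icc] at this
  unfold cw; omega

theorem hgt_end {n : ℕ} (π : SetPartitionOn n) : hgt (cw n (pmin π)) (n+1) = 0 := by
  rw [hgt_cw (fun x a b => ⟨(pmin_basic π x a b).1, (pmin_basic π x a b).2.1⟩) _ (by omega) le_rfl]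
  simp

theorem cw_last {p : ℕ} (π : SetPartitionOn (p+2)) (h : Connected π) :
    cw (p+2) (pmin π) (p+2) = 0 := by
  have h1 := hgt_end π
  have h2 := (connected_pmin π).1 h (p+2) (by omega) le_rfl
  rw [hgt_succ _ _ (by omega)] at h1
  omega

theorem main_card (p : ℕ) (r : Fin (p+2) → ℕ) (hr : ∑ i, r i < p + 2) 
    (hrv : ∑ i, (i.1 + 1) * r i = p + 2) :
    Nat.card {π : SetPartitionOn (p+2) // Noncrossing π ∧ HasType π r ∧ Connected π} =
    Nat.card {f : Fin (p+1) → Fin (p+2+1) // (∀ k, #{i | f i = k} =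
      (Fin.cons (p + 1 - ∑ i, r i) r : Fin (p+2+1) → ℕ) k) ∧ WGood f} := by
  let F : SetPartitionOn (p+2) → Fin (p+1) → Fin (p+2+1) :=
    fun π i => ⟨cw (p+2) (pmin π) (i.val+1), cw_le _ _ _⟩
  have hF : ∀ π, ∀ i : Fin (p+1), (F π i).val = cw (p+2) (pmin π) (i.val + 1) := fun _ _ => rfl
  refine Nat.card_congr (Equiv.ofBijective (fun π => ⟨F π.1, ?_, ?_⟩) ⟨?_, ?_⟩)
  · obtain ⟨π, h1, h2, h3⟩ := π
    rw [fiber_iff _ _ hr]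
    intro k
    rw [count_eq _ _ (hF π) (cw_last π h3), ← type_pmin, h2 k]
  · obtain ⟨π, h1, h2, h3⟩ := π
    intro l hl1 hl2
    rw [wsum_eq_hgt _ _ (hF π) l hl2]
    exact (connected_pmin π).1 h3 _ (by omega) (by omega)
  · rintro ⟨π, h1, h2, h3⟩ ⟨π', h1', h2', h3'⟩ e
    have e : F π = F π' := congrArg Subtype.val e
    have hc : ∀ x, 1 ≤ x → x ≤ p + 2 → cw (p+2) (pmin π) x = cw (p+2) (pmin π') x := by
      intro x hx1 hx2
      rcases hx2.eq_or_lt with rfl | hx2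
      · rw [cw_last π h3, cw_last π' h3']
      · have := congrArg Fin.val (congrFun e ⟨x - 1, by omega⟩)
        rw [hF, hF] at this
        simpa [Nat.sub_add_cancel hx1] using this
    refine Subtype.ext (partition_ext fun x hx => ?_)
    rw [Finset.mem_Icc] at hx
    have a := (NCM_pmin π h1).isOp x hx.1 hx.2
    have b := (NCM_pmin π' h1').isOp x hx.1 hx.2
    show pmin π x = pmin π' x
    refine a.unique ?_
    have hh := hgt_congr hc
    have hb := b.2.1
    refine ⟨b.1, b.2.1, ?_, fun k hk1 hk2 => ?_⟩
    · rw [hh _ (by omega), hh _ (by omega)]; exact b.2.2.1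
    · rw [hh _ (by omega), hh _ (by omega)]; exact b.2.2.2 k hk1 hk2
  · rintro ⟨f, hf, hg⟩
    let c : ℕ → ℕ := fun x => if h : 1 ≤ x ∧ x ≤ p + 1 then (f ⟨x - 1, by omega⟩).val else 0
    have hcf : ∀ i : Fin (p+1), (f i).val = c (i.val + 1) := by
      intro i
      have : 1 ≤ i.val + 1 ∧ i.val + 1 ≤ p + 1 := by omega
      simp only [c, dif_pos this]
      rfl
    have hc0 : c (p+2) = 0 := by simp [c]
    have hpos : ∀ k, 2 ≤ k → k ≤ p + 2 → 0 < hgt c k := by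
      intro k h1 h2
      have := hg (k-1) (by omega) (by omega)
      rwa [wsum_eq_hgt f c hcf _ (by omega), Nat.sub_add_cancel (by omega)] at this
    have hend : hgt c (p+2+1) = 0 := by
      rw [hgt_succ _ _ (by omega), hc0, ← wsum_eq_hgt f c hcf (p+1) le_rfl, wsum_full f _ hf,
        Fin.sum_univ_succ]
      have : ((∑ i, r i * (i.1 + 1) : ℕ) : ℤ) = p + 2 := by
        rw [Finset.sum_congr rfl fun i _ => mul_comm (r i) (i.1 + 1), hrv]; simp
      push_cast at this
      simp only [Fin.cons_succ, Fin.val_succ]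
      push_cast
      rw [this]
      simp
    obtain ⟨μ, hμ, hμc⟩ := exists_NCM c (fun k h1 h2 => by
      rcases h1.eq_or_lt with rfl | h1
      · rw [hgt_one]
      · rcases h2.eq_or_lt with rfl | h2
        · exact hend.ge
        · exact (hpos k (by omega) (by omega)).le) hend
    obtain ⟨π, hnc, hπ⟩ := exists_partition hμ
    have hcw : ∀ x, 1 ≤ x → x ≤ p + 2 → cw (p+2) (pmin π) x = c x := by
      intro x h1 h2
      rw [← hμc x h1 h2]
      unfold cw
      congr 1
      refine Finset.filter_congr fun y hy => ?_
      rw [hπ y hy]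
    have hFf : F π = f := by
      funext i
      ext
      rw [hF, hcw _ (by omega) (by omega), hcf]
    refine ⟨⟨π, hnc, ?_, ?_⟩, Subtype.ext hFf⟩
    · intro k
      rw [type_pmin, ← (fiber_iff f r hr).1 hf k, count_eq f c hcf hc0 k]
      congr 1
      refine Finset.filter_congr fun y hy => ?_
      rw [Finset.mem_Icc] at hy
      rw [hcw y hy.1 hy.2]
    · rw [connected_pmin]
      intro k h1 h2
      rw [hgt_congr hcw k (by omega)]
      exact hpos k h1 h2

/-- The number `N` of connected noncrossing partitions of `[n]` of type `r` satisfies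
`N · (n - |r| - 1)! · r! = (n - 2)!`. -/
theorem card_connected_noncrossing_of_type (n : ℕ) (hn : 1 < n) (r : Fin n → ℕ)
    (hrv : ∑ i, (i.1 + 1) * r i = n) (hr : ∑ i, r i < n) :
    Nat.card {π : SetPartitionOn n // Noncrossing π ∧ HasType π r ∧ Connected π} *
      (n - (∑ i, r i) - 1).factorial * ∏ i, (r i).factorial = (n - 2).factorial := by
  obtain ⟨p, rfl⟩ : ∃ p, n = p + 2 := ⟨n - 2, by omega⟩
  rw [main_card p r hr hrv]
  have := good_words_card (p := p) (Fin.cons (p + 1 - ∑ i, r i) r : Fin (p+2+1) → ℕ)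
    (by rw [Fin.sum_univ_succ]; simp only [Fin.cons_zero, Fin.cons_succ]; omega)
    (by
      rw [Fin.sum_univ_succ]
      simp only [Fin.cons_succ, Fin.val_succ, Fin.val_zero, mul_zero, zero_add]
      rw [Finset.sum_congr rfl fun i _ => mul_comm (r i) (i.1 + 1)]
      exact hrv)
  rw [Fin.prod_univ_succ] at this
  simp only [Fin.cons_zero, Fin.cons_succ] at this
  rw [show p + 2 - ∑ i, r i - 1 = p + 1 - ∑ i, r i by omega, show p + 2 - 2 = p by omega, mul_assoc]
  exact this
end

section
/- Let n > 1 and let r = (r_1, …, r_n) ∈ ℕ^n satisfy r_1 + 2r_2 + ⋯ + n·r_n = n and |r| := r_1 + ⋯ + r_n < n. Then the number N of connected nonnesting set partitions of [n] of type r satisfies N · (n − |r| − 1)! · r_1! r_2! ⋯ r_n! = (n − 2)!. -/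
def GoodZ (N : ℕ) (g : ZMod N → ℕ) : Prop :=
  ∀ i, 1 ≤ i → i ≤ N → i < ∑ j ∈ Finset.range i, g (j : ZMod N)

lemma raney_sum_univ (N : ℕ) [NeZero N] (g : ZMod N → ℕ) :
    ∑ j ∈ Finset.range N, g (j : ZMod N) = ∑ x, g x := by
  refine Finset.sum_bij (fun j _ => (j : ZMod N)) (by simp) ?_ ?_ (by simp)
  · intro a ha b hb h
    have := (ZMod.natCast_eq_natCast_iff' a b N).1 h
    rwa [Nat.mod_eq_of_lt (by simpa using ha), Nat.mod_eq_of_lt (by simpa using hb)] at this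
  · intro b _
    exact ⟨b.val, by simpa using ZMod.val_lt b, by simp⟩

lemma raney (N : ℕ) [NeZero N] (g : ZMod N → ℕ) (hs : ∑ x, g x = N + 1) :
    ∃! s : ZMod N, GoodZ N (fun x => g (x + s)) := by
  set P : ℕ → ℤ := fun i => ∑ j ∈ Finset.range i, ((g (j : ZMod N) : ℤ) - 1) with hP
  have hN : 0 < N := Nat.pos_of_ne_zero (NeZero.ne N)
  have key : ∀ (s : ZMod N) (i : ℕ),
      ((∑ j ∈ Finset.range i, g ((j : ZMod N) + s) : ℕ) : ℤ) = P (s.val + i) - P s.val + i := by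
    intro s i
    simp only [hP, Finset.sum_range_add]
    simp [add_comm]
  have hPN : P N = 1 := by
    have := raney_sum_univ N g
    simp only [hP, Finset.sum_sub_distrib]
    rw [← Nat.cast_sum, this, hs]; simp
  have per : ∀ i, P (N + i) = P i + 1 := by
    intro i
    have : P (N + i) = P N + P i := by
      simp only [hP, Finset.sum_range_add]
      simp
    omega
  have good : ∀ s : ZMod N, GoodZ N (fun x => g (x + s)) ↔
      ∀ i, 1 ≤ i → i ≤ N → P s.val < P (s.val + i) := by
    intro s
    unfold GoodZ
    refine forall_congr' fun i => forall_congr' fun _ => forall_congr' fun _ => ?_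
    have := key s i
    simp only [] at *
    omega
  obtain ⟨m, hm, hmin⟩ := Finset.exists_min_image (Finset.range N) P ⟨0, by simpa using hN⟩
  set T := (Finset.range N).filter (fun x => P x = P m) with hT
  have hTn : T.Nonempty := ⟨m, by simp [hT]; simpa using hm⟩
  obtain ⟨s0, hs0, hmax⟩ : ∃ s0 ∈ T, ∀ x ∈ T, x ≤ s0 :=
    ⟨T.max' hTn, T.max'_mem hTn, fun x hx => T.le_max' x hx⟩
  simp only [hT, Finset.mem_filter, Finset.mem_range] at hs0 hmax hmin
  have g0 : ∀ i, 1 ≤ i → i ≤ N → P s0 < P (s0 + i) := by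
    intro i hi hiN
    by_cases h : s0 + i < N
    · have h1 := hmin _ h
      rcases lt_or_eq_of_le h1 with h2 | h2
      · omega
      · have := hmax _ ⟨h, h2.symm⟩
        omega
    · obtain ⟨t, ht⟩ := Nat.exists_eq_add_of_le (not_lt.1 h)
      rw [ht, per]
      have := hmin t (by omega)
      omega
  have v0 : ((s0 : ℕ) : ZMod N).val = s0 := ZMod.val_cast_of_lt hs0.1
  refine ⟨(s0 : ZMod N), ?_, ?_⟩
  · exact (good _).2 (by rw [v0]; exact g0)
  · intro t ht
    replace ht := (good _).1 ht
    have htN := ZMod.val_lt t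
    have hts : t.val = s0 := by
      rcases lt_trichotomy t.val s0 with h | h | h
      · have h1 := ht (s0 - t.val) (by omega) (by omega)
        have h2 := g0 (N + t.val - s0) (by omega) (by omega)
        rw [show t.val + (s0 - t.val) = s0 by omega] at h1
        rw [show s0 + (N + t.val - s0) = N + t.val by omega, per] at h2
        omega
      · exact h
      · have h1 := g0 (t.val - s0) (by omega) (by omega)
        have h2 := ht (N + s0 - t.val) (by omega) (by omega)
        rw [show s0 + (t.val - s0) = t.val by omega] at h1
        rw [show t.val + (N + s0 - t.val) = N + s0 by omega, per] at h2
        omega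
    rw [← hts]; simp

lemma card_good_perm (N : ℕ) [NeZero N] (f : ZMod N → ℕ) (hs : ∑ x, f x = N + 1) :
    Nat.card {σ : Equiv.Perm (ZMod N) // GoodZ N (f ∘ σ)} = (N - 1).factorial := by
  classical
  have h1 : N * Nat.card {σ : Equiv.Perm (ZMod N) // GoodZ N (f ∘ σ)} = N.factorial := by
    have hc : N.factorial = Fintype.card (Equiv.Perm (ZMod N)) := by
      rw [Fintype.card_perm, ZMod.card]
    have e1 : ∑ σ : Equiv.Perm (ZMod N), ∑ s : ZMod N,
        (if GoodZ N (fun x => f (σ (x + s))) then 1 else 0) = N.factorial := by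
      rw [hc, Fintype.card_eq_sum_ones]
      refine Finset.sum_congr rfl fun σ _ => ?_
      obtain ⟨s, hs1, hs2⟩ := raney N (f ∘ σ) (by
        rw [← hs]; exact Equiv.sum_comp σ f)
      rw [Finset.sum_eq_single s]
      · exact if_pos hs1
      · intro b _ hb
        rw [if_neg]
        intro h
        exact hb (hs2 b h)
      · simp
    rw [← e1, Finset.sum_comm]
    have e2 : ∀ s : ZMod N, ∑ σ : Equiv.Perm (ZMod N),
        (if GoodZ N (fun x => f (σ (x + s))) then 1 else 0) =
        Nat.card {σ : Equiv.Perm (ZMod N) // GoodZ N (f ∘ σ)} := by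
      intro s
      rw [Nat.card_eq_fintype_card, Fintype.card_subtype, Finset.card_filter]
      exact Equiv.sum_comp (Equiv.mulRight (Equiv.addRight s))
        (fun σ : Equiv.Perm (ZMod N) => if GoodZ N (f ∘ σ) then 1 else 0)
    rw [Finset.sum_congr rfl (fun s _ => e2 s)]
    simp [ZMod.card]
  have hN : 0 < N := Nat.pos_of_ne_zero (NeZero.ne N)
  rw [← Nat.mul_factorial_pred hN.ne'] at h1
  exact Nat.eq_of_mul_eq_mul_left hN h1

lemma card_good_fun (N M : ℕ) [NeZero N] (c : Fin M → ℕ) (hc : ∑ i, c i = N)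
    (hs : ∑ i, i.1 * c i = N + 1) :
    Nat.card {g : ZMod N → Fin M // GoodZ N (fun x => (g x).1) ∧
      ∀ i, Fintype.card {x // g x = i} = c i} * ∏ i, (c i).factorial = (N - 1).factorial := by
  classical
  -- a reference function
  obtain ⟨e⟩ : Nonempty (ZMod N ≃ Σ i : Fin M, Fin (c i)) := by
    apply Fintype.card_eq.1
    simp [ZMod.card, hc]
  set f : ZMod N → Fin M := fun x => (e x).1 with hf
  have hfc : ∀ i, Fintype.card {x // f x = i} = c i := by
    intro i
    have : {x // f x = i} ≃ Fin (c i) :=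
      (Equiv.subtypeEquiv e (q := fun y => y.1 = i) (fun x => Iff.rfl)).trans
        (Equiv.sigmaSubtype i)
    simpa using Fintype.card_congr this
  have hfs : ∑ x, (f x).1 = N + 1 := by
    rw [← hs, ← Finset.sum_fiberwise (s := Finset.univ) (g := f)]
    refine Finset.sum_congr rfl fun i _ => ?_
    rw [Finset.sum_congr rfl (g := fun _ => i.1) (by simp +contextual), Finset.sum_const,
      ← hfc i, Fintype.card_subtype]
    simp [mul_comm]
  rw [← card_good_perm N (fun x => (f x).1) hfs]
  set G := {g : ZMod N → Fin M // GoodZ N (fun x => (g x).1) ∧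
      ∀ i, Fintype.card {x // g x = i} = c i}
  have E : {σ : Equiv.Perm (ZMod N) // GoodZ N ((fun x => (f x).1) ∘ σ)} ≃
      Σ g : G, {σ : Equiv.Perm (ZMod N) // f ∘ σ = g.1} :=
    { toFun := fun σ => ⟨⟨f ∘ σ.1, σ.2, fun i => by
          rw [← hfc i]
          exact Fintype.card_congr (Equiv.subtypeEquiv σ.1 (fun x => Iff.rfl))⟩, σ.1, rfl⟩
      invFun := fun p => ⟨p.2.1, by
          have h := p.1.2.1
          have h2 := p.2.2
          rw [← h2] at h
          exact h⟩
      left_inv := fun σ => rfl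
      right_inv := by
        rintro ⟨⟨g, hg⟩, σ, h⟩
        simp only [] at h
        subst h
        rfl }
  rw [Nat.card_congr E, Nat.card_sigma]
  have : ∀ g : G, Nat.card {σ : Equiv.Perm (ZMod N) // f ∘ σ = g.1} = ∏ i, (c i).factorial := by
    rintro ⟨g, hg1, hg2⟩
    have hE : ∀ i, Nonempty ({x // g x = i} ≃ {x // f x = i}) := fun i =>
      Fintype.card_eq.1 (by rw [hg2, hfc])
    let ee := fun i => (hE i).some
    set τ : Equiv.Perm (ZMod N) := Equiv.ofFiberEquiv ee
    have hτ : ∀ x, f (τ x) = g x := fun x => Equiv.ofFiberEquiv_map ee x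
    have e3 : {σ : Equiv.Perm (ZMod N) // f ∘ σ = g} ≃
        {σ : Equiv.Perm (ZMod N) // f ∘ σ = f} :=
      Equiv.subtypeEquiv (Equiv.mulRight τ⁻¹) (by
        intro σ
        constructor
        · intro h
          funext x
          have := congrFun h (τ.symm x)
          rw [← hτ, Equiv.apply_symm_apply] at this
          simpa using this
        · intro h
          funext x
          have := congrFun h (τ x)
          simp only [Function.comp, hτ] at this
          simpa using this)
    simp only []
    rw [Nat.card_congr e3, Nat.card_eq_fintype_card, DomMulAct.stabilizer_card]
    exact Finset.prod_congr rfl fun i _ => by rw [hfc]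
  rw [Finset.sum_congr rfl (fun g _ => this g)]
  simp [Nat.card_eq_fintype_card]

/-- `l` labels each element of `[m,n]` by the minimum of its block; nonnesting, with counts `k`. -/
structure LabOn (m n : ℕ) (l : ℕ → ℕ) : Prop where
  ge : ∀ x, m ≤ x → x ≤ n → m ≤ l x
  le : ∀ x, m ≤ x → x ≤ n → l x ≤ x
  idem : ∀ x, m ≤ x → x ≤ n → l (l x) = l x
  nn : ∀ a b c d, m ≤ a → a < b → b < c → c < d → d ≤ n → l a = l d → l b = l c →
    (∀ y, a < y → y < d → l y ≠ l a) → False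

def lcnt (m n : ℕ) (l : ℕ → ℕ) (x : ℕ) : ℕ := ((Finset.Icc m n).filter (fun y => l y = x)).card

lemma LabOn.pos_iff {m n : ℕ} {l : ℕ → ℕ} (h : LabOn m n l) {x : ℕ} (h1 : m ≤ x) (h2 : x ≤ n) :
    0 < lcnt m n l x ↔ l x = x := by
  unfold lcnt
  rw [Finset.card_pos]
  constructor
  · rintro ⟨y, hy⟩
    simp only [Finset.mem_filter, Finset.mem_Icc] at hy
    have := h.idem y hy.1.1 hy.1.2
    rwa [hy.2] at this
  · intro hx
    exact ⟨x, by simp [*]⟩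

lemma lab_unique_aux {m n : ℕ} {l l2 : ℕ → ℕ} (h : LabOn m n l) (h2 : LabOn m n l2)
    (hk : ∀ x, m ≤ x → x ≤ n → lcnt m n l x = lcnt m n l2 x)
    (x : ℕ) (hx : m ≤ x) (hxn : x ≤ n) (ih : ∀ y, m ≤ y → y < x → l y = l2 y)
    (p q : ℕ) (hp : m ≤ p) (hpq : p < q) (hqx : q < x)
    (hlp : l p = l x) (hlq : l2 q = l2 x) (hne : l x ≠ l2 x)
    (hpm : ∀ y, p < y → y < x → l y ≠ l x) : False := by
  -- in `l2` the block of `p` has an element beyond `x`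
  have ha1 : m ≤ l x := h.ge x hx hxn
  have ha2 : l x ≤ x := h.le x hx hxn
  have hc := hk (l x) ha1 (by omega)
  have hex : ∃ y, x < y ∧ y ≤ n ∧ l2 y = l x := by
    by_contra hcon
    push Not at hcon
    have : lcnt m n l2 (l x) < lcnt m n l (l x) := by
      unfold lcnt
      apply Finset.card_lt_card
      rw [Finset.ssubset_iff_of_subset]
      · refine ⟨x, by simp [*], ?_⟩
        simp only [Finset.mem_filter, not_and]
        intro _ h3
        exact hne h3.symm
      · intro y hy
        simp only [Finset.mem_filter, Finset.mem_Icc] at hy ⊢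
        refine ⟨hy.1, ?_⟩
        rcases lt_trichotomy y x with h4 | h4 | h4
        · rw [ih y hy.1.1 h4, hy.2]
        · subst h4; exact absurd hy.2.symm hne
        · exact absurd hy.2 (hcon y h4 hy.1.2)
    omega
  classical
  have hs := Nat.find_spec hex
  have hmin := fun z (hz : z < Nat.find hex) => Nat.find_min hex hz
  generalize Nat.find hex = d at hs hmin
  have hpl := ih p hp (by omega)
  refine h2.nn p q x d hp hpq hqx hs.1 hs.2.1 (by rw [← hpl, hlp, hs.2.2]) hlq ?_
  intro y h3 h4 h5
  rw [← hpl, hlp] at h5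
  rcases lt_trichotomy y x with h6 | h6 | h6
  · exact hpm y h3 h6 (by rw [ih y (by omega) h6, h5])
  · subst h6; exact hne h5.symm
  · exact hmin y h4 ⟨h6, by omega, h5⟩

lemma lab_pred {m n : ℕ} {l : ℕ → ℕ} (h : LabOn m n l) (x : ℕ) (hx : m ≤ x) (hxn : x ≤ n)
    (hl : l x ≠ x) : ∃ p, m ≤ p ∧ p < x ∧ l p = l x ∧ ∀ y, p < y → y < x → l y ≠ l x := by
  set T := (Finset.Ico m x).filter (fun y => l y = l x) with hT
  have hTn : T.Nonempty := by
    refine ⟨l x, ?_⟩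
    have := h.le x hx hxn
    have := h.ge x hx hxn
    have := h.idem x hx hxn
    simp only [hT, Finset.mem_filter, Finset.mem_Ico]
    omega
  obtain ⟨p, h1, h2⟩ : ∃ s0 ∈ T, ∀ x ∈ T, x ≤ s0 :=
    ⟨T.max' hTn, T.max'_mem hTn, fun x hx => T.le_max' x hx⟩
  simp only [hT, Finset.mem_filter, Finset.mem_Ico] at h1 h2
  refine ⟨p, h1.1.1, h1.1.2, h1.2, fun y hy hyx hly => ?_⟩
  have := h2 y ⟨⟨by omega, hyx⟩, hly⟩
  omega

lemma lab_unique {m n : ℕ} {l l2 : ℕ → ℕ} (h : LabOn m n l) (h2 : LabOn m n l2)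
    (hk : ∀ x, m ≤ x → x ≤ n → lcnt m n l x = lcnt m n l2 x) :
    ∀ x, m ≤ x → x ≤ n → l x = l2 x := by
  intro x
  induction x using Nat.strong_induction_on with
  | _ x IH =>
  intro hx hxn
  have ih : ∀ y, m ≤ y → y < x → l y = l2 y := fun y hy hyx => IH y hyx hy (by omega)
  have hpos : l x = x ↔ l2 x = x := by
    rw [← h.pos_iff hx hxn, ← h2.pos_iff hx hxn, hk x hx hxn]
  by_cases hl : l x = x
  · rw [hl, hpos.1 hl]
  by_contra hne
  obtain ⟨p, hp, hpx, hlp, hpm⟩ := lab_pred h x hx hxn hl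
  obtain ⟨q, hq, hqx, hlq, hqm⟩ := lab_pred h2 x hx hxn (fun e => hl (hpos.2 e))
  rcases lt_trichotomy p q with hpq | hpq | hpq
  · exact lab_unique_aux h h2 hk x hx hxn ih p q hp hpq hqx hlp hlq hne hpm
  · subst hpq
    apply hne
    rw [← hlp, ← hlq, ih p hp hpx]
  · exact lab_unique_aux h2 h (fun y a b => (hk y a b).symm) x hx hxn
      (fun y a b => (ih y a b).symm) q p hq hpq hpx hlq hlp (Ne.symm hne) hqm

lemma sum_Icc_left (m i : ℕ) (h : m ≤ i) (k : ℕ → ℕ) :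
    ∑ j ∈ Finset.Icc m i, k j = k m + ∑ j ∈ Finset.Icc (m+1) i, k j := by
  rw [← Finset.insert_Icc_add_one_left_eq_Icc h, Finset.sum_insert (by simp)]

lemma lcnt_congr (m n : ℕ) (l l2 : ℕ → ℕ) (x x2 : ℕ)
    (h : ∀ y, m ≤ y → y ≤ n → (l y = x ↔ l2 y = x2)) : lcnt m n l x = lcnt m n l2 x2 := by
  unfold lcnt
  congr 1
  apply Finset.filter_congr
  intro y hy
  simp only [Finset.mem_Icc] at hy
  exact h y hy.1 hy.2

lemma lcnt_left (m n : ℕ) (h : m ≤ n) (l : ℕ → ℕ) (x : ℕ) :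
    lcnt m n l x = (if l m = x then 1 else 0) + lcnt (m+1) n l x := by
  unfold lcnt
  rw [← Finset.insert_Icc_add_one_left_eq_Icc h, Finset.filter_insert]
  split_ifs
  · rw [Finset.card_insert_of_notMem (by simp)]; omega
  · omega

lemma lab_exists (n : ℕ) : ∀ d m (k : ℕ → ℕ), m + d = n + 1 →
    (∀ i, m ≤ i → i ≤ n → i + 1 ≤ m + ∑ j ∈ Finset.Icc m i, k j) →
    (m + ∑ j ∈ Finset.Icc m n, k j = n + 1) →
    ∃ l, LabOn m n l ∧ ∀ x, m ≤ x → x ≤ n → lcnt m n l x = k x := by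
  intro d
  induction d with
  | zero =>
    intro m k hm _ _
    refine ⟨id, ⟨?_, ?_, ?_, ?_⟩, ?_⟩ <;> intros <;> omega
  | succ d IH =>
    intro m k hm hk hkn
    have hmn : m ≤ n := by omega
    have hm1 : 1 ≤ k m := by
      have := hk m le_rfl hmn
      simp at this
      omega
    by_cases hkm : k m = 1
    · obtain ⟨l, hl, hlk⟩ := IH (m+1) k (by omega) (by
          intro i h1 h2
          have := hk i (by omega) h2
          rw [sum_Icc_left m i (by omega)] at this
          omega) (by
          rw [sum_Icc_left m n hmn] at hkn
          omega)
      have e0 : ∀ x, x ≠ m → Function.update l m m x = l x := fun x hx => by simp [hx]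
      have e1 : Function.update l m m m = m := by simp
      have gg : ∀ x, m < x → x ≤ n → m < l x := fun x h1 h2 => hl.ge x h1 h2
      generalize Function.update l m m = l' at e0 e1
      refine ⟨l', ⟨?_, ?_, ?_, ?_⟩, ?_⟩
      · intro x h1 h2
        by_cases hx : x = m
        · rw [hx, e1]
        · rw [e0 x hx]
          exact (gg x (by omega) h2).le
      · intro x h1 h2
        by_cases hx : x = m
        · rw [hx, e1]
        · rw [e0 x hx]
          exact hl.le x (by omega) h2
      · intro x h1 h2
        by_cases hx : x = m
        · rw [hx, e1, e1]
        · have := gg x (by omega) h2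
          rw [e0 x hx, e0 _ (by omega)]
          exact hl.idem x (by omega) h2
      · intro a b c d h1 h2 h3 h4 h5 h6 h7 h8
        have hgd := gg d (by omega) h5
        rw [e0 d (by omega)] at h6
        rw [e0 b (by omega), e0 c (by omega)] at h7
        by_cases ha : a = m
        · rw [ha, e1] at h6; omega
        · rw [e0 a ha] at h6 h8
          refine hl.nn a b c d (by omega) h2 h3 h4 h5 h6 h7 ?_
          intro y hy1 hy2
          rw [← e0 y (by omega)]
          exact h8 y hy1 hy2
      · intro x h1 h2
        rw [lcnt_left m n hmn, e1]
        rw [lcnt_congr (m+1) n l' l x x (fun y hy hy2 => by rw [e0 y (by omega)])]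
        by_cases hx : x = m
        · subst hx
          rw [if_pos rfl, hkm]
          have : lcnt (x+1) n l x = 0 := by
            unfold lcnt
            rw [Finset.card_eq_zero, Finset.filter_eq_empty_iff]
            intro y hy
            simp only [Finset.mem_Icc] at hy
            have := gg y (by omega) hy.2
            omega
          omega
        · rw [if_neg (Ne.symm hx), hlk x (by omega) h2]; omega
    · -- `j` is the first zero of `k` after `m`
      have hex : ∃ j, m < j ∧ j ≤ n ∧ k j = 0 := by
        by_contra hcon
        push Not at hcon
        rw [sum_Icc_left m n hmn] at hkn
        have : ∑ j ∈ Finset.Icc (m+1) n, 1 ≤ ∑ j ∈ Finset.Icc (m+1) n, k j := by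
          apply Finset.sum_le_sum
          intro j hj
          simp only [Finset.mem_Icc] at hj
          have := hcon j (by omega) hj.2
          omega
        simp at this
        omega
      classical
      have hs := Nat.find_spec hex
      have hmin := fun z (hz : z < Nat.find hex) => Nat.find_min hex hz
      generalize Nat.find hex = j at hs hmin
      obtain ⟨hmj, hjn, hkj⟩ := hs
      have hkpos : ∀ z, m < z → z < j → 1 ≤ k z := by
        intro z h1 h2
        have := hmin z h2
        by_contra h3
        exact this ⟨h1, by omega, by omega⟩
      set k' := Function.update k j (k m - 1) with hk'
      have k'j : k' j = k m - 1 := by simp [hk']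
      have k'n : ∀ x, x ≠ j → k' x = k x := fun x hx => by simp [hk', hx]
      have sumge : ∀ i, j ≤ i → ∑ x ∈ Finset.Icc (m+1) i, k' x + 1
          = ∑ x ∈ Finset.Icc m i, k x := by
        intro i hi
        rw [sum_Icc_left m i (by omega)]
        have hj : j ∈ Finset.Icc (m+1) i := by simp; omega
        rw [← Finset.add_sum_erase _ k hj, ← Finset.add_sum_erase _ k' hj, k'j, hkj]
        have : ∑ x ∈ (Finset.Icc (m+1) i).erase j, k' x
            = ∑ x ∈ (Finset.Icc (m+1) i).erase j, k x :=
          Finset.sum_congr rfl fun x hx => k'n x (Finset.ne_of_mem_erase hx)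
        omega
      obtain ⟨l, hl, hlk⟩ := IH (m+1) k' (by omega) (by
          intro i h1 h2
          by_cases hij : j ≤ i
          · have := sumge i hij
            have := hk i (by omega) h2
            omega
          · have : ∑ x ∈ Finset.Icc (m+1) i, 1 ≤ ∑ x ∈ Finset.Icc (m+1) i, k' x := by
              apply Finset.sum_le_sum
              intro x hx
              simp only [Finset.mem_Icc] at hx
              rw [k'n x (by omega)]
              exact hkpos x (by omega) (by omega)
            simp at this
            omega) (by
          have := sumge n hjn
          omega)
      have gg : ∀ x, m < x → x ≤ n → m < l x := fun x h1 h2 => hl.ge x h1 h2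
      have hlj : l j = j := by
        rw [← hl.pos_iff (by omega) hjn, hlk j (by omega) hjn, k'j]; omega
      obtain ⟨l', hl'⟩ : ∃ l' : ℕ → ℕ, l' = fun x => if x = m then m else if l x = j then m else l x :=
        ⟨_, rfl⟩
      have e1 : l' m = m := by simp [hl']
      have e2 : ∀ x, l x = j → l' x = m := fun x hx => by simp [hl', hx]
      have e3 : ∀ x, x ≠ m → l x ≠ j → l' x = l x := fun x hx hx2 => by simp [hl', hx, hx2]
      clear hl'
      have einj : ∀ x y, m < x → x ≤ n → m < y → y ≤ n → (l' x = l' y ↔ l x = l y) := by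
        intro x y h1 h2 h3 h4
        have := gg x h1 h2
        have := gg y h3 h4
        by_cases hx : l x = j <;> by_cases hy : l y = j
        · rw [e2 x hx, e2 y hy, hx, hy]; simp
        · rw [e2 x hx, e3 y (by omega) hy]; omega
        · rw [e2 y hy, e3 x (by omega) hx]; omega
        · rw [e3 x (by omega) hx, e3 y (by omega) hy]
      refine ⟨l', ⟨?_, ?_, ?_, ?_⟩, ?_⟩
      · intro x h1 h2
        by_cases hx : x = m
        · rw [hx, e1]
        · by_cases hx2 : l x = j
          · rw [e2 x hx2]
          · rw [e3 x hx hx2]; exact (gg x (by omega) h2).le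
      · intro x h1 h2
        by_cases hx : x = m
        · rw [hx, e1]
        · by_cases hx2 : l x = j
          · rw [e2 x hx2]; omega
          · rw [e3 x hx hx2]; exact hl.le x (by omega) h2
      · intro x h1 h2
        by_cases hx : x = m
        · rw [hx, e1, e1]
        · by_cases hx2 : l x = j
          · rw [e2 x hx2, e1]
          · have h3 := gg x (by omega) h2
            have h4 := hl.idem x (by omega) h2
            rw [e3 x hx hx2, e3 (l x) (by omega) (by rw [h4]; exact hx2), h4]
      · intro a b c d h1 h2 h3 h4 h5 h6 h7 h8
        rw [einj b c (by omega) (by omega) (by omega) (by omega)] at h7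
        by_cases ha : a = m
        · subst ha
          rw [e1] at h6 h8
          have hd : l d = j := by
            by_contra hd
            rw [e3 d (by omega) hd] at h6
            have := gg d (by omega) h5
            omega
          have hjd : j ≤ d := by
            have := hl.le d (by omega) h5
            omega
          have hdj : d = j := by
            by_contra hne
            exact h8 j (by omega) (by omega) (e2 j hlj)
          have q : ∀ z, a < z → z < j → l z = z := by
            intro z hz1 hz2
            rw [← hl.pos_iff (by omega) (by omega), hlk z (by omega) (by omega), k'n z (by omega)]
            exact hkpos z hz1 hz2
          have := q b (by omega) (by omega)
          have := q c (by omega) (by omega)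
          omega
        · rw [einj a d (by omega) (by omega) (by omega) (by omega)] at h6
          refine hl.nn a b c d (by omega) h2 h3 h4 h5 h6 h7 ?_
          intro y hy1 hy2 hy3
          exact h8 y hy1 hy2 ((einj y a (by omega) (by omega) (by omega) (by omega)).2 hy3)
      · intro x h1 h2
        rw [lcnt_left m n hmn, e1]
        by_cases hx : x = m
        · subst hx
          rw [if_pos rfl, lcnt_congr (x+1) n l' l x j, hlk j (by omega) hjn, k'j]
          · omega
          · intro y hy1 hy2
            have := gg y (by omega) hy2
            by_cases h3 : l y = j
            · simp [e2 y h3, h3]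
            · rw [e3 y (by omega) h3]; omega
        · rw [if_neg (Ne.symm hx), zero_add]
          by_cases hxj : x = j
          · subst hxj
            rw [hkj]
            unfold lcnt
            rw [Finset.card_eq_zero, Finset.filter_eq_empty_iff]
            intro y hy
            simp only [Finset.mem_Icc] at hy
            by_cases h3 : l y = x
            · rw [e2 y h3]; omega
            · rw [e3 y (by omega) h3]; exact h3
          · rw [lcnt_congr (m+1) n l' l x x, hlk x (by omega) h2, k'n x hxj]
            intro y hy1 hy2
            have := gg y (by omega) hy2
            by_cases h3 : l y = j
            · rw [e2 y h3, h3]; omega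
            · rw [e3 y (by omega) h3]

noncomputable def labOf {n : ℕ} (π : SetPartitionOn n) (x : ℕ) : ℕ :=
  sInf {y | y ∈ π.part x}

lemma labOf_mem {n : ℕ} (π : SetPartitionOn n) {x : ℕ} (h1 : 1 ≤ x) (h2 : x ≤ n) :
    labOf π x ∈ π.part x :=
  Nat.sInf_mem (s := {y | y ∈ π.part x})
    ⟨x, π.mem_part_self.2 (Finset.mem_Icc.2 ⟨h1, h2⟩)⟩

lemma labOf_le {n : ℕ} (π : SetPartitionOn n) {x y : ℕ} (h : y ∈ π.part x) :
    labOf π x ≤ y := Nat.sInf_le (s := {y | y ∈ π.part x}) h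

lemma labOf_eq_iff {n : ℕ} (π : SetPartitionOn n) {x y : ℕ} (h1 : 1 ≤ x) (h2 : x ≤ n)
    (h3 : 1 ≤ y) (h4 : y ≤ n) : labOf π x = labOf π y ↔ y ∈ π.part x := by
  have hx : x ∈ Finset.Icc 1 n := Finset.mem_Icc.2 ⟨h1, h2⟩
  have hy : y ∈ Finset.Icc 1 n := Finset.mem_Icc.2 ⟨h3, h4⟩
  rw [π.mem_part_iff_part_eq_part hy hx]
  constructor
  · intro h
    have a := labOf_mem π h1 h2
    have b := labOf_mem π h3 h4
    rw [h] at a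
    exact π.eq_of_mem_parts (π.part_mem.2 hy) (π.part_mem.2 hx) b a
  · intro h
    unfold labOf
    rw [h]

lemma mem_bounds {n : ℕ} (π : SetPartitionOn n) {B : Finset ℕ} (hB : B ∈ π.parts) {x : ℕ}
    (hx : x ∈ B) : 1 ≤ x ∧ x ≤ n := Finset.mem_Icc.1 (π.le hB hx)

lemma labOf_eq_of_mem {n : ℕ} (π : SetPartitionOn n) {B : Finset ℕ} (hB : B ∈ π.parts) {x y : ℕ}
    (hx : x ∈ B) (hy : y ∈ B) : labOf π x = labOf π y := by
  have a := mem_bounds π hB hx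
  have b := mem_bounds π hB hy
  rw [labOf_eq_iff π a.1 a.2 b.1 b.2, π.part_eq_of_mem hB hx]
  exact hy

lemma labOf_mem_of_eq {n : ℕ} (π : SetPartitionOn n) {B : Finset ℕ} (hB : B ∈ π.parts) {x y : ℕ}
    (hx : x ∈ B) (h3 : 1 ≤ y) (h4 : y ≤ n) (h : labOf π x = labOf π y) : y ∈ B := by
  have a := mem_bounds π hB hx
  rw [labOf_eq_iff π a.1 a.2 h3 h4, π.part_eq_of_mem hB hx] at h
  exact h

lemma labOn_of_nonnesting {n : ℕ} (π : SetPartitionOn n) (h : Nonnesting π) :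
    LabOn 1 n (labOf π) := by
  have hself : ∀ x, 1 ≤ x → x ≤ n → x ∈ π.part x := fun x h1 h2 =>
    π.mem_part_self.2 (Finset.mem_Icc.2 ⟨h1, h2⟩)
  have hpm : ∀ x, 1 ≤ x → x ≤ n → π.part x ∈ π.parts := fun x h1 h2 =>
    π.part_mem.2 (Finset.mem_Icc.2 ⟨h1, h2⟩)
  refine ⟨?_, ?_, ?_, ?_⟩
  · intro x h1 h2
    exact (mem_bounds π (hpm x h1 h2) (labOf_mem π h1 h2)).1
  · intro x h1 h2
    exact labOf_le π (hself x h1 h2)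
  · intro x h1 h2
    exact labOf_eq_of_mem π (hpm x h1 h2) (labOf_mem π h1 h2) (hself x h1 h2)
  · intro a b c d h1 h2 h3 h4 h5 h6 h7 h8
    have hex : ∃ c', b < c' ∧ c' ≤ n ∧ labOf π b = labOf π c' := ⟨c, h3, by omega, h7⟩
    classical
    have hs := Nat.find_spec hex
    have hle : Nat.find hex ≤ c := Nat.find_min' hex ⟨h3, by omega, h7⟩
    have hmin := fun z (hz : z < Nat.find hex) => Nat.find_min hex hz
    generalize Nat.find hex = c' at hs hmin hle
    have ha := hpm a h1 (by omega)
    have hb := hpm b (by omega) (by omega)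
    have hsa := hself a h1 (by omega)
    have hsb := hself b (by omega) (by omega)
    refine h ⟨a, b, c', d, h2, hs.1, by omega, ⟨by omega, π.part a, ha, hsa, ?_, ?_⟩,
      ⟨hs.1, π.part b, hb, hsb, ?_, ?_⟩⟩
    · exact labOf_mem_of_eq π ha hsa (by omega) h5 h6
    · rintro y hy ⟨hy1, hy2⟩
      exact h8 y hy1 hy2 (labOf_eq_of_mem π ha hy hsa)
    · exact labOf_mem_of_eq π hb hsb (by omega) hs.2.1 hs.2.2
    · rintro y hy ⟨hy1, hy2⟩
      exact hmin y hy2 ⟨hy1, (mem_bounds π hb hy).2, labOf_eq_of_mem π hb hsb hy⟩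

lemma nonnesting_of_labOn {n : ℕ} (π : SetPartitionOn n) (h : LabOn 1 n (labOf π)) :
    Nonnesting π := by
  rintro ⟨a, b, c, d, h1, h2, h3, ⟨_, B, hB, haB, hdB, hB2⟩, ⟨_, C, hC, hbC, hcC, _⟩⟩
  have ha := mem_bounds π hB haB
  have hd := mem_bounds π hB hdB
  refine h.nn a b c d ha.1 h1 h2 h3 hd.2 (labOf_eq_of_mem π hB haB hdB)
    (labOf_eq_of_mem π hC hbC hcC) ?_
  intro y hy1 hy2 hy3
  exact hB2 y (labOf_mem_of_eq π hB haB (by omega) (by omega) hy3.symm) ⟨hy1, hy2⟩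

lemma sum_lcnt (n i : ℕ) (l : ℕ → ℕ) : ∑ j ∈ Finset.Icc 1 i, lcnt 1 n l j =
    ((Finset.Icc 1 n).filter (fun y => l y ∈ Finset.Icc 1 i)).card := by
  unfold lcnt
  exact Finset.sum_card_fiberwise_eq_card_filter _ _ _

lemma connected_iff {n : ℕ} (π : SetPartitionOn n) (h : LabOn 1 n (labOf π)) :
    Connected π ↔ ∀ i, 1 ≤ i → i ≤ n - 1 →
      i < ∑ j ∈ Finset.Icc 1 i, lcnt 1 n (labOf π) j := by
  unfold Connected
  refine forall_congr' fun i => ?_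
  unfold IsCut
  rw [not_and, not_and]
  refine forall_congr' fun h1 => forall_congr' fun h2 => ?_
  rw [sum_lcnt, ← not_le, not_iff_not]
  have hsub : Finset.Icc 1 i ⊆
      (Finset.Icc 1 n).filter (fun y => labOf π y ∈ Finset.Icc 1 i) := by
    intro y hy
    simp only [Finset.mem_filter, Finset.mem_Icc] at hy ⊢
    have := h.ge y hy.1 (by omega)
    have := h.le y hy.1 (by omega)
    omega
  constructor
  · intro hc
    have : (Finset.Icc 1 n).filter (fun y => labOf π y ∈ Finset.Icc 1 i) ⊆ Finset.Icc 1 i := by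
      intro y hy
      simp only [Finset.mem_filter, Finset.mem_Icc] at hy ⊢
      have hp : π.part y ∈ π.parts := π.part_mem.2 (Finset.mem_Icc.2 hy.1)
      have hself : y ∈ π.part y := π.mem_part_self.2 (Finset.mem_Icc.2 hy.1)
      rcases hc _ hp with h3 | h3
      · exact ⟨hy.1.1, h3 y hself⟩
      · have := h3 _ (labOf_mem π hy.1.1 hy.1.2)
        omega
    simpa using Finset.card_le_card this
  · intro hc B hB
    have heq := Finset.eq_of_subset_of_card_le hsub (by simpa using hc)
    by_cases hx : ∃ x ∈ B, x ≤ i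
    · left
      obtain ⟨x, hx, hxi⟩ := hx
      intro y hy
      have hy' := mem_bounds π hB hy
      have hx' := mem_bounds π hB hx
      have : y ∈ Finset.Icc 1 i := by
        rw [heq]
        simp only [Finset.mem_filter, Finset.mem_Icc]
        rw [labOf_eq_of_mem π hB hy hx]
        have := h.ge x hx'.1 (by omega)
        have := h.le x hx'.1 (by omega)
        omega
      simp at this
      exact this.2
    · right
      push Not at hx
      exact hx

lemma type_card {n : ℕ} (π : SetPartitionOn n) (h : LabOn 1 n (labOf π)) (i : ℕ) :
    (π.parts.filter (fun B => B.card = i + 1)).card =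
      ((Finset.Icc 1 n).filter (fun x => lcnt 1 n (labOf π) x = i + 1)).card := by
  have hfib : ∀ x, 1 ≤ x → x ≤ n → labOf π x = x →
      lcnt 1 n (labOf π) x = (π.part x).card := by
    intro x h1 h2 hx
    unfold lcnt
    congr 1
    ext y
    simp only [Finset.mem_filter, Finset.mem_Icc]
    constructor
    · rintro ⟨hy, hyx⟩
      rw [← labOf_eq_iff π h1 h2 hy.1 hy.2, hx, hyx]
    · intro hy
      have hy' := Finset.mem_Icc.1 (π.part_subset x hy)
      refine ⟨hy', ?_⟩
      rw [← labOf_eq_iff π h1 h2 hy'.1 hy'.2, hx] at hy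
      exact hy.symm
  symm
  refine Finset.card_bij (fun x _ => π.part x) ?_ ?_ ?_
  · intro x hx
    simp only [Finset.mem_filter, Finset.mem_Icc] at hx ⊢
    have hl := (h.pos_iff hx.1.1 hx.1.2).1 (by omega)
    rw [← hfib x hx.1.1 hx.1.2 hl]
    exact ⟨π.part_mem.2 (Finset.mem_Icc.2 hx.1), hx.2⟩
  · intro x hx y hy hxy
    simp only [Finset.mem_filter, Finset.mem_Icc] at hx hy
    have hl := (h.pos_iff hx.1.1 hx.1.2).1 (by omega)
    have hl2 := (h.pos_iff hy.1.1 hy.1.2).1 (by omega)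
    rw [← hl, ← hl2]
    unfold labOf
    rw [hxy]
  · intro B hB
    simp only [Finset.mem_filter] at hB
    obtain ⟨y, hy⟩ := π.nonempty_of_mem_parts hB.1
    have hy' := mem_bounds π hB.1 hy
    have hp := π.part_eq_of_mem hB.1 hy
    have hm := labOf_mem π hy'.1 hy'.2
    rw [hp] at hm
    have hm' := mem_bounds π hB.1 hm
    have hp2 := π.part_eq_of_mem hB.1 hm
    refine ⟨labOf π y, ?_, hp2⟩
    simp only [Finset.mem_filter, Finset.mem_Icc]
    rw [hfib _ hm'.1 hm'.2 (h.idem y hy'.1 hy'.2), hp2]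
    exact ⟨hm', hB.2⟩

lemma eq_of_labOf {n : ℕ} (π π' : SetPartitionOn n)
    (h : ∀ x, 1 ≤ x → x ≤ n → labOf π x = labOf π' x) : π = π' := by
  have key : ∀ π π' : SetPartitionOn n, (∀ x, 1 ≤ x → x ≤ n → labOf π x = labOf π' x) →
      ∀ B ∈ π.parts, B ∈ π'.parts := by
    intro π π' h B hB
    obtain ⟨x, hx⟩ := π.nonempty_of_mem_parts hB
    have hx' := mem_bounds π hB hx
    have hp' : π'.part x ∈ π'.parts := π'.part_mem.2 (Finset.mem_Icc.2 hx')
    have : B = π'.part x := by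
      rw [← π.part_eq_of_mem hB hx]
      ext y
      constructor
      · intro hy
        have hy' := Finset.mem_Icc.1 (π.part_subset x hy)
        rw [← labOf_eq_iff _ hx'.1 hx'.2 hy'.1 hy'.2] at hy ⊢
        rw [← h _ hx'.1 hx'.2, ← h _ hy'.1 hy'.2, hy]
      · intro hy
        have hy' := Finset.mem_Icc.1 (π'.part_subset x hy)
        rw [← labOf_eq_iff _ hx'.1 hx'.2 hy'.1 hy'.2] at hy ⊢
        rw [h _ hx'.1 hx'.2, h _ hy'.1 hy'.2, hy]
    rw [this]; exact hp'
  apply Finpartition.ext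
  ext B
  exact ⟨key π π' h B, key π' π (fun x a b => (h x a b).symm) B⟩

lemma exists_labOf {n : ℕ} (l : ℕ → ℕ) (h : LabOn 1 n l) :
    ∃ π : SetPartitionOn n, ∀ x, 1 ≤ x → x ≤ n → labOf π x = l x := by
  classical
  refine ⟨Finpartition.ofSetSetoid (Setoid.ker l) (Finset.Icc 1 n), ?_⟩
  intro x h1 h2
  have hmem : ∀ y, y ∈ (Finpartition.ofSetSetoid (Setoid.ker l) (Finset.Icc 1 n)).part x ↔
      (1 ≤ y ∧ y ≤ n) ∧ l x = l y := by
    intro y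
    rw [Finpartition.mem_part_ofSetSetoid_iff_rel]
    simp [h1, h2, Setoid.ker_def]
  apply le_antisymm
  · apply labOf_le
    rw [hmem]
    have := h.ge x h1 h2
    have := h.le x h1 h2
    exact ⟨by omega, (h.idem x h1 h2).symm⟩
  · have h3 := labOf_mem (Finpartition.ofSetSetoid (Setoid.ker l) (Finset.Icc 1 n)) h1 h2
    rw [hmem] at h3
    rw [h3.2]
    exact h.le _ h3.1.1 h3.1.2

lemma labOn_congr {m n : ℕ} {l l' : ℕ → ℕ} (h : LabOn m n l)
    (e : ∀ x, m ≤ x → x ≤ n → l' x = l x) : LabOn m n l' := by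
  refine ⟨?_, ?_, ?_, ?_⟩
  · intro x h1 h2
    rw [e x h1 h2]; exact h.ge x h1 h2
  · intro x h1 h2
    rw [e x h1 h2]; exact h.le x h1 h2
  · intro x h1 h2
    have := h.ge x h1 h2
    have := h.le x h1 h2
    rw [e x h1 h2, e _ (by omega) (by omega)]
    exact h.idem x h1 h2
  · intro a b c d h1 h2 h3 h4 h5 h6 h7 h8
    rw [e a (by omega) (by omega)] at h6 h8
    rw [e d (by omega) (by omega)] at h6
    rw [e b (by omega) (by omega), e c (by omega) (by omega)] at h7
    refine h.nn a b c d h1 h2 h3 h4 h5 h6 h7 ?_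
    intro y h9 h10
    rw [← e y (by omega) (by omega)]
    exact h8 y h9 h10

section bridge
variable {N : ℕ} [NeZero N] {k : ℕ → ℕ} {g : ZMod N → Fin (N + 2)}

lemma bridge_sum (hgk : ∀ j, j < N → (g (j : ZMod N)).1 = k (j + 1)) (i : ℕ) (hi : i ≤ N) :
    ∑ j ∈ Finset.range i, (g (j : ZMod N)).1 = ∑ x ∈ Finset.Icc 1 i, k x := by
  rw [Finset.sum_congr rfl (g := fun j => k (j + 1))
    (fun j hj => hgk j (by simp at hj; omega))]
  rw [Finset.range_eq_Ico, Finset.sum_Ico_add' k 0 i 1]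
  rfl

lemma bridge_fib (hgk : ∀ j, j < N → (g (j : ZMod N)).1 = k (j + 1)) (hk0 : k (N + 1) = 0)
    (i : Fin (N + 1)) :
    ((Finset.Icc 1 (N + 1)).filter (fun x => k x = i.1 + 1)).card =
      Fintype.card {x // g x = i.succ} := by
  rw [Fintype.card_subtype]
  symm
  refine Finset.card_bij (fun x _ => x.val + 1) ?_ ?_ ?_
  · intro x hx
    simp only [Finset.mem_filter, Finset.mem_Icc, Finset.mem_univ, true_and] at hx ⊢
    have h1 := ZMod.val_lt x
    have h2 := hgk _ h1
    rw [ZMod.natCast_zmod_val, hx] at h2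
    simp at h2
    omega
  · intro x _ y _ h
    exact ZMod.val_injective N (by simpa using h)
  · intro y hy
    simp only [Finset.mem_filter, Finset.mem_Icc] at hy
    have hyN : y ≠ N + 1 := by rintro rfl; omega
    have h1 := hgk (y - 1) (by omega)
    refine ⟨((y - 1 : ℕ) : ZMod N), ?_, ?_⟩
    · simp only [Finset.mem_filter, Finset.mem_univ, true_and]
      apply Fin.ext
      rw [h1, show y - 1 + 1 = y by omega, hy.2]
      simp
    · rw [ZMod.val_cast_of_lt (by omega)]
      omega

lemma bridge_zero : Fintype.card {x // g x = 0} +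
    ∑ i : Fin (N + 1), Fintype.card {x // g x = i.succ} = N := by
  rw [← Fin.sum_univ_succ (fun i => Fintype.card {x // g x = i})]
  simp only [Fintype.card_subtype]
  rw [← Finset.card_eq_sum_card_fiberwise (f := g) (s := Finset.univ) (t := Finset.univ)
    (by intro; simp)]
  simp [ZMod.card]

end bridge

lemma main_aux (N : ℕ) [NeZero N] (r : Fin (N + 1) → ℕ)
    (hrv : ∑ i, (i.1 + 1) * r i = N + 1) (hr : ∑ i, r i < N + 1) :
    Nat.card {π : SetPartitionOn (N + 1) // Nonnesting π ∧ HasType π r ∧ Connected π} =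
    Nat.card {g : ZMod N → Fin (N + 2) // GoodZ N (fun x => (g x).1) ∧
      ∀ i, Fintype.card {x // g x = i} =
        (Fin.cons (N + 1 - (∑ i, r i) - 1) r : Fin (N + 2) → ℕ) i} := by
  have hNpos : 0 < N := Nat.pos_of_ne_zero (NeZero.ne N)
  set K : SetPartitionOn (N + 1) → ℕ → ℕ := fun π => lcnt 1 (N + 1) (labOf π) with hK
  have hKle : ∀ π x, K π x < N + 2 := by
    intro π x
    have : K π x ≤ (Finset.Icc 1 (N + 1)).card := Finset.card_filter_le _ _
    simp at this
    omega
  set Φ : SetPartitionOn (N + 1) → ZMod N → Fin (N + 2) :=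
    fun π x => ⟨K π (x.val + 1), hKle _ _⟩ with hΦ
  have hΦK : ∀ π j, j < N → (Φ π (j : ZMod N)).1 = K π (j + 1) := by
    intro π j hj
    simp only [hΦ]
    rw [ZMod.val_cast_of_lt hj]
  have hK0 : ∀ π, Nonnesting π → Connected π → K π (N + 1) = 0 := by
    intro π h1 h2
    have hl := labOn_of_nonnesting π h1
    have h3 := (connected_iff π hl).1 h2 N hNpos (by simp)
    have h4 := sum_lcnt (N + 1) (N + 1) (labOf π)
    have h5 := Finset.card_filter_le (Finset.Icc 1 (N + 1))
      (fun y => labOf π y ∈ Finset.Icc 1 (N + 1))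
    rw [← h4, Finset.sum_Icc_succ_top (by omega)] at h5
    simp at h5
    simp only [hK]
    omega
  refine Nat.card_congr (Equiv.ofBijective (fun p => ⟨Φ p.1, ?_, ?_⟩) ⟨?_, ?_⟩)
  · obtain ⟨π, h1, h2, h3⟩ := p
    have hl := labOn_of_nonnesting π h1
    intro i hi hiN
    rw [bridge_sum (hΦK π) i hiN]
    exact (connected_iff π hl).1 h3 i hi (by simpa using hiN)
  · obtain ⟨π, h1, h2, h3⟩ := p
    have hl := labOn_of_nonnesting π h1
    have hf : ∀ i : Fin (N + 1), Fintype.card {x // Φ π x = i.succ} = r i := by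
      intro i
      rw [← bridge_fib (hΦK π) (hK0 π h1 h3) i, ← h2 i, type_card π hl]
    intro i
    refine Fin.cases ?_ (fun i => ?_) i
    · have := bridge_zero (g := Φ π)
      simp only [hf] at this
      simp only [Fin.cons_zero]
      omega
    · simp only [Fin.cons_succ]
      exact hf i
  · rintro ⟨π, h1, h2, h3⟩ ⟨π', h1', h2', h3'⟩ heq
    have he : Φ π = Φ π' := congrArg Subtype.val heq
    apply Subtype.ext
    apply eq_of_labOf
    apply lab_unique (labOn_of_nonnesting π h1) (labOn_of_nonnesting π' h1')
    intro x hx hxn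
    by_cases hxN : x = N + 1
    · rw [hxN]
      exact (hK0 π h1 h3).trans (hK0 π' h1' h3').symm
    · have a := hΦK π (x - 1) (by omega)
      have b := hΦK π' (x - 1) (by omega)
      rw [he, b, show x - 1 + 1 = x by omega] at a
      exact a.symm
  · rintro ⟨g, hg1, hg2⟩
    set k : ℕ → ℕ := fun x => if x = N + 1 then 0 else (g ((x - 1 : ℕ) : ZMod N)).1 with hk
    have hgk : ∀ j, j < N → (g (j : ZMod N)).1 = k (j + 1) := by
      intro j hj
      simp only [hk]
      rw [if_neg (by omega)]
      simp
    have hk0 : k (N + 1) = 0 := by simp [hk]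
    have hgs : ∑ x, (g x).1 = N + 1 := by
      rw [← Finset.sum_fiberwise (s := Finset.univ) (g := g), ← hrv, Fin.sum_univ_succ]
      have : ∀ i, ∑ x with g x = i, (g x).1 = i.1 * Fintype.card {x // g x = i} := by
        intro i
        rw [Finset.sum_congr rfl (g := fun _ => i.1) (by simp +contextual), Finset.sum_const,
          Fintype.card_subtype]
        simp [mul_comm]
      simp only [this, hg2]
      simp
    have hsN : ∑ x ∈ Finset.Icc 1 N, k x = N + 1 := by
      rw [← bridge_sum hgk N le_rfl, ← hgs]
      exact raney_sum_univ N (fun x => (g x).1)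
    have hsum : ∀ i, 1 ≤ i → i ≤ N → i < ∑ x ∈ Finset.Icc 1 i, k x := by
      intro i h1 h2
      rw [← bridge_sum hgk i h2]
      exact hg1 i h1 h2
    have hsN1 : ∑ x ∈ Finset.Icc 1 (N + 1), k x = N + 1 := by
      rw [Finset.sum_Icc_succ_top (by omega), hsN, hk0]
    obtain ⟨l, hl, hlk⟩ := lab_exists (N + 1) (N + 1) 1 k (by omega) (by
      intro i h1 h2
      by_cases hi : i = N + 1
      · rw [hi, hsN1]; omega
      · have := hsum i h1 (by omega)
        omega) (by rw [hsN1]; omega)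
    obtain ⟨π, hπ⟩ := exists_labOf l hl
    have hlπ := labOn_congr hl hπ
    have hKk : ∀ x, 1 ≤ x → x ≤ N + 1 → K π x = k x := by
      intro x h1 h2
      rw [← hlk x h1 h2]
      exact lcnt_congr _ _ _ _ _ _ (fun y h3 h4 => by rw [hπ y h3 h4])
    refine ⟨⟨π, nonnesting_of_labOn π hlπ, ?_, ?_⟩, ?_⟩
    · intro i
      rw [type_card π hlπ]
      have := hg2 i.succ
      rw [← bridge_fib hgk hk0 i, Fin.cons_succ] at this
      rw [← this]
      congr 1
      apply Finset.filter_congr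
      intro x hx
      simp only [Finset.mem_Icc] at hx
      rw [← hKk x hx.1 hx.2]
    · rw [connected_iff π hlπ]
      intro i h1 h2
      have h2' : i ≤ N := by simpa using h2
      refine lt_of_lt_of_eq (hsum i h1 h2') (Finset.sum_congr rfl fun x hx => ?_)
      simp only [Finset.mem_Icc] at hx
      exact (hKk x hx.1 (by omega)).symm
    · apply Subtype.ext
      funext x
      apply Fin.ext
      have hx := ZMod.val_lt x
      have a := hΦK π x.val hx
      have b := hgk x.val hx
      rw [hKk _ (by omega) (by omega), ← b, ZMod.natCast_zmod_val] at a
      exact a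

/-- The number `N` of connected nonnesting partitions of `[n]` of type `r` satisfies
`N · (n - |r| - 1)! · r! = (n - 2)!`. -/
theorem card_connected_nonnesting_of_type (n : ℕ) (hn : 1 < n) (r : Fin n → ℕ)
    (hrv : ∑ i, (i.1 + 1) * r i = n) (hr : ∑ i, r i < n) :
    Nat.card {π : SetPartitionOn n // Nonnesting π ∧ HasType π r ∧ Connected π} *
      (n - (∑ i, r i) - 1).factorial * ∏ i, (r i).factorial = (n - 2).factorial := by
  obtain ⟨N, rfl⟩ : ∃ N, n = N + 1 := ⟨n - 1, by omega⟩
  haveI : NeZero N := ⟨by omega⟩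
  rw [main_aux N r hrv hr]
  have h := card_good_fun N (N + 2) (Fin.cons (N + 1 - (∑ i, r i) - 1) r) (by
    rw [Fin.sum_cons]; omega) (by
    rw [Fin.sum_univ_succ]
    simpa using hrv)
  rw [Fin.prod_univ_succ] at h
  simp only [Fin.cons_zero, Fin.cons_succ] at h
  rw [mul_assoc, h]
  rfl
end
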